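/- Let d ≥ 3 be an integer. There exist constants C > 0 and C' > 0 such that for every μ ≥ 2, | 𝒩_B(μ) − 𝒲(μ) | ≤ 𝒲(μ + C μ^{−3/7}) − 𝒲(μ − C μ^{−3/7}) + C' μ^{d−2+4/7}, where 𝒩_B(μ) = Σ_{n=0}^∞ m_n^d · #{x ∈ (0, μ] : J_{n+d/2−1}(x) = 0} (a finite sum). -/

import Mathlib

open Real MeasureTheory Set

/-- The Bessel function of the first kind of order `ν ≥ 0`, for `x > 0`, via the
integral representation. -/
noncomputable def besselJ (ν x : ℝ) : ℝ :=
  (1 / π) * (∫ θ in (0:ℝ)..π, Real.cos (x * Real.sin θ - ν * θ)) -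
    (Real.sin (ν * π) / π) * ∫ t in Set.Ioi (0:ℝ), Real.exp (-x * Real.sinh t - ν * t)

/-- The function `g(t) = (√(1-t²) - t arccos t)/π`. -/
noncomputable def gfun (t : ℝ) : ℝ := (Real.sqrt (1 - t ^ 2) - t * Real.arccos t) / π

/-- The lattice count `𝒲_l(μ) = #{(n,k) ∈ ℤ×ℤ : n ≥ l, k ≥ 1, n + d/2 - 1 ≤ μ,
k - 1/4 ≤ μ g((n + d/2 - 1)/μ)}`. -/
noncomputable def latticeW (d l : ℕ) (μ : ℝ) : ℕ :=
  {p : ℤ × ℤ | (l : ℤ) ≤ p.1 ∧ 1 ≤ p.2 ∧ (p.1 : ℝ) + (d : ℝ) / 2 - 1 ≤ μ ∧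
    (p.2 : ℝ) - 1 / 4 ≤ μ * gfun (((p.1 : ℝ) + (d : ℝ) / 2 - 1) / μ)}.ncard

/-- The multiplicity `m_n^d = C(n+d-1, d-1) - C(n+d-3, d-1)`. -/
def multB (d n : ℕ) : ℕ := Nat.choose (n + d - 1) (d - 1) - Nat.choose (n + d - 3) (d - 1)

/-- The difference `m_l^d - m_{l-1}^d` (with `m_{-1}^d = 0`). -/
def multBdiff (d l : ℕ) : ℤ := (multB d l : ℤ) - if l = 0 then 0 else (multB d (l - 1) : ℤ)

/-- The number of zeros of `J_ν` in `(0, μ]`. -/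
noncomputable def zcount (ν μ : ℝ) : ℕ := {x : ℝ | 0 < x ∧ x ≤ μ ∧ besselJ ν x = 0}.ncard

/-- The weighted lattice count `𝒲(μ) = Σ_l (m_l^d - m_{l-1}^d) 𝒲_l(μ)`. -/
noncomputable def latticeWtot (d : ℕ) (μ : ℝ) : ℝ :=
  ∑' l : ℕ, (multBdiff d l : ℝ) * (latticeW d l μ : ℝ)

/-!
In the phase `μ g(ν/μ)`, the function `√P J_ν` with `P = √(x² - ν²)` solves a perturbed harmonic
oscillator equation whose perturbation is integrable at infinity (Liouville–Green). Stationary phase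
in the integral representation fixes the solution there, and integrating back from infinity locates
the zeros of `J_ν`: up to an additive integer, `#{x ≤ μ : J_ν(x) = 0}` is `⌊μ g(ν/μ) + 1/4⌋` except
when `μ g(ν/μ) + 1/4` lies within `O(1 / (μ g(ν/μ)))` of an integer. Interlacing of the zeros of
`J_ν` and `J_{ν+1}` makes the additive integer depend only on `ν` modulo `1`, and Sturm comparison
of `√x J_ν` with the sine shows that it vanishes for `ν = 0` and `ν = 1/2`.

Write `μ = p⁷`. If the phase of the order `n + d/2 - 1` is at least `p⁴`, a shift of `μ` by `O(p⁻³)`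
moves it by more than the error, so zeros and lattice points of that order differ by at most
`W(μ + O(p⁻³)) - W(μ - O(p⁻³))`, where `W` counts the lattice points of the column. At most `p⁴`
further orders lie within `p⁴` of `μ`. The remaining orders whose counts differ have a phase close
to one of `O(p⁴)` shifted integers, and since the phase decreases in the order at a rate comparable
to the admissible distance, each integer accounts for boundedly many of them. These `O(p⁴)`
exceptional orders have multiplicity `O(μ^(d-2))` and counts differing by `O(1)`.
-/

open Filter Topology

/-! ### The Bessel equation from the integral representation -/

/-- The oscillatory part of the integral representation of `J_ν`. -/
noncomputable def besselCosIntegral (ν x : ℝ) : ℝ := ∫ θ in (0 : ℝ)..π, cos (x * sin θ - ν * θ)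

/-- The exponentially damped part of the integral representation of `J_ν`. -/
noncomputable def besselExpIntegral (ν x : ℝ) : ℝ := ∫ t in Ioi (0 : ℝ), exp (-x * sinh t - ν * t)

lemma besselJ_eq (ν x : ℝ) :
    besselJ ν x =
      1 / π * besselCosIntegral ν x - sin (ν * π) / π * besselExpIntegral ν x := rfl

section IntegralRecurrences

variable (ν x : ℝ)

lemma cos_sub_sub_one_mul (θ : ℝ) :
    cos (x * sin θ - (ν - 1) * θ) =
      cos (x * sin θ - ν * θ) * cos θ - sin (x * sin θ - ν * θ) * sin θ := by
  rw [← cos_add]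
  ring_nf

lemma cos_sub_add_one_mul (θ : ℝ) :
    cos (x * sin θ - (ν + 1) * θ) =
      cos (x * sin θ - ν * θ) * cos θ + sin (x * sin θ - ν * θ) * sin θ := by
  rw [← cos_sub]
  ring_nf

lemma hasDerivAt_besselCosIntegral :
    HasDerivAt (besselCosIntegral ν)
      ((besselCosIntegral (ν - 1) x - besselCosIntegral (ν + 1) x) / 2) x := by
  have hderiv := (intervalIntegral.hasDerivAt_integral_of_dominated_loc_of_deriv_le (μ := volume)
    (a := 0) (b := π) (F := fun x θ => cos (x * sin θ - ν * θ))
    (F' := fun x θ => -sin θ * sin (x * sin θ - ν * θ)) (bound := fun _ => 1) (x₀ := x)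
    univ_mem (.of_forall fun y => (by fun_prop : Continuous _).aestronglyMeasurable)
    ((by fun_prop : Continuous _).intervalIntegrable _ _)
    (by fun_prop : Continuous _).aestronglyMeasurable
    (.of_forall fun θ _ y _ => ?_) intervalIntegrable_const
    (.of_forall fun θ _ y _ => ?_)).2
  · refine hderiv.congr_deriv ?_
    unfold besselCosIntegral
    rw [← intervalIntegral.integral_sub (by apply Continuous.intervalIntegrable; fun_prop)
      (by apply Continuous.intervalIntegrable; fun_prop), ← intervalIntegral.integral_div]
    refine intervalIntegral.integral_congr fun θ _ => ?_
    simp only [cos_sub_sub_one_mul, cos_sub_add_one_mul]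
    ring
  · rw [norm_mul, norm_neg]
    exact mul_le_one₀ (abs_sin_le_one _) (norm_nonneg _) (abs_sin_le_one _)
  · exact (((hasDerivAt_id y).mul_const (sin θ)).sub_const (ν * θ)).cos.congr_deriv
      (by simp; ring)

lemma besselCosIntegral_recurrence :
    x * (besselCosIntegral (ν - 1) x + besselCosIntegral (ν + 1) x) =
      2 * (ν * besselCosIntegral ν x - sin (ν * π)) := by
  have hderiv (θ : ℝ) : HasDerivAt (fun θ => sin (x * sin θ - ν * θ))
      (cos (x * sin θ - ν * θ) * (x * cos θ - ν)) θ :=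
    ((((hasDerivAt_sin θ).const_mul x).sub ((hasDerivAt_id θ).const_mul ν)).congr_deriv
      (by simp)).sin
  have hftc := intervalIntegral.integral_eq_sub_of_hasDerivAt (a := 0) (b := π)
    (fun θ _ => hderiv θ) (by apply Continuous.intervalIntegrable; fun_prop)
  have hsplit (θ : ℝ) : cos (x * sin θ - ν * θ) * (x * cos θ - ν) =
      x / 2 * (cos (x * sin θ - (ν - 1) * θ) + cos (x * sin θ - (ν + 1) * θ)) -
        ν * cos (x * sin θ - ν * θ) := by
    rw [cos_sub_sub_one_mul, cos_sub_add_one_mul]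
    ring
  simp_rw [hsplit] at hftc
  rw [intervalIntegral.integral_sub, intervalIntegral.integral_const_mul,
    intervalIntegral.integral_const_mul, intervalIntegral.integral_add] at hftc
  · simp only [sin_pi, mul_zero, sin_zero, sub_zero, zero_sub, sin_neg] at hftc
    unfold besselCosIntegral
    linarith
  all_goals
    apply Continuous.intervalIntegrable
    fun_prop

lemma abs_besselCosIntegral_le_pi : |besselCosIntegral ν x| ≤ π := by
  have h := intervalIntegral.norm_integral_le_of_norm_le_const (a := 0) (b := π) (C := 1)
    (f := fun θ => cos (x * sin θ - ν * θ)) fun θ _ => abs_cos_le_one _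
  simpa [besselCosIntegral, abs_of_pos pi_pos] using h

lemma exp_sub_sub_one_mul (t : ℝ) :
    exp (-x * sinh t - (ν - 1) * t) = exp (-x * sinh t - ν * t) * exp t := by
  rw [← exp_add]
  ring_nf

lemma exp_sub_add_one_mul (t : ℝ) :
    exp (-x * sinh t - (ν + 1) * t) = exp (-x * sinh t - ν * t) * exp (-t) := by
  rw [← exp_add]
  ring_nf

lemma sq_div_four_le_sinh {t : ℝ} (ht : 0 ≤ t) : t ^ 2 / 4 ≤ sinh t := by
  have hneg : exp (-t) ≤ 1 := exp_le_one_iff.mpr (by linarith)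
  rw [sinh_eq]
  linarith [quadratic_le_exp_of_nonneg ht]

variable {x}

lemma exp_neg_mul_sinh_sub_le (hx : 0 < x) {t : ℝ} (ht : 0 ≤ t) :
    exp (-x * sinh t - ν * t) ≤ exp ((|ν| + 1) ^ 2 / x) * exp (-t) := by
  rw [← exp_add, exp_le_exp]
  have hsinh : x * (t ^ 2 / 4) ≤ x * sinh t := by gcongr; exact sq_div_four_le_sinh ht
  have habs : -ν * t ≤ |ν| * t := by gcongr; exact neg_le_abs ν
  have hsquare : (|ν| + 1) ^ 2 / x + x * (t ^ 2 / 4) - (|ν| + 1) * t =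
      ((|ν| + 1) - x * t / 2) ^ 2 / x := by
    field_simp
    ring
  have hnonneg : 0 ≤ ((|ν| + 1) - x * t / 2) ^ 2 / x := by positivity
  linarith

lemma integrableOn_exp_neg_mul_sinh_sub (hx : 0 < x) :
    IntegrableOn (fun t => exp (-x * sinh t - ν * t)) (Ioi 0) := by
  refine ((integrableOn_exp_neg_Ioi 0).const_mul (exp ((|ν| + 1) ^ 2 / x))).mono'
    (by fun_prop : Continuous _).aestronglyMeasurable ?_
  filter_upwards [ae_restrict_mem measurableSet_Ioi] with t ht
  rw [norm_eq_abs, abs_exp]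
  exact exp_neg_mul_sinh_sub_le ν hx ht.le

lemma tendsto_exp_neg_mul_sinh_sub_atTop (hx : 0 < x) :
    Tendsto (fun t => exp (-x * sinh t - ν * t)) atTop (𝓝 0) := by
  have hbound := tendsto_exp_neg_atTop_nhds_zero.const_mul (exp ((|ν| + 1) ^ 2 / x))
  rw [mul_zero] at hbound
  refine squeeze_zero' (.of_forall fun t => (exp_pos _).le) ?_ hbound
  filter_upwards [eventually_ge_atTop 0] with t ht
  exact exp_neg_mul_sinh_sub_le ν hx ht

lemma norm_sinh_mul_exp_le {t y : ℝ} (ht : 0 ≤ t) (hy : x ≤ y) :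
    ‖-sinh t * exp (-y * sinh t - ν * t)‖ ≤ exp (-x * sinh t - (ν - 1) * t) := by
  have hsinh : 0 ≤ sinh t := sinh_nonneg_iff.mpr ht
  have hle : sinh t ≤ exp t := by
    rw [sinh_eq]
    linarith [exp_pos t, exp_pos (-t)]
  rw [norm_mul, norm_neg, norm_eq_abs, norm_eq_abs, abs_exp, abs_of_nonneg hsinh,
    exp_sub_sub_one_mul, mul_comm]
  gcongr

lemma hasDerivAt_besselExpIntegral (hx : 0 < x) :
    HasDerivAt (besselExpIntegral ν)
      (-(besselExpIntegral (ν - 1) x - besselExpIntegral (ν + 1) x) / 2) x := by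
  have hderiv := (hasDerivAt_integral_of_dominated_loc_of_deriv_le
    (μ := volume.restrict (Ioi (0 : ℝ))) (F := fun x t => exp (-x * sinh t - ν * t))
    (F' := fun x t => -sinh t * exp (-x * sinh t - ν * t))
    (bound := fun t => exp (-(x / 2) * sinh t - (ν - 1) * t)) (x₀ := x)
    (Ioi_mem_nhds (half_lt_self hx))
    (.of_forall fun y => (by fun_prop : Continuous _).aestronglyMeasurable)
    (integrableOn_exp_neg_mul_sinh_sub ν hx)
    (by fun_prop : Continuous _).aestronglyMeasurable ?_
    (integrableOn_exp_neg_mul_sinh_sub (ν - 1) (half_pos hx))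
    (.of_forall fun t y _ => ?_)).2
  · refine hderiv.congr_deriv ?_
    unfold besselExpIntegral
    rw [← integral_sub (integrableOn_exp_neg_mul_sinh_sub _ hx)
      (integrableOn_exp_neg_mul_sinh_sub _ hx), ← integral_neg, ← integral_div]
    refine integral_congr_ae (.of_forall fun t => ?_)
    simp only [exp_sub_sub_one_mul, exp_sub_add_one_mul]
    linear_combination -exp (-x * sinh t - ν * t) * sinh_eq t
  · filter_upwards [ae_restrict_mem measurableSet_Ioi] with t ht y hy
    exact norm_sinh_mul_exp_le ν ht.le hy.le
  · exact (((hasDerivAt_id y).neg.mul_const (sinh t)).sub_const (ν * t)).exp.congr_deriv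
      (by simp; ring)

lemma besselExpIntegral_recurrence (hx : 0 < x) :
    x * (besselExpIntegral (ν - 1) x + besselExpIntegral (ν + 1) x) =
      2 * (1 - ν * besselExpIntegral ν x) := by
  have hint (ν : ℝ) := integrableOn_exp_neg_mul_sinh_sub ν hx
  have hsplit (t : ℝ) : -(exp (-x * sinh t - ν * t) * (-x * cosh t - ν)) =
      x / 2 * (exp (-x * sinh t - (ν - 1) * t) + exp (-x * sinh t - (ν + 1) * t)) +
        ν * exp (-x * sinh t - ν * t) := by
    rw [exp_sub_sub_one_mul, exp_sub_add_one_mul, cosh_eq]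
    ring
  have hderiv (t : ℝ) : HasDerivAt (fun t => -exp (-x * sinh t - ν * t))
      (-(exp (-x * sinh t - ν * t) * (-x * cosh t - ν))) t :=
    ((((hasDerivAt_sinh t).const_mul (-x)).sub ((hasDerivAt_id t).const_mul ν)).congr_deriv
      (by simp)).exp.neg
  have hsum : IntegrableOn (fun t => x / 2 *
      (exp (-x * sinh t - (ν - 1) * t) + exp (-x * sinh t - (ν + 1) * t))) (Ioi 0) :=
    ((hint (ν - 1)).add (hint (ν + 1))).const_mul (x / 2)
  have hftc := integral_Ioi_of_hasDerivAt_of_tendsto (m := 0)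
    (hderiv 0).continuousAt.continuousWithinAt (fun t _ => hderiv t)
    (by simp only [hsplit]; exact hsum.add ((hint ν).const_mul ν))
    (by simpa only [neg_zero] using (tendsto_exp_neg_mul_sinh_sub_atTop ν hx).neg)
  simp_rw [hsplit] at hftc
  rw [integral_add hsum ((hint ν).const_mul ν), integral_const_mul, integral_const_mul,
    integral_add (hint _) (hint _)] at hftc
  simp only [sinh_zero, mul_zero, sub_zero, exp_zero, zero_sub, neg_neg] at hftc
  unfold besselExpIntegral
  linarith

lemma abs_besselExpIntegral_le (hν : 0 ≤ ν) (hx : 0 < x) :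
    |besselExpIntegral ν x| ≤ 1 / (x + ν) := by
  have hneg : -(x + ν) < 0 := by linarith
  have hexp : ∫ t in Ioi (0 : ℝ), exp (-(x + ν) * t) = 1 / (x + ν) := by
    rw [integral_exp_mul_Ioi hneg, mul_zero, exp_zero, neg_div_neg_eq]
  unfold besselExpIntegral
  rw [abs_of_nonneg (integral_nonneg fun t => (exp_pos _).le), ← hexp]
  refine setIntegral_mono_on (integrableOn_exp_neg_mul_sinh_sub ν hx)
    (integrableOn_exp_mul_Ioi hneg 0) measurableSet_Ioi fun t ht => exp_le_exp.mpr ?_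
  have hsinh : t ≤ sinh t := self_le_sinh_iff.mpr (le_of_lt ht)
  linarith [mul_le_mul_of_nonneg_left hsinh hx.le]

end IntegralRecurrences

section BesselEquation

variable {ν x : ℝ}

lemma sin_sub_one_mul_pi (ν : ℝ) : sin ((ν - 1) * π) = -sin (ν * π) := by
  rw [sub_mul, one_mul, sin_sub_pi]

lemma sin_add_one_mul_pi (ν : ℝ) : sin ((ν + 1) * π) = -sin (ν * π) := by
  rw [add_mul, one_mul, sin_add_pi]

lemma besselJ_recurrence (ν : ℝ) (hx : 0 < x) :
    x * (besselJ (ν - 1) x + besselJ (ν + 1) x) = 2 * ν * besselJ ν x := by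
  simp only [besselJ_eq, sin_sub_one_mul_pi, sin_add_one_mul_pi]
  linear_combination 1 / π * besselCosIntegral_recurrence ν x +
    sin (ν * π) / π * besselExpIntegral_recurrence ν hx

lemma hasDerivAt_besselJ_half_sub (ν : ℝ) (hx : 0 < x) :
    HasDerivAt (besselJ ν) ((besselJ (ν - 1) x - besselJ (ν + 1) x) / 2) x := by
  refine (((hasDerivAt_besselCosIntegral ν x).const_mul (1 / π)).sub
    ((hasDerivAt_besselExpIntegral ν hx).const_mul (sin (ν * π) / π))).congr_deriv ?_
  simp only [besselJ_eq, sin_sub_one_mul_pi, sin_add_one_mul_pi]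
  ring

lemma hasDerivAt_besselJ_sub_succ (ν : ℝ) (hx : 0 < x) :
    HasDerivAt (besselJ ν) (ν / x * besselJ ν x - besselJ (ν + 1) x) x := by
  refine (hasDerivAt_besselJ_half_sub ν hx).congr_deriv ?_
  field_simp
  linarith [besselJ_recurrence ν hx]

lemma hasDerivAt_besselJ_pred_sub (ν : ℝ) (hx : 0 < x) :
    HasDerivAt (besselJ ν) (besselJ (ν - 1) x - ν / x * besselJ ν x) x := by
  refine (hasDerivAt_besselJ_half_sub ν hx).congr_deriv ?_
  field_simp
  linarith [besselJ_recurrence ν hx]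

/-- The Euler derivative `x J_ν'(x)`, in which Bessel's equation has no first-order term. -/
noncomputable def besselEulerDeriv (ν x : ℝ) : ℝ := ν * besselJ ν x - x * besselJ (ν + 1) x

lemma hasDerivAt_besselJ (ν : ℝ) (hx : 0 < x) :
    HasDerivAt (besselJ ν) (besselEulerDeriv ν x / x) x := by
  refine (hasDerivAt_besselJ_sub_succ ν hx).congr_deriv ?_
  unfold besselEulerDeriv
  field_simp

lemma hasDerivAt_besselEulerDeriv (ν : ℝ) (hx : 0 < x) :
    HasDerivAt (besselEulerDeriv ν) (-(x ^ 2 - ν ^ 2) / x * besselJ ν x) x := by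
  have hsucc := hasDerivAt_besselJ_pred_sub (ν + 1) hx
  rw [add_sub_cancel_right] at hsucc
  refine (((hasDerivAt_besselJ_sub_succ ν hx).const_mul ν).sub
    ((hasDerivAt_id x).mul hsucc)).congr_deriv ?_
  simp only [id]
  field_simp
  ring

lemma continuousOn_besselJ (ν : ℝ) {s : Set ℝ} (hs : ∀ t ∈ s, 0 < t) :
    ContinuousOn (besselJ ν) s :=
  fun t ht => (hasDerivAt_besselJ ν (hs t ht)).continuousAt.continuousWithinAt

lemma exists_abs_besselJ_le (hν : 0 ≤ ν) : ∃ C, ∀ x, 0 < x → |besselJ ν x| ≤ C := by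
  have hcos (x : ℝ) : |1 / π * besselCosIntegral ν x| ≤ 1 := by
    rw [abs_mul, abs_of_pos (by positivity), one_div, inv_mul_le_iff₀ pi_pos, mul_one]
    exact abs_besselCosIntegral_le_pi ν x
  rcases hν.eq_or_lt with rfl | hpos
  · exact ⟨1, fun x _ => by simpa [besselJ_eq] using hcos x⟩
  refine ⟨1 + 1 / π * (1 / ν), fun x hx => ?_⟩
  have hexp : |besselExpIntegral ν x| ≤ 1 / ν :=
    (abs_besselExpIntegral_le ν hν hx).trans (by gcongr; linarith)
  rw [besselJ_eq]
  refine (abs_sub _ _).trans ?_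
  rw [abs_mul (sin _ / π), abs_div (sin _), abs_of_pos pi_pos]
  gcongr
  · exact hcos x
  · exact abs_sin_le_one _

end BesselEquation

/-! ### Stationary phase asymptotics at infinity -/

section FresnelIntegral

lemma norm_integral_mul_deriv_le {u u' v v' : ℝ → ℂ} {B : ℝ → ℝ} {a b : ℝ} (hab : a ≤ b)
    (hu : ∀ s ∈ uIcc a b, HasDerivAt u (u' s) s) (hv : ∀ s ∈ uIcc a b, HasDerivAt v (v' s) s)
    (hu' : ContinuousOn u' (uIcc a b)) (hv' : ContinuousOn v' (uIcc a b))
    (hv_norm : ∀ s ∈ uIcc a b, ‖v s‖ ≤ 1) (hB : ∀ s ∈ uIcc a b, ‖u' s‖ ≤ B s)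
    (hB_int : IntervalIntegrable B volume a b) :
    ‖∫ s in a..b, u s * v' s‖ ≤ ‖u a‖ + ‖u b‖ + ∫ s in a..b, B s := by
  have hmul {s : ℝ} (z : ℂ) (hs : s ∈ uIcc a b) : ‖z * v s‖ ≤ ‖z‖ := by
    rw [norm_mul]
    exact mul_le_of_le_one_right (norm_nonneg z) (hv_norm s hs)
  have hrest : ‖∫ s in a..b, u' s * v s‖ ≤ ∫ s in a..b, B s := by
    refine intervalIntegral.norm_integral_le_of_norm_le hab (.of_forall fun s hs => ?_) hB_int
    have hs' : s ∈ uIcc a b := uIoc_subset_uIcc (by rwa [uIoc_of_le hab])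
    exact (hmul _ hs').trans (hB s hs')
  rw [intervalIntegral.integral_mul_deriv_eq_deriv_mul hu hv hu'.intervalIntegrable
    hv'.intervalIntegrable]
  have hends := norm_sub_le (u b * v b) (u a * v a)
  linarith [norm_sub_le (u b * v b - u a * v a) (∫ s in a..b, u' s * v s),
    hmul (u b) right_mem_uIcc, hmul (u a) left_mem_uIcc]

lemma hasDerivAt_cexp_neg_mul_sq (b : ℂ) (w : ℝ) :
    HasDerivAt (fun w : ℝ => Complex.exp (-b * (w : ℂ) ^ 2))
      (Complex.exp (-b * (w : ℂ) ^ 2) * (-b * (2 * w))) w :=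
  (((hasDerivAt_pow 2 (w : ℂ)).const_mul (-b)).congr_deriv (by simp)).cexp.comp_ofReal

lemma norm_cexp_neg_mul_sq_le_one {b : ℂ} (hb : 0 ≤ b.re) (w : ℝ) :
    ‖Complex.exp (-b * (w : ℂ) ^ 2)‖ ≤ 1 := by
  rw [Complex.norm_exp, exp_le_one_iff, ← Complex.ofReal_pow, Complex.re_mul_ofReal,
    Complex.neg_re, neg_mul, neg_nonpos]
  exact mul_nonneg hb (sq_nonneg w)

lemma norm_integral_cexp_neg_mul_sq_le {b : ℂ} (hb : 0 ≤ b.re) (hb0 : b ≠ 0) {T T' : ℝ}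
    (hT : 0 < T) (hTT' : T ≤ T') :
    ‖∫ w in T..T', Complex.exp (-b * (w : ℂ) ^ 2)‖ ≤ 1 / (‖b‖ * T) := by
  have hpos {w : ℝ} (hw : w ∈ uIcc T T') : 0 < w := by
    rw [uIcc_of_le hTT'] at hw
    exact hT.trans_le hw.1
  have hinv {w : ℝ} (hw : w ∈ uIcc T T') : HasDerivAt (fun w : ℝ => -w⁻¹) ((w ^ 2)⁻¹) w :=
    (hasDerivAt_inv (hpos hw).ne').neg.congr_deriv (neg_neg _)
  have hsq : ContinuousOn (fun w : ℝ => (w ^ 2)⁻¹) (uIcc T T') :=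
    ContinuousOn.inv₀ (by fun_prop) fun w hw => (pow_pos (hpos hw) 2).ne'
  set k : ℂ := (2 * b)⁻¹ with hk
  have hparts := norm_integral_mul_deriv_le (u := fun w => k * ((-w⁻¹ : ℝ) : ℂ))
    (u' := fun w => k * (((w ^ 2)⁻¹ : ℝ) : ℂ)) (B := fun w => ‖k‖ * (w ^ 2)⁻¹) hTT'
    (fun w hw => (hinv hw).ofReal_comp.const_mul k) (fun w _ => hasDerivAt_cexp_neg_mul_sq b w)
    (continuousOn_const.mul (Complex.continuous_ofReal.comp_continuousOn hsq)) (by fun_prop)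
    (fun w _ => norm_cexp_neg_mul_sq_le_one hb w)
    (fun w _ => by simp) ((continuousOn_const.mul hsq).intervalIntegrable)
  have hintegrand : ∫ w in T..T', Complex.exp (-b * (w : ℂ) ^ 2) =
      ∫ w in T..T', k * ((-w⁻¹ : ℝ) : ℂ) * (Complex.exp (-b * (w : ℂ) ^ 2) * (-b * (2 * w))) := by
    refine intervalIntegral.integral_congr fun w hw => ?_
    have hw0 : (w : ℂ) ≠ 0 := Complex.ofReal_ne_zero.mpr (hpos hw).ne'
    simp only [hk]
    push_cast
    field_simp
  rw [hintegrand]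
  refine hparts.trans_eq ?_
  rw [intervalIntegral.integral_const_mul, intervalIntegral.integral_eq_sub_of_hasDerivAt
    (fun w hw => hinv hw) hsq.intervalIntegrable]
  have hT' := hT.trans_le hTT'
  simp only [hk, norm_mul, norm_inv, Complex.norm_real, norm_neg, Complex.norm_ofNat,
    norm_of_nonneg hT.le, norm_of_nonneg hT'.le]
  field_simp
  ring

lemma norm_integral_sub_gaussian_le {b : ℂ} (hb : 0 < b.re) {T : ℝ} (hT : 0 < T) :
    ‖(∫ w in (0 : ℝ)..T, Complex.exp (-b * (w : ℂ) ^ 2)) - (π / b) ^ (1 / 2 : ℂ) / 2‖ ≤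
      1 / (‖b‖ * T) := by
  have hlim := intervalIntegral_tendsto_integral_Ioi (0 : ℝ)
    (integrable_cexp_neg_mul_sq hb).integrableOn tendsto_id
  rw [integral_gaussian_complex_Ioi hb] at hlim
  refine le_of_tendsto (hlim.const_sub _).norm ?_
  filter_upwards [eventually_ge_atTop T] with T' hT'
  have hint (p q : ℝ) : IntervalIntegrable (fun w : ℝ => Complex.exp (-b * (w : ℂ) ^ 2))
      volume p q := by
    apply Continuous.intervalIntegrable
    fun_prop
  rw [id, intervalIntegral.integral_interval_sub_left (hint _ _) (hint _ _),
    intervalIntegral.integral_symm, norm_neg]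
  exact norm_integral_cexp_neg_mul_sq_le hb.le (fun h => by simp [h] at hb) hT hT'

-- The boundary case `b.re = 0` is reached through the regularisation `b + ε`.
lemma norm_integral_sub_fresnel_le {b : ℂ} (hb : 0 ≤ b.re) (hb0 : b ≠ 0) {T : ℝ} (hT : 0 < T) :
    ‖(∫ w in (0 : ℝ)..T, Complex.exp (-b * (w : ℂ) ^ 2)) - (π / b) ^ (1 / 2 : ℂ) / 2‖ ≤
      1 / (‖b‖ * T) := by
  have hslit : (π : ℂ) / b ∈ Complex.slitPlane := by
    have hb2 : 0 < Complex.normSq b := Complex.normSq_pos.mpr hb0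
    rw [Complex.mem_slitPlane_iff, Complex.div_re, Complex.div_im]
    rcases hb.eq_or_lt with hre | hre
    · have him : b.im ≠ 0 := fun him => hb0 (Complex.ext hre.symm him)
      right
      simp [him, hb0, pi_ne_zero]
    · left
      simp only [Complex.ofReal_re, Complex.ofReal_im, zero_mul, zero_div, add_zero]
      positivity
  have hshift : ContinuousAt (fun ε : ℝ => b + ε) 0 := by fun_prop
  have hint : ContinuousAt
      (fun ε : ℝ => ∫ w in (0 : ℝ)..T, Complex.exp (-(b + ε) * (w : ℂ) ^ 2)) 0 :=
    (intervalIntegral.continuous_parametric_intervalIntegral_of_continuous'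
      (by fun_prop) 0 T).continuousAt
  have hval : ContinuousAt (fun ε : ℝ => ((π : ℂ) / (b + ε)) ^ (1 / 2 : ℂ) / 2) 0 :=
    ((continuousAt_const.div hshift (by simpa using hb0)).cpow continuousAt_const
      (by simpa using hslit)).div_const 2
  have hbound : ContinuousAt (fun ε : ℝ => 1 / (‖b + ε‖ * T)) 0 :=
    continuousAt_const.div (hshift.norm.mul_const T) (by simp [hb0, hT.ne'])
  have hle := le_of_tendsto_of_tendsto ((hint.sub hval).norm.tendsto.mono_left nhdsWithin_le_nhds)
    (hbound.tendsto.mono_left nhdsWithin_le_nhds)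
    (eventually_nhdsWithin_of_forall fun ε (hε : ε ∈ Ioi (0 : ℝ)) =>
      norm_integral_sub_gaussian_le (b := b + ε)
        (by simpa using add_pos_of_nonneg_of_pos hb hε) hT)
  simpa using hle

lemma tendsto_integral_cexp_neg_mul_sq {b : ℂ} (hb : 0 ≤ b.re) (hb0 : b ≠ 0) :
    Tendsto (fun T : ℝ => ∫ w in (0 : ℝ)..T, Complex.exp (-b * (w : ℂ) ^ 2)) atTop
      (𝓝 ((π / b) ^ (1 / 2 : ℂ) / 2)) := by
  rw [tendsto_iff_norm_sub_tendsto_zero]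
  have hdecay : Tendsto (fun T : ℝ => 1 / (‖b‖ * T)) atTop (𝓝 0) :=
    (tendsto_id.const_mul_atTop (norm_pos_iff.mpr hb0)).const_div_atTop 1
  refine squeeze_zero' (.of_forall fun _ => norm_nonneg _) ?_ hdecay
  filter_upwards [eventually_gt_atTop 0] with T hT
  exact norm_integral_sub_fresnel_le hb hb0 hT

/-- The value `∫₀^∞ e^{-iw²/2} dw = √(π/2) e^{-iπ/4}` of the Fresnel integral. -/
noncomputable def fresnelLimit : ℂ := (√(π / 2) : ℝ) * Complex.exp ((-(π / 4) : ℝ) * Complex.I)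

lemma re_cexp_mul_fresnelLimit (t : ℝ) :
    (Complex.exp (t * Complex.I) * fresnelLimit).re = √(π / 2) * cos (t - π / 4) := by
  rw [fresnelLimit, mul_left_comm, ← Complex.exp_add, ← add_mul, ← Complex.ofReal_add,
    Complex.re_ofReal_mul, Complex.exp_ofReal_mul_I_re, ← sub_eq_add_neg]

lemma gaussian_value_eq_fresnelLimit :
    ((π : ℂ) / (Complex.I / 2)) ^ (1 / 2 : ℂ) / 2 = fresnelLimit := by
  have hsq : (π : ℂ) / (Complex.I / 2) = (2 * fresnelLimit) ^ 2 := by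
    have hexp : Complex.exp ((2 : ℕ) * ((-(π / 4) : ℝ) * Complex.I)) = -Complex.I := by
      rw [show (2 : ℕ) * ((-(π / 4) : ℝ) * Complex.I) = -(π / 2 * Complex.I) by push_cast; ring,
        Complex.exp_neg, Complex.exp_pi_div_two_mul_I, Complex.inv_I]
    rw [fresnelLimit, mul_pow, mul_pow, ← Complex.exp_nat_mul, hexp, ← Complex.ofReal_pow,
      sq_sqrt (by positivity), div_div_eq_mul_div, Complex.div_I]
    push_cast
    ring
  have hre : 0 < (2 * fresnelLimit).re := by
    have h := re_cexp_mul_fresnelLimit 0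
    simp only [Complex.ofReal_zero, zero_mul, Complex.exp_zero, one_mul, zero_sub, cos_neg,
      cos_pi_div_four] at h
    rw [Complex.mul_re, Complex.re_ofNat, Complex.im_ofNat, h]
    norm_num
    positivity
  rw [hsq, one_div, Complex.sq_cpow_two_inv hre]
  ring

end FresnelIntegral

section StationaryPhase

variable (ν x : ℝ)

/-- The exponential `e^{-ix(1 - cos s)}`, whose phase is stationary at `s = 0`. -/
noncomputable def stationaryExp (x s : ℝ) : ℂ :=
  Complex.exp ((-(x * (1 - cos s)) : ℝ) * Complex.I)

/-- The stationary phase integral whose rotated real part is the oscillatory half of `J_ν`;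
it comes from centring `[0, π]` at the critical point `θ = π/2`. -/
noncomputable def stationaryIntegral (ν x : ℝ) : ℂ :=
  ∫ s in (0 : ℝ)..(π / 2), stationaryExp x s * (cos (ν * s) : ℝ)

@[fun_prop]
lemma continuous_stationaryExp : Continuous (stationaryExp x) := by
  unfold stationaryExp
  fun_prop

lemma norm_stationaryExp (s : ℝ) : ‖stationaryExp x s‖ = 1 := Complex.norm_exp_ofReal_mul_I _

lemma hasDerivAt_stationaryExp (s : ℝ) :
    HasDerivAt (stationaryExp x)
      (stationaryExp x s * ((-(x * sin s) : ℝ) * Complex.I)) s := by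
  have hphase : HasDerivAt (fun s : ℝ => -(x * (1 - cos s))) (-(x * sin s)) s :=
    (((hasDerivAt_cos s).const_sub 1).const_mul x).neg.congr_deriv (by ring)
  exact (hphase.ofReal_comp.mul_const Complex.I).cexp

lemma besselCosIntegral_eq_stationaryIntegral :
    besselCosIntegral ν x =
      2 * (Complex.exp ((x - ν * π / 2 : ℝ) * Complex.I) * stationaryIntegral ν x).re := by
  have hcont : Continuous fun θ => cos (x * sin θ - ν * θ) := by fun_prop
  have hleft : ∫ θ in (0 : ℝ)..(π / 2), cos (x * sin θ - ν * θ) =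
      ∫ s in (0 : ℝ)..(π / 2), cos (x * cos s - ν * π / 2 + ν * s) := by
    have h := intervalIntegral.integral_comp_sub_left (a := 0) (b := π / 2)
      (fun θ => cos (x * sin θ - ν * θ)) (π / 2)
    rw [sub_self, sub_zero] at h
    rw [← h]
    simp only [sin_pi_div_two_sub]
    exact intervalIntegral.integral_congr fun s _ => by ring_nf
  have hright : ∫ θ in (π / 2)..π, cos (x * sin θ - ν * θ) =
      ∫ s in (0 : ℝ)..(π / 2), cos (x * cos s - ν * π / 2 - ν * s) := by
    have h := intervalIntegral.integral_comp_add_right (a := 0) (b := π / 2)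
      (fun θ => cos (x * sin θ - ν * θ)) (π / 2)
    rw [zero_add, add_halves] at h
    rw [← h]
    simp only [sin_add_pi_div_two]
    exact intervalIntegral.integral_congr fun s _ => by ring_nf
  have hre (s : ℝ) : (Complex.exp ((x - ν * π / 2 : ℝ) * Complex.I) *
      (stationaryExp x s * (cos (ν * s) : ℝ))).re = cos (x * cos s - ν * π / 2) * cos (ν * s) := by
    rw [stationaryExp, ← mul_assoc, ← Complex.exp_add, ← add_mul, ← Complex.ofReal_add,
      Complex.re_mul_ofReal, Complex.exp_ofReal_mul_I_re]
    ring_nf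
  have hcomm := Complex.reCLM.intervalIntegral_comp_comm (a := 0) (b := π / 2) (μ := volume)
    (f := fun s => Complex.exp ((x - ν * π / 2 : ℝ) * Complex.I) *
      (stationaryExp x s * (cos (ν * s) : ℝ))) (by apply Continuous.intervalIntegrable; fun_prop)
  simp only [Complex.reCLM_apply, hre] at hcomm
  rw [stationaryIntegral, ← intervalIntegral.integral_const_mul, ← hcomm,
    ← intervalIntegral.integral_const_mul, besselCosIntegral,
    ← intervalIntegral.integral_add_adjacent_intervals (hcont.intervalIntegrable _ (π / 2))
      (hcont.intervalIntegrable _ _), hleft, hright, ← intervalIntegral.integral_add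
      (by apply Continuous.intervalIntegrable; fun_prop)
      (by apply Continuous.intervalIntegrable; fun_prop)]
  refine intervalIntegral.integral_congr fun s _ => ?_
  simp only [cos_add, cos_sub]
  ring

variable {x}

-- For `ν = 1/2` the substitution `w = 2 √x sin (s / 2)` is exact.
lemma sqrt_mul_stationaryIntegral_half (hx : 0 ≤ x) :
    (√x : ℝ) * stationaryIntegral (1 / 2) x =
      ∫ w in (0 : ℝ)..(√x * √2), Complex.exp (-(Complex.I / 2) * (w : ℂ) ^ 2) := by
  have hexp (s : ℝ) : Complex.exp (-(Complex.I / 2) * ((2 * √x * sin (s / 2) : ℝ) : ℂ) ^ 2) =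
      stationaryExp x s := by
    have hsq : (2 * √x * sin (s / 2)) ^ 2 = 2 * (x * (1 - cos s)) := by
      rw [mul_pow, mul_pow, sq_sqrt hx, sin_sq_eq_half_sub, mul_div_cancel₀ s two_ne_zero]
      ring
    rw [stationaryExp, ← Complex.ofReal_pow, hsq]
    push_cast
    ring_nf
  have hsubst := intervalIntegral.integral_deriv_smul_comp (a := 0) (b := π / 2)
    (f := fun s => 2 * √x * sin (s / 2)) (f' := fun s => √x * cos (s / 2))
    (g := fun w : ℝ => Complex.exp (-(Complex.I / 2) * (w : ℂ) ^ 2))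
    (fun s _ => (((hasDerivAt_id s).div_const 2).sin.const_mul (2 * √x)).congr_deriv
      (by simp only [id]; ring)) (by fun_prop) (by fun_prop)
  have hend : 2 * √x * sin (π / 2 / 2) = √x * √2 := by
    rw [div_div, show (2 : ℝ) * 2 = 4 by norm_num, sin_pi_div_four]
    ring
  simp only [Function.comp_apply, hexp, hend, zero_div, sin_zero, mul_zero] at hsubst
  rw [← hsubst, stationaryIntegral, ← intervalIntegral.integral_const_mul]
  refine intervalIntegral.integral_congr fun s _ => ?_
  simp only [Complex.real_smul, one_div_mul_eq_div]
  push_cast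
  ring

lemma half_le_sin {s : ℝ} (h0 : 0 ≤ s) (h1 : s ≤ π / 2) : s / 2 ≤ sin s := by
  have hpi : (1 : ℝ) / 2 ≤ 2 / π := by
    rw [div_le_div_iff₀ two_pos pi_pos]
    linarith [pi_lt_four]
  linarith [mul_le_sin h0 h1, mul_le_mul_of_nonneg_right hpi h0]

section VanishingAmplitude

variable {n n' : ℝ → ℝ} {C : ℝ}

lemma abs_div_sin_le (hn : ∀ s, |n s| ≤ C * s ^ 2) {s : ℝ} (h0 : 0 < s) (h1 : s ≤ π / 2) :
    |n s / sin s| ≤ 4 * C := by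
  have hsin := half_le_sin h0.le h1
  have hC : 0 ≤ C := nonneg_of_mul_nonneg_left ((abs_nonneg _).trans (hn s)) (by positivity)
  have hpos : 0 < sin s := by linarith
  have hs2 : s ≤ 2 := by linarith [pi_lt_four]
  rw [abs_div, abs_of_pos hpos, div_le_iff₀ hpos]
  calc |n s| ≤ C * (s * s) := by rw [← sq]; exact hn s
    _ ≤ C * (2 * (2 * sin s)) := by gcongr; linarith
    _ = 4 * C * sin s := by ring

lemma abs_deriv_div_sin_le (hn : ∀ s, |n s| ≤ C * s ^ 2) (hn' : ∀ s, 0 ≤ s → |n' s| ≤ C * s)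
    {s : ℝ} (h0 : 0 < s) (h1 : s ≤ π / 2) :
    |(n' s * sin s - n s * cos s) / sin s ^ 2| ≤ 6 * C := by
  have hsin := half_le_sin h0.le h1
  have hpos : 0 < sin s := by linarith
  have hC : 0 ≤ C := nonneg_of_mul_nonneg_left ((abs_nonneg _).trans (hn s)) (by positivity)
  have hs : s ≤ 2 * sin s := by linarith
  rw [abs_div, abs_of_pos (pow_pos hpos 2), div_le_iff₀ (pow_pos hpos 2)]
  calc |n' s * sin s - n s * cos s| ≤ |n' s * sin s| + |n s * cos s| := abs_sub _ _
    _ = |n' s| * sin s + |n s| * |cos s| := by rw [abs_mul, abs_mul, abs_of_pos hpos]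
    _ ≤ C * s * sin s + C * s ^ 2 * 1 := by
      gcongr
      exacts [hn' s h0.le, hn s, abs_cos_le_one s]
    _ ≤ C * (2 * sin s) * sin s + C * (2 * sin s) ^ 2 * 1 := by gcongr
    _ = 6 * C * sin s ^ 2 := by ring

lemma stationaryExp_mul_eq_mul_deriv {s : ℝ} (hx : x ≠ 0) (hs : sin s ≠ 0) (a : ℝ) :
    stationaryExp x s * a = Complex.I / x * (a / sin s : ℝ) *
      (stationaryExp x s * ((-(x * sin s) : ℝ) * Complex.I)) := by
  have hx' : (x : ℂ) ≠ 0 := Complex.ofReal_ne_zero.mpr hx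
  have hs' : (sin s : ℂ) ≠ 0 := Complex.ofReal_ne_zero.mpr hs
  push_cast at hs' ⊢
  field_simp
  rw [Complex.I_sq]
  ring

lemma norm_integral_stationaryExp_mul_away_le (hx : 0 < x) {δ : ℝ} (hδ : 0 < δ)
    (hδπ : δ ≤ π / 2) (hderiv : ∀ s, HasDerivAt n (n' s) s) (hcont : Continuous n')
    (hn : ∀ s, |n s| ≤ C * s ^ 2) (hn' : ∀ s, 0 ≤ s → |n' s| ≤ C * s) :
    ‖∫ s in δ..(π / 2), stationaryExp x s * (n s : ℂ)‖ ≤ 20 * C / x := by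
  have hmem {s : ℝ} (hs : s ∈ uIcc δ (π / 2)) : 0 < s ∧ s ≤ π / 2 := by
    rw [uIcc_of_le hδπ] at hs
    exact ⟨hδ.trans_le hs.1, hs.2⟩
  have hsin {s : ℝ} (hs : s ∈ uIcc δ (π / 2)) : 0 < sin s := by
    linarith [half_le_sin (hmem hs).1.le (hmem hs).2, (hmem hs).1]
  have hC : 0 ≤ C := by simpa using (abs_nonneg _).trans (hn 1)
  set k : ℂ := Complex.I / x with hk
  have hk_norm (t : ℝ) : ‖k * (t : ℂ)‖ = |t| / x := by
    simp [hk, abs_of_pos hx, div_mul_eq_mul_div]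
  have hn_cont : Continuous n := continuous_iff_continuousAt.mpr fun s => (hderiv s).continuousAt
  have hparts := norm_integral_mul_deriv_le (u := fun s => k * (n s / sin s : ℝ))
    (u' := fun s => k * ((n' s * sin s - n s * cos s) / sin s ^ 2 : ℝ)) (B := fun _ => 6 * C / x)
    hδπ (fun s hs => ((hderiv s).div (hasDerivAt_sin s) (hsin hs).ne').ofReal_comp.const_mul k)
    (fun s _ => hasDerivAt_stationaryExp x s)
    (continuousOn_const.mul (Complex.continuous_ofReal.comp_continuousOn (ContinuousOn.div
      (by fun_prop) (by fun_prop) fun s hs => pow_ne_zero 2 (hsin hs).ne')))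
    (by fun_prop) (fun s _ => (norm_stationaryExp x s).le)
    (fun s hs => by
      rw [hk_norm]
      gcongr
      exact abs_deriv_div_sin_le hn hn' (hmem hs).1 (hmem hs).2)
    intervalIntegrable_const
  have hintegrand : ∫ s in δ..(π / 2), stationaryExp x s * (n s : ℂ) =
      ∫ s in δ..(π / 2), k * (n s / sin s : ℝ) *
        (stationaryExp x s * ((-(x * sin s) : ℝ) * Complex.I)) :=
    intervalIntegral.integral_congr fun s hs =>
      stationaryExp_mul_eq_mul_deriv hx.ne' (hsin hs).ne' (n s)
  rw [hintegrand]
  refine hparts.trans ?_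
  rw [hk_norm, hk_norm, intervalIntegral.integral_const, smul_eq_mul, ← add_div, mul_div_assoc',
    ← add_div]
  gcongr
  have hlen : (π / 2 - δ) * (6 * C) ≤ 2 * (6 * C) := by
    gcongr
    linarith [pi_lt_four]
  linarith [abs_div_sin_le hn hδ hδπ, abs_div_sin_le hn pi_div_two_pos le_rfl]

lemma norm_integral_stationaryExp_mul_le (hx : 1 ≤ x) (hderiv : ∀ s, HasDerivAt n (n' s) s)
    (hcont : Continuous n') (hn : ∀ s, |n s| ≤ C * s ^ 2)
    (hn' : ∀ s, 0 ≤ s → |n' s| ≤ C * s) :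
    ‖∫ s in (0 : ℝ)..(π / 2), stationaryExp x s * (n s : ℂ)‖ ≤ 21 * C / x := by
  have hx0 : 0 < x := by linarith
  have hδ : 0 < 1 / x := by positivity
  have hδ1 : 1 / x ≤ 1 := (div_le_one hx0).mpr hx
  have hC : 0 ≤ C := by simpa using (abs_nonneg _).trans (hn 1)
  have hn_cont : Continuous n := continuous_iff_continuousAt.mpr fun s => (hderiv s).continuousAt
  have hnear : ‖∫ s in (0 : ℝ)..(1 / x), stationaryExp x s * (n s : ℂ)‖ ≤ C / x := by
    have h := intervalIntegral.norm_integral_le_of_norm_le_const (a := 0) (b := 1 / x) (C := C)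
      (f := fun s => stationaryExp x s * (n s : ℂ)) fun s hs => by
        rw [uIoc_of_le hδ.le] at hs
        rw [norm_mul, norm_stationaryExp, one_mul, Complex.norm_real]
        refine (hn s).trans (mul_le_of_le_one_right hC (pow_le_one₀ hs.1.le ?_))
        linarith [hs.2]
    rwa [sub_zero, abs_of_pos hδ, mul_one_div] at h
  rw [← intervalIntegral.integral_add_adjacent_intervals (b := 1 / x)
    (by apply Continuous.intervalIntegrable; fun_prop)
    (by apply Continuous.intervalIntegrable; fun_prop)]
  calc _ ≤ C / x + 20 * C / x := (norm_add_le _ _).trans (add_le_add hnear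
        (norm_integral_stationaryExp_mul_away_le hx0 hδ (by linarith [pi_gt_three]) hderiv hcont
          hn hn'))
    _ = 21 * C / x := by ring

end VanishingAmplitude

lemma abs_cos_mul_sub_cos_mul_le (a b s : ℝ) :
    |cos (a * s) - cos (b * s)| ≤ (a ^ 2 + b ^ 2) * s ^ 2 := by
  have ha := one_sub_sq_div_two_le_cos (x := a * s)
  have hb := one_sub_sq_div_two_le_cos (x := b * s)
  rw [abs_le]
  constructor <;>
    nlinarith [cos_le_one (a * s), cos_le_one (b * s), sq_nonneg (a * s), sq_nonneg (b * s)]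

lemma abs_mul_sin_mul_le (a : ℝ) {s : ℝ} (hs : 0 ≤ s) : |a * sin (a * s)| ≤ a ^ 2 * s := by
  rw [abs_mul]
  calc |a| * |sin (a * s)| ≤ |a| * |a * s| :=
      mul_le_mul_of_nonneg_left abs_sin_le_abs (abs_nonneg a)
    _ = a ^ 2 * s := by rw [abs_mul, abs_of_nonneg hs, ← mul_assoc, ← sq, sq_abs]

lemma norm_stationaryIntegral_sub_half_le (hx : 1 ≤ x) :
    ‖stationaryIntegral ν x - stationaryIntegral (1 / 2) x‖ ≤
      21 * (ν ^ 2 + (1 / 2) ^ 2) / x := by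
  have hderiv (a s : ℝ) : HasDerivAt (fun s => cos (a * s)) (-(a * sin (a * s))) s :=
    ((hasDerivAt_id s).const_mul a).cos.congr_deriv (by simp [mul_comm])
  have hbound := norm_integral_stationaryExp_mul_le hx
    (fun s => (hderiv ν s).sub (hderiv (1 / 2) s)) (by fun_prop)
    (abs_cos_mul_sub_cos_mul_le ν (1 / 2)) fun s hs => by
      rw [add_mul, neg_sub_neg, add_comm]
      exact (abs_sub _ _).trans
        (add_le_add (abs_mul_sin_mul_le (1 / 2) hs) (abs_mul_sin_mul_le ν hs))
  refine le_of_eq_of_le ?_ hbound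
  rw [stationaryIntegral, stationaryIntegral, ← intervalIntegral.integral_sub
    (by apply Continuous.intervalIntegrable; fun_prop)
    (by apply Continuous.intervalIntegrable; fun_prop)]
  simp only [Pi.sub_apply, Complex.ofReal_sub, mul_sub]

lemma tendsto_sqrt_mul_of_norm_le_div {E : Type*} [NormedAddCommGroup E] [NormedSpace ℝ E]
    {f : ℝ → E} {C : ℝ} (hf : ∀ᶠ x in atTop, ‖f x‖ ≤ C / x) :
    Tendsto (fun x => √x • f x) atTop (𝓝 0) := by
  refine squeeze_zero_norm' (a := fun x => C / √x) ?_ (tendsto_sqrt_atTop.const_div_atTop C)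
  filter_upwards [hf, eventually_gt_atTop 0] with x hfx hx
  rw [norm_smul, norm_of_nonneg (sqrt_nonneg x)]
  calc √x * ‖f x‖ ≤ √x * (C / x) := by gcongr
    _ = C / √x := by rw [mul_div_left_comm, sqrt_div_self', mul_one_div]

lemma tendsto_sqrt_mul_stationaryIntegral :
    Tendsto (fun x : ℝ => (√x : ℝ) * stationaryIntegral ν x) atTop (𝓝 fresnelLimit) := by
  have hhalf := (tendsto_integral_cexp_neg_mul_sq (b := Complex.I / 2) (by simp) (by simp)).comp
    (tendsto_sqrt_atTop.atTop_mul_const (sqrt_pos.mpr two_pos))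
  rw [gaussian_value_eq_fresnelLimit] at hhalf
  have hdiff := tendsto_sqrt_mul_of_norm_le_div
    ((eventually_ge_atTop 1).mono fun x hx => norm_stationaryIntegral_sub_half_le ν hx)
  have hsum := hhalf.add hdiff
  rw [add_zero] at hsum
  refine hsum.congr' ?_
  filter_upwards [eventually_ge_atTop 0] with x hx
  simp only [Function.comp_apply, Complex.real_smul]
  rw [← sqrt_mul_stationaryIntegral_half hx]
  ring

/-- The constant `√(2/π)` of the asymptotics `√x J_ν(x) ~ √(2/π) cos (x - νπ/2 - π/4)`, in the
form produced by the Fresnel integral. -/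
noncomputable def besselAmplitude : ℝ := 2 / π * √(π / 2)

lemma besselAmplitude_pos : 0 < besselAmplitude := by
  unfold besselAmplitude
  positivity

variable {ν}

lemma tendsto_sqrt_mul_besselJ_sub_cos (hν : 0 ≤ ν) :
    Tendsto (fun x => √x * besselJ ν x - besselAmplitude * cos (x - ν * π / 2 - π / 4)) atTop
      (𝓝 0) := by
  have hosc : Tendsto (fun x : ℝ => (Complex.exp ((x - ν * π / 2 : ℝ) * Complex.I) *
      ((√x : ℝ) * stationaryIntegral ν x - fresnelLimit)).re) atTop (𝓝 0) := by
    have hlim := (tendsto_sqrt_mul_stationaryIntegral ν).sub_const fresnelLimit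
    rw [sub_self] at hlim
    refine squeeze_zero_norm (fun x => (Complex.abs_re_le_norm _).trans_eq ?_)
      (tendsto_zero_iff_norm_tendsto_zero.mp hlim)
    rw [norm_mul, Complex.norm_exp_ofReal_mul_I, one_mul]
  have hexp : Tendsto (fun x : ℝ => √x * besselExpIntegral ν x) atTop (𝓝 0) :=
    tendsto_sqrt_mul_of_norm_le_div (C := 1) ((eventually_gt_atTop 0).mono fun x hx =>
      (abs_besselExpIntegral_le ν hν hx).trans (by gcongr; linarith))
  have hsum := (hosc.const_mul (2 / π)).sub (hexp.const_mul (sin (ν * π) / π))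
  simp only [mul_zero, sub_zero] at hsum
  refine hsum.congr fun x => ?_
  rw [besselJ_eq, besselCosIntegral_eq_stationaryIntegral, mul_sub, Complex.sub_re,
    re_cexp_mul_fresnelLimit, mul_left_comm, Complex.re_ofReal_mul, besselAmplitude]
  ring

end StationaryPhase

/-! ### The Liouville–Green phase -/

/-- The Liouville–Green phase of `J_ν`, in units of `π`: the primitive of `√(t² - ν²) / (π t)`
vanishing at the turning point `t = ν`. -/
noncomputable def besselPhase (ν x : ℝ) : ℝ := x * gfun (ν / x)

/-- The momentum of the Bessel equation in the variable `log x`. -/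
noncomputable def besselMomentum (ν x : ℝ) : ℝ := √(x ^ 2 - ν ^ 2)

/-- A bound for the accumulated Liouville–Green error on `[x, ∞)`. -/
noncomputable def wkbError (ν x : ℝ) : ℝ :=
  9 / 4 / besselMomentum ν x + 5 / 12 * ν ^ 2 / besselMomentum ν x ^ 3

/-- The density of the Liouville–Green error, minus the derivative of `wkbError`. -/
noncomputable def wkbErrorDensity (ν x : ℝ) : ℝ :=
  x / besselMomentum ν x ^ 3 + 5 / 4 * x ^ 3 / besselMomentum ν x ^ 5

section PhaseCalculus

variable {ν x x' : ℝ}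

lemma besselMomentum_pos (hν : 0 ≤ ν) (hx : ν < x) : 0 < besselMomentum ν x :=
  sqrt_pos.mpr (by nlinarith)

lemma besselMomentum_sq (hν : 0 ≤ ν) (hx : ν ≤ x) : besselMomentum ν x ^ 2 = x ^ 2 - ν ^ 2 :=
  sq_sqrt (by nlinarith)

lemma besselMomentum_le (hx : 0 ≤ x) : besselMomentum ν x ≤ x :=
  sqrt_le_iff.mpr ⟨hx, by linarith [sq_nonneg ν]⟩

lemma besselMomentum_mono (hx : 0 ≤ x) (h : x ≤ x') : besselMomentum ν x ≤ besselMomentum ν x' :=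
  sqrt_le_sqrt (by gcongr)

lemma sqrt_one_sub_div_sq (ν : ℝ) (hx : 0 < x) :
    √(1 - (ν / x) ^ 2) = besselMomentum ν x / x := by
  rw [show 1 - (ν / x) ^ 2 = (x ^ 2 - ν ^ 2) / x ^ 2 by field_simp,
    sqrt_div' _ (sq_nonneg x), sqrt_sq hx.le, besselMomentum]

lemma besselPhase_eq (ν : ℝ) (hx : 0 < x) :
    besselPhase ν x = 1 / π * (besselMomentum ν x - ν * arccos (ν / x)) := by
  rw [besselPhase, gfun, sqrt_one_sub_div_sq ν hx]
  field_simp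

lemma hasDerivAt_besselMomentum (hν : 0 ≤ ν) (hx : ν < x) :
    HasDerivAt (besselMomentum ν) (x / besselMomentum ν x) x := by
  have hne : x ^ 2 - ν ^ 2 ≠ 0 := by nlinarith
  refine (((hasDerivAt_pow 2 x).sub_const (ν ^ 2)).sqrt hne).congr_deriv ?_
  rw [besselMomentum, Nat.cast_ofNat, pow_one, mul_div_mul_left _ _ two_ne_zero]

lemma hasDerivAt_arccos_div (hν : 0 ≤ ν) (hx : ν < x) :
    HasDerivAt arccos (-(x / besselMomentum ν x)) (ν / x) := by
  have hx0 : 0 < x := hν.trans_lt hx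
  have hnonneg : 0 ≤ ν / x := by positivity
  refine (hasDerivAt_arccos (by linarith) ((div_lt_one hx0).mpr hx).ne).congr_deriv ?_
  rw [sqrt_one_sub_div_sq ν hx0, one_div_div]

lemma hasDerivAt_besselPhase (hν : 0 ≤ ν) (hx : ν < x) :
    HasDerivAt (besselPhase ν) (besselMomentum ν x / (π * x)) x := by
  have hx0 : 0 < x := hν.trans_lt hx
  have hP := besselMomentum_pos hν hx
  have hdiv : HasDerivAt (fun t : ℝ => ν / t) (ν * -(x ^ 2)⁻¹) x :=
    (hasDerivAt_inv hx0.ne').const_mul ν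
  have h := ((hasDerivAt_besselMomentum hν hx).sub
    (((hasDerivAt_arccos_div hν hx).comp x hdiv).const_mul ν)).const_mul (1 / π)
  refine (h.congr_deriv ?_).congr_of_eventuallyEq ?_
  · have hsq := besselMomentum_sq hν hx.le
    field_simp
    rw [hsq]
  · filter_upwards [lt_mem_nhds hx0] with t ht using besselPhase_eq ν ht

lemma hasDerivAt_besselPhase_order (hν : 0 ≤ ν) (hx : ν < x) :
    HasDerivAt (fun ν => besselPhase ν x) (-arccos (ν / x) / π) ν := by
  have hx0 : 0 < x := hν.trans_lt hx
  have hP := besselMomentum_pos hν hx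
  have hmomentum : HasDerivAt (fun ν => besselMomentum ν x) (-ν / besselMomentum ν x) ν := by
    have hne : x ^ 2 - ν ^ 2 ≠ 0 := by nlinarith
    refine (((hasDerivAt_pow 2 ν).const_sub (x ^ 2)).sqrt hne).congr_deriv ?_
    rw [besselMomentum, Nat.cast_ofNat, pow_one, ← mul_neg, mul_div_mul_left _ _ two_ne_zero]
  have h := (hmomentum.sub ((hasDerivAt_id ν).mul
    ((hasDerivAt_arccos_div hν hx).comp ν ((hasDerivAt_id ν).div_const x)))).const_mul (1 / π)
  refine (h.congr_deriv ?_).congr_of_eventuallyEq ?_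
  · simp only [Function.comp_apply, id_eq]
    field_simp
    ring
  · filter_upwards with t using besselPhase_eq t hx0

lemma wkbError_pos (hν : 0 ≤ ν) (hx : ν < x) : 0 < wkbError ν x := by
  have hP := besselMomentum_pos hν hx
  unfold wkbError
  positivity

lemma wkbError_anti (hν : 0 ≤ ν) (hx : ν < x) (h : x ≤ x') : wkbError ν x' ≤ wkbError ν x := by
  have hP := besselMomentum_pos hν hx
  have hle := besselMomentum_mono (ν := ν) (hν.trans hx.le) h
  unfold wkbError
  gcongr

lemma hasDerivAt_wkbError (hν : 0 ≤ ν) (hx : ν < x) :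
    HasDerivAt (wkbError ν) (-wkbErrorDensity ν x) x := by
  have hP := besselMomentum_pos hν hx
  have hderiv := hasDerivAt_besselMomentum hν hx
  have h : HasDerivAt (wkbError ν) _ x := ((hderiv.inv hP.ne').const_mul (9 / 4)).add
    (((hderiv.pow 3).inv (pow_pos hP 3).ne').const_mul (5 / 12 * ν ^ 2))
  refine h.congr_deriv ?_
  have hsq : ν ^ 2 = x ^ 2 - besselMomentum ν x ^ 2 := by linarith [besselMomentum_sq hν hx.le]
  rw [hsq, wkbErrorDensity]
  simp only [Pi.pow_apply]
  field_simp
  ring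

end PhaseCalculus

section PhaseAtInfinity

lemma tendsto_besselMomentum_sub_id (ν : ℝ) :
    Tendsto (fun x => besselMomentum ν x - x) atTop (𝓝 0) := by
  refine squeeze_zero_norm' ?_ (tendsto_id.const_div_atTop (ν ^ 2))
  filter_upwards [eventually_gt_atTop |ν|, eventually_gt_atTop 0] with x hx hx0
  have hsq : ν ^ 2 ≤ x ^ 2 := by rw [← sq_abs]; gcongr
  have hP : besselMomentum ν x ^ 2 = x ^ 2 - ν ^ 2 := sq_sqrt (by linarith)
  have hP0 : 0 ≤ besselMomentum ν x := sqrt_nonneg _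
  have hle := besselMomentum_le (ν := ν) hx0.le
  rw [norm_eq_abs, abs_of_nonpos (by linarith), id, le_div_iff₀ hx0]
  nlinarith

lemma tendsto_besselMomentum_div_id (ν : ℝ) :
    Tendsto (fun x => besselMomentum ν x / x) atTop (𝓝 1) := by
  have h : Tendsto (fun x : ℝ => √(1 - (ν / x) ^ 2)) atTop (𝓝 (√(1 - 0 ^ 2))) :=
    (((tendsto_id.const_div_atTop ν).pow 2).const_sub 1).sqrt
  rw [zero_pow two_ne_zero, sub_zero, sqrt_one] at h
  refine h.congr' ?_
  filter_upwards [eventually_gt_atTop 0] with x hx using sqrt_one_sub_div_sq ν hx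

lemma tendsto_besselMomentum_atTop (ν : ℝ) : Tendsto (besselMomentum ν) atTop atTop := by
  refine ((tendsto_besselMomentum_sub_id ν).add_atTop tendsto_id).congr fun x => ?_
  simp only [id_eq, sub_add_cancel]

lemma tendsto_pi_mul_besselPhase_sub (ν : ℝ) :
    Tendsto (fun x => π * besselPhase ν x - (x - ν * π / 2)) atTop (𝓝 0) := by
  have harccos : Tendsto (fun x : ℝ => ν * (arccos (ν / x) - π / 2)) atTop (𝓝 0) := by
    have h := (continuous_arccos.tendsto 0).comp (tendsto_id.const_div_atTop ν)
    rw [arccos_zero] at h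
    simpa using (h.sub_const (π / 2)).const_mul ν
  have h := (tendsto_besselMomentum_sub_id ν).sub harccos
  rw [sub_zero] at h
  refine h.congr' ?_
  filter_upwards [eventually_gt_atTop 0] with x hx
  rw [besselPhase_eq ν hx]
  field_simp
  ring

lemma tendsto_pi_mul_besselPhase_atTop (ν : ℝ) :
    Tendsto (fun x => π * besselPhase ν x) atTop atTop := by
  have h := (tendsto_pi_mul_besselPhase_sub ν).add_atTop
    (tendsto_atTop_add_const_right atTop (-(ν * π / 2)) tendsto_id)
  refine h.congr fun x => ?_
  rw [id]
  ring

lemma tendsto_wkbError (ν : ℝ) : Tendsto (wkbError ν) atTop (𝓝 0) := by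
  have hP := tendsto_besselMomentum_atTop ν
  have h := (hP.const_div_atTop (9 / 4)).add
    (((tendsto_pow_atTop (α := ℝ) three_ne_zero).comp hP).const_div_atTop (5 / 12 * ν ^ 2))
  rwa [add_zero] at h

lemma exists_besselPhase_eq {ν x T : ℝ} (hν : 0 ≤ ν) (hx : ν < x) (hT : besselPhase ν x ≤ T) :
    ∃ y, x ≤ y ∧ besselPhase ν y = T := by
  obtain ⟨Y, hxY, hY⟩ := ((eventually_ge_atTop x).and
    ((tendsto_pi_mul_besselPhase_atTop ν).eventually_ge_atTop (π * T))).exists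
  have hcont : ContinuousOn (besselPhase ν) (Icc x Y) := fun t ht =>
    (hasDerivAt_besselPhase hν (hx.trans_le ht.1)).continuousAt.continuousWithinAt
  obtain ⟨y, hy, hphase⟩ :=
    intermediate_value_Icc hxY hcont ⟨hT, le_of_mul_le_mul_left hY pi_pos⟩
  exact ⟨y, hy.1, hphase⟩

lemma exists_pi_mul_besselPhase_eq_add_nat_mul {ν x : ℝ} (hν : 0 ≤ ν) (hx : ν < x) (φ : ℝ) :
    ∃ y, x ≤ y ∧ ∃ m : ℕ, π * besselPhase ν y = φ + m * (2 * π) := by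
  obtain ⟨m, hm⟩ := exists_nat_ge ((π * besselPhase ν x - φ) / (2 * π))
  rw [div_le_iff₀ two_pi_pos, sub_le_iff_le_add'] at hm
  obtain ⟨y, hxy, hy⟩ := exists_besselPhase_eq hν hx ((le_div_iff₀' pi_pos).mpr hm)
  exact ⟨y, hxy, m, by rw [hy, mul_div_cancel₀ _ pi_pos.ne']⟩

end PhaseAtInfinity

/-! ### Liouville–Green approximation from infinity -/

/-- The Liouville–Green normalisation `√P · J_ν`, with `P` the momentum. -/
noncomputable def wkbValue (ν x : ℝ) : ℝ := √(besselMomentum ν x) * besselJ ν x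

/-- The derivative of `wkbValue` with respect to `π · besselPhase`. -/
noncomputable def wkbSlope (ν x : ℝ) : ℝ :=
  besselEulerDeriv ν x / √(besselMomentum ν x) +
    x ^ 2 * besselJ ν x / (2 * √(besselMomentum ν x) ^ 5)

/-- The perturbation by which `wkbValue` and `wkbSlope` deviate from a pure rotation. -/
noncomputable def wkbPotential (ν x : ℝ) : ℝ :=
  x / besselMomentum ν x ^ 3 - 5 / 4 * x ^ 3 / besselMomentum ν x ^ 5

/-- The squared amplitude of the pair `(wkbValue, wkbSlope)`. -/
noncomputable def wkbEnergy (ν x : ℝ) : ℝ := wkbValue ν x ^ 2 + wkbSlope ν x ^ 2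

/-- The first coordinate of `(wkbValue, wkbSlope)` after rotating back by the angle
`π · besselPhase - φ`; it would be constant if `wkbPotential` vanished. -/
noncomputable def wkbProjection (φ ν x : ℝ) : ℝ :=
  wkbValue ν x * cos (π * besselPhase ν x - φ) - wkbSlope ν x * sin (π * besselPhase ν x - φ)

section Wkb

variable {ν x x' : ℝ}

lemma hasDerivAt_wkbValue (hν : 0 ≤ ν) (hx : ν < x) :
    HasDerivAt (wkbValue ν) (besselMomentum ν x / x * wkbSlope ν x) x := by
  have hx0 : 0 < x := hν.trans_lt hx
  have hP := besselMomentum_pos hν hx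
  have hS : 0 < √(besselMomentum ν x) := sqrt_pos.mpr hP
  refine (((hasDerivAt_besselMomentum hν hx).sqrt hP.ne').mul
    (hasDerivAt_besselJ ν hx0)).congr_deriv ?_
  have hsq : besselMomentum ν x = √(besselMomentum ν x) ^ 2 := (sq_sqrt hP.le).symm
  rw [wkbSlope]
  set S := √(besselMomentum ν x)
  rw [hsq]
  field_simp
  ring

lemma hasDerivAt_wkbSlope (hν : 0 ≤ ν) (hx : ν < x) :
    HasDerivAt (wkbSlope ν)
      (-(besselMomentum ν x / x) * wkbValue ν x + wkbPotential ν x * wkbValue ν x) x := by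
  have hx0 : 0 < x := hν.trans_lt hx
  have hP := besselMomentum_pos hν hx
  have hS : 0 < √(besselMomentum ν x) := sqrt_pos.mpr hP
  have hderiv := (hasDerivAt_besselMomentum hν hx).sqrt hP.ne'
  have h : HasDerivAt (wkbSlope ν) _ x :=
    ((hasDerivAt_besselEulerDeriv ν hx0).div hderiv hS.ne').add
      (((hasDerivAt_pow 2 x).mul (hasDerivAt_besselJ ν hx0)).div
        ((hderiv.pow 5).const_mul 2) (by positivity))
  refine h.congr_deriv ?_
  have hsq : besselMomentum ν x = √(besselMomentum ν x) ^ 2 := (sq_sqrt hP.le).symm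
  rw [wkbPotential, wkbValue, ← besselMomentum_sq hν hx.le]
  simp only [Pi.mul_apply]
  set S := √(besselMomentum ν x)
  rw [hsq]
  field_simp
  ring

lemma abs_wkbPotential_le (hν : 0 ≤ ν) (hx : ν < x) :
    |wkbPotential ν x| ≤ wkbErrorDensity ν x := by
  have hx0 : 0 < x := hν.trans_lt hx
  have hP := besselMomentum_pos hν hx
  refine (abs_sub _ _).trans_eq ?_
  rw [abs_of_pos (by positivity), abs_of_pos (by positivity), wkbErrorDensity]

lemma wkbEnergy_nonneg (ν x : ℝ) : 0 ≤ wkbEnergy ν x := by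
  unfold wkbEnergy
  positivity

lemma hasDerivAt_wkbEnergy (hν : 0 ≤ ν) (hx : ν < x) :
    HasDerivAt (wkbEnergy ν) (2 * wkbPotential ν x * wkbValue ν x * wkbSlope ν x) x := by
  have h : HasDerivAt (wkbEnergy ν) _ x :=
    ((hasDerivAt_wkbValue hν hx).pow 2).add ((hasDerivAt_wkbSlope hν hx).pow 2)
  refine h.congr_deriv ?_
  norm_num
  ring

lemma deriv_wkbEnergy_le (hν : 0 ≤ ν) (hx : ν < x) :
    2 * wkbPotential ν x * wkbValue ν x * wkbSlope ν x ≤ wkbErrorDensity ν x * wkbEnergy ν x := by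
  have hψ := abs_wkbPotential_le hν hx
  have hamgm : 2 * |wkbValue ν x| * |wkbSlope ν x| ≤ wkbEnergy ν x := by
    rw [wkbEnergy, ← sq_abs (wkbValue ν x), ← sq_abs (wkbSlope ν x)]
    exact two_mul_le_add_sq _ _
  calc 2 * wkbPotential ν x * wkbValue ν x * wkbSlope ν x
      ≤ |2 * wkbPotential ν x * wkbValue ν x * wkbSlope ν x| := le_abs_self _
    _ = |wkbPotential ν x| * (2 * |wkbValue ν x| * |wkbSlope ν x|) := by
      rw [abs_mul, abs_mul, abs_mul, abs_two]
      ring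
    _ ≤ wkbErrorDensity ν x * wkbEnergy ν x := by
      gcongr
      exact (abs_nonneg _).trans hψ

lemma le_of_hasDerivAt_nonpos {f f' : ℝ → ℝ} {a b : ℝ} (hab : a ≤ b)
    (hf : ∀ x ∈ Icc a b, HasDerivAt f (f' x) x) (hf' : ∀ x ∈ Icc a b, f' x ≤ 0) : f b ≤ f a :=
  antitoneOn_of_hasDerivWithinAt_nonpos (convex_Icc a b)
    (fun x hx => (hf x hx).continuousAt.continuousWithinAt)
    (fun x hx => (hf x (interior_subset hx)).hasDerivWithinAt)
    (fun x hx => hf' x (interior_subset hx)) (left_mem_Icc.mpr hab) (right_mem_Icc.mpr hab) hab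

lemma abs_sub_le_sub_of_abs_deriv_le {f f' g g' : ℝ → ℝ} {a b : ℝ} (hab : a ≤ b)
    (hf : ∀ x ∈ Icc a b, HasDerivAt f (f' x) x) (hg : ∀ x ∈ Icc a b, HasDerivAt g (-g' x) x)
    (hbound : ∀ x ∈ Icc a b, |f' x| ≤ g' x) : |f b - f a| ≤ g a - g b := by
  have hadd := le_of_hasDerivAt_nonpos hab (fun x hx => (hf x hx).add (hg x hx))
    fun x hx => by linarith [(abs_le.mp (hbound x hx)).2]
  have hsub := le_of_hasDerivAt_nonpos hab (fun x hx => (hg x hx).sub (hf x hx))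
    fun x hx => by linarith [(abs_le.mp (hbound x hx)).1]
  simp only [Pi.add_apply, Pi.sub_apply] at hadd hsub
  rw [abs_le]
  constructor <;> linarith

lemma wkbEnergy_le_exp_wkbError_mul (hν : 0 ≤ ν) (hx : ν < x) (hxx' : x ≤ x') :
    wkbEnergy ν x' ≤ exp (wkbError ν x) * wkbEnergy ν x := by
  have hdecay : wkbEnergy ν x' * exp (wkbError ν x') ≤ wkbEnergy ν x * exp (wkbError ν x) := by
    refine le_of_hasDerivAt_nonpos (f := fun t => wkbEnergy ν t * exp (wkbError ν t)) hxx'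
      (fun t ht => (hasDerivAt_wkbEnergy hν (hx.trans_le ht.1)).mul
        (hasDerivAt_wkbError hν (hx.trans_le ht.1)).exp) fun t ht => ?_
    nlinarith [deriv_wkbEnergy_le hν (hx.trans_le ht.1), exp_pos (wkbError ν t)]
  have hone : 1 ≤ exp (wkbError ν x') := one_le_exp (wkbError_pos hν (hx.trans_le hxx')).le
  calc wkbEnergy ν x' ≤ wkbEnergy ν x' * exp (wkbError ν x') :=
        le_mul_of_one_le_right (wkbEnergy_nonneg ν x') hone
    _ ≤ exp (wkbError ν x) * wkbEnergy ν x := by rwa [mul_comm (exp _)]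

lemma abs_wkbValue_le_two_mul_sqrt_wkbEnergy (hν : 0 ≤ ν) (hx : ν < x) (hxx' : x ≤ x')
    (hE : wkbError ν x ≤ 1) : |wkbValue ν x'| ≤ 2 * √(wkbEnergy ν x) := by
  have hexp : exp (wkbError ν x) ≤ 4 :=
    (exp_le_exp.mpr hE).trans (by linarith [exp_one_lt_d9])
  refine abs_le_of_sq_le_sq ?_ (by positivity)
  calc wkbValue ν x' ^ 2 ≤ wkbEnergy ν x' := le_add_of_nonneg_right (sq_nonneg _)
    _ ≤ exp (wkbError ν x) * wkbEnergy ν x := wkbEnergy_le_exp_wkbError_mul hν hx hxx'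
    _ ≤ 4 * wkbEnergy ν x := mul_le_mul_of_nonneg_right hexp (wkbEnergy_nonneg ν x)
    _ = (2 * √(wkbEnergy ν x)) ^ 2 := by
      rw [mul_pow, sq_sqrt (wkbEnergy_nonneg ν x)]
      norm_num

lemma hasDerivAt_wkbProjection (φ : ℝ) (hν : 0 ≤ ν) (hx : ν < x) :
    HasDerivAt (wkbProjection φ ν)
      (-(wkbPotential ν x * wkbValue ν x * sin (π * besselPhase ν x - φ))) x := by
  have hx0 : 0 < x := hν.trans_lt hx
  have hphase := ((hasDerivAt_besselPhase hν hx).const_mul π).sub_const φ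
  refine (((hasDerivAt_wkbValue hν hx).mul hphase.cos).sub
    ((hasDerivAt_wkbSlope hν hx).mul hphase.sin)).congr_deriv ?_
  field_simp
  ring

lemma abs_wkbProjection_sub_le (φ : ℝ) (hν : 0 ≤ ν) (hx : ν < x) (hxx' : x ≤ x')
    (hE : wkbError ν x ≤ 1) :
    |wkbProjection φ ν x' - wkbProjection φ ν x| ≤ 2 * √(wkbEnergy ν x) * wkbError ν x := by
  have hderiv (t : ℝ) (ht : t ∈ Icc x x') :
      |-(wkbPotential ν t * wkbValue ν t * sin (π * besselPhase ν t - φ))| ≤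
        2 * √(wkbEnergy ν x) * wkbErrorDensity ν t := by
    rw [abs_neg, abs_mul, abs_mul]
    calc _ ≤ |wkbPotential ν t| * |wkbValue ν t| * 1 := by gcongr; exact abs_sin_le_one _
      _ = |wkbValue ν t| * |wkbPotential ν t| := by ring
      _ ≤ 2 * √(wkbEnergy ν x) * wkbErrorDensity ν t := by
        gcongr
        exacts [abs_wkbValue_le_two_mul_sqrt_wkbEnergy hν hx ht.1 hE,
          abs_wkbPotential_le hν (hx.trans_le ht.1)]
  have h := abs_sub_le_sub_of_abs_deriv_le hxx'
    (fun t ht => hasDerivAt_wkbProjection φ hν (hx.trans_le ht.1))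
    (fun t ht => ((hasDerivAt_wkbError hν (hx.trans_le ht.1)).const_mul
      (2 * √(wkbEnergy ν x))).congr_deriv (mul_neg _ _)) hderiv
  have hE' := wkbError_pos hν (hx.trans_le hxx')
  exact h.trans (sub_le_self _ (by positivity))

lemma tendsto_wkbValue_sub_cos (hν : 0 ≤ ν) :
    Tendsto (fun x => wkbValue ν x - besselAmplitude * cos (π * besselPhase ν x - π / 4))
      atTop (𝓝 0) := by
  have hratio : Tendsto (fun x => √(besselMomentum ν x / x)) atTop (𝓝 1) := by
    simpa using (tendsto_besselMomentum_div_id ν).sqrt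
  have hcos : Tendsto (fun x => cos (x - ν * π / 2 - π / 4) - cos (π * besselPhase ν x - π / 4))
      atTop (𝓝 0) := by
    refine squeeze_zero_norm (fun x => (abs_cos_sub_cos_le _ _).trans_eq ?_)
      (tendsto_zero_iff_norm_tendsto_zero.mp (tendsto_pi_mul_besselPhase_sub ν))
    rw [norm_eq_abs, ← abs_neg]
    ring_nf
  have hamplitude : Tendsto (fun x => (√(besselMomentum ν x / x) - 1) *
      (besselAmplitude * cos (x - ν * π / 2 - π / 4))) atTop (𝓝 0) := by
    have hzero : Tendsto (fun x => √(besselMomentum ν x / x) - 1) atTop (𝓝 0) := by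
      simpa using hratio.sub_const 1
    refine hzero.zero_mul_isBoundedUnder_le
      (isBoundedUnder_of ⟨besselAmplitude, fun x => ?_⟩)
    rw [Function.comp_apply, norm_eq_abs, abs_mul, abs_of_pos besselAmplitude_pos]
    exact mul_le_of_le_one_right besselAmplitude_pos.le (abs_cos_le_one _)
  have h := ((hratio.mul (tendsto_sqrt_mul_besselJ_sub_cos hν)).add hamplitude).add
    (hcos.const_mul besselAmplitude)
  rw [mul_zero, mul_zero, add_zero, add_zero] at h
  refine h.congr' ?_
  filter_upwards [eventually_gt_atTop 0] with x hx
  have hsqrt : √(besselMomentum ν x) = √(besselMomentum ν x / x) * √x := by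
    rw [← sqrt_mul' _ hx.le, div_mul_cancel₀ _ hx.ne']
  rw [wkbValue, hsqrt]
  ring

lemma wkbProjection_eq_wkbValue {φ : ℝ} {m : ℕ}
    (hphase : π * besselPhase ν x = φ + m * (2 * π)) : wkbProjection φ ν x = wkbValue ν x := by
  rw [wkbProjection, hphase, add_sub_cancel_left, cos_nat_mul_two_pi,
    ← zero_add ((m : ℝ) * (2 * π)), sin_add_nat_mul_two_pi, sin_zero]
  ring

lemma abs_wkbProjection_sub_amplitude_le (φ : ℝ) (hν : 0 ≤ ν) (hx : ν < x)
    (hE : wkbError ν x ≤ 1) :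
    |wkbProjection φ ν x - besselAmplitude * cos (φ - π / 4)| ≤
      2 * √(wkbEnergy ν x) * wkbError ν x := by
  refine le_of_forall_pos_le_add fun ε hε => ?_
  obtain ⟨N, hN⟩ := Metric.tendsto_atTop.mp (tendsto_wkbValue_sub_cos hν) ε hε
  obtain ⟨y, hy, m, hm⟩ := exists_pi_mul_besselPhase_eq_add_nat_mul hν
    (hx.trans_le (le_max_right N x)) φ
  have hlimit := hN y ((le_max_left _ _).trans hy)
  have hdiff := abs_wkbProjection_sub_le φ hν hx ((le_max_right _ _).trans hy) hE
  rw [dist_eq, sub_zero, hm, add_sub_right_comm, cos_add_nat_mul_two_pi] at hlimit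
  rw [wkbProjection_eq_wkbValue hm] at hdiff
  rw [abs_le] at hdiff ⊢
  rw [abs_lt] at hlimit
  constructor <;> linarith [hlimit.1, hlimit.2, hdiff.1, hdiff.2]

end Wkb

/-- The continuous index of the zeros of `J_ν`: approximately integral exactly at the zeros, the
shift `1/4` being the stationary phase correction. -/
noncomputable def zeroIndex (ν x : ℝ) : ℝ := besselPhase ν x + 1 / 4

section PhaseAmplitude

variable {ν x : ℝ}

lemma wkbEnergy_eq_wkbProjection_sq_add_sq (ν x : ℝ) :
    wkbEnergy ν x = wkbProjection (π / 4) ν x ^ 2 + wkbProjection (3 * π / 4) ν x ^ 2 := by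
  have hshift : π * besselPhase ν x - 3 * π / 4 = π * besselPhase ν x - π / 4 - π / 2 := by ring
  rw [wkbEnergy, wkbProjection, wkbProjection, hshift, cos_sub_pi_div_two, sin_sub_pi_div_two]
  linear_combination
    -(wkbValue ν x ^ 2 + wkbSlope ν x ^ 2) * sin_sq_add_cos_sq (π * besselPhase ν x - π / 4)

lemma wkbValue_eq_wkbProjection (ν x : ℝ) :
    wkbValue ν x = wkbProjection (π / 4) ν x * sin (π * zeroIndex ν x) -
      wkbProjection (3 * π / 4) ν x * cos (π * zeroIndex ν x) := by
  have hindex : π * zeroIndex ν x = π * besselPhase ν x - π / 4 + π / 2 := by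
    rw [zeroIndex]; ring
  have hshift : π * besselPhase ν x - 3 * π / 4 = π * besselPhase ν x - π / 4 - π / 2 := by ring
  rw [hindex, wkbProjection, wkbProjection, hshift, cos_sub_pi_div_two, sin_sub_pi_div_two,
    sin_add_pi_div_two, cos_add_pi_div_two]
  linear_combination -wkbValue ν x * sin_sq_add_cos_sq (π * besselPhase ν x - π / 4)

lemma wkbSlope_eq_wkbProjection (ν x : ℝ) :
    wkbSlope ν x = wkbProjection (π / 4) ν x * cos (π * zeroIndex ν x) +
      wkbProjection (3 * π / 4) ν x * sin (π * zeroIndex ν x) := by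
  have hindex : π * zeroIndex ν x = π * besselPhase ν x - π / 4 + π / 2 := by
    rw [zeroIndex]; ring
  have hshift : π * besselPhase ν x - 3 * π / 4 = π * besselPhase ν x - π / 4 - π / 2 := by ring
  rw [hindex, wkbProjection, wkbProjection, hshift, cos_sub_pi_div_two, sin_sub_pi_div_two,
    sin_add_pi_div_two, cos_add_pi_div_two]
  linear_combination -wkbSlope ν x * sin_sq_add_cos_sq (π * besselPhase ν x - π / 4)

lemma wkbProjection_pos_and_abs_le (hν : 0 ≤ ν) (hx : ν < x) (hE : wkbError ν x ≤ 1 / 16) :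
    0 < wkbProjection (π / 4) ν x ∧
      |wkbProjection (3 * π / 4) ν x| ≤ 4 * wkbError ν x * wkbProjection (π / 4) ν x := by
  have hE0 := wkbError_pos hν hx
  have hκ := besselAmplitude_pos
  have hsin := abs_wkbProjection_sub_amplitude_le (π / 4) hν hx (by linarith)
  have hcos := abs_wkbProjection_sub_amplitude_le (3 * π / 4) hν hx (by linarith)
  rw [sub_self, cos_zero, mul_one] at hsin
  rw [show 3 * π / 4 - π / 4 = π / 2 by ring, cos_pi_div_two, mul_zero, sub_zero] at hcos
  have henergy := wkbEnergy_eq_wkbProjection_sq_add_sq ν x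
  set a := wkbProjection (π / 4) ν x
  set b := wkbProjection (3 * π / 4) ν x
  set q := √(wkbEnergy ν x) with hq
  have hq0 : 0 ≤ q := sqrt_nonneg _
  have hqab : q ≤ |a| + |b| := by
    rw [hq, henergy, sqrt_le_iff, ← sq_abs a, ← sq_abs b]
    exact ⟨by positivity, by nlinarith [mul_nonneg (abs_nonneg a) (abs_nonneg b)]⟩
  have hqE : q * wkbError ν x ≤ q * (1 / 16) := by gcongr
  have ha : 0 < a := by
    by_contra! hneg
    rw [abs_of_nonpos hneg] at hqab
    linarith [(abs_le.mp hsin).1]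
  rw [abs_of_pos ha] at hqab
  refine ⟨ha, ?_⟩
  calc |b| ≤ 2 * q * wkbError ν x := hcos
    _ ≤ 2 * (2 * a) * wkbError ν x := by gcongr; linarith
    _ = 4 * wkbError ν x * a := by ring

end PhaseAmplitude

/-! ### Zeros of `J_ν` are simple, isolated and lie beyond the turning point -/

section Zeros

variable {ν x : ℝ}

lemma hasDerivAt_besselJ_sq_add_besselEulerDeriv_sq (ν : ℝ) (hx : 0 < x) :
    HasDerivAt (fun t => besselJ ν t ^ 2 + besselEulerDeriv ν t ^ 2)
      ((1 + ν ^ 2 - x ^ 2) / x * (2 * besselJ ν x * besselEulerDeriv ν x)) x := by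
  refine (((hasDerivAt_besselJ ν hx).pow 2).add
    ((hasDerivAt_besselEulerDeriv ν hx).pow 2)).congr_deriv ?_
  norm_num
  field_simp
  ring

lemma wkbEnergy_pos (hν : 0 ≤ ν) (hx : ν < x) (hE : wkbError ν x ≤ 1 / 16) :
    0 < wkbEnergy ν x := by
  rw [wkbEnergy_eq_wkbProjection_sq_add_sq]
  have hpos := (wkbProjection_pos_and_abs_le hν hx hE).1
  positivity

lemma besselEulerDeriv_ne_zero_of_besselJ_eq_zero {c : ℝ} (hν : 0 ≤ ν) (hc : 0 < c)
    (hJ : besselJ ν c = 0) : besselEulerDeriv ν c ≠ 0 := by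
  intro hV
  obtain ⟨x, hE, hcx, hx⟩ := (((tendsto_wkbError ν).eventually_le_const
    (by norm_num : (0 : ℝ) < 1 / 16)).and
      ((eventually_ge_atTop c).and (eventually_gt_atTop ν))).exists
  have hderiv (t : ℝ) (ht : t ∈ Icc c x) :=
    hasDerivAt_besselJ_sq_add_besselEulerDeriv_sq ν (hc.trans_le ht.1)
  have hzero := eq_zero_of_abs_deriv_le_mul_abs_self_of_eq_zero_right
    (K := (1 + ν ^ 2 + x ^ 2) / c)
    (fun t ht => (hderiv t ht).continuousAt.continuousWithinAt)
    (fun t ht => (hderiv t (Ico_subset_Icc_self ht)).hasDerivWithinAt)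
    (by rw [hJ, hV]; norm_num) (fun t ht => ?_) x (right_mem_Icc.mpr hcx)
  · obtain ⟨hJx, hVx⟩ := (add_eq_zero_iff_of_nonneg (sq_nonneg _) (sq_nonneg _)).mp hzero
    rw [sq_eq_zero_iff] at hJx hVx
    have henergy := wkbEnergy_pos hν hx hE
    rw [wkbEnergy, wkbValue, wkbSlope, hJx, hVx] at henergy
    norm_num at henergy
  · have ht0 : 0 < t := hc.trans_le ht.1
    rw [norm_mul, norm_div, norm_of_nonneg ht0.le,
      norm_of_nonneg (by positivity : 0 ≤ besselJ ν t ^ 2 + besselEulerDeriv ν t ^ 2)]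
    gcongr
    · rw [norm_eq_abs, abs_le]
      have hsq : t ^ 2 ≤ x ^ 2 := by gcongr; exact ht.2.le
      constructor <;> nlinarith
    · exact ht.1
    · rw [norm_eq_abs, abs_mul, abs_mul, abs_two, ← sq_abs (besselJ ν t),
        ← sq_abs (besselEulerDeriv ν t)]
      exact two_mul_le_add_sq _ _

lemma hasDerivAt_besselJ_mul_besselEulerDeriv (ν : ℝ) (hx : 0 < x) :
    HasDerivAt (fun t => besselJ ν t * besselEulerDeriv ν t)
      ((besselEulerDeriv ν x ^ 2 + (ν ^ 2 - x ^ 2) * besselJ ν x ^ 2) / x) x := by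
  refine ((hasDerivAt_besselJ ν hx).mul (hasDerivAt_besselEulerDeriv ν hx)).congr_deriv ?_
  field_simp
  ring

lemma strictMonoOn_besselJ_mul_besselEulerDeriv (hν : 0 ≤ ν) :
    StrictMonoOn (fun t => besselJ ν t * besselEulerDeriv ν t) (Ioc 0 ν) := by
  refine strictMonoOn_of_hasDerivWithinAt_pos (convex_Ioc 0 ν)
    (fun t ht =>
      (hasDerivAt_besselJ_mul_besselEulerDeriv ν ht.1).continuousAt.continuousWithinAt)
    (fun t ht =>
      (hasDerivAt_besselJ_mul_besselEulerDeriv ν (interior_subset ht).1).hasDerivWithinAt)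
    fun t ht => ?_
  rw [interior_Ioc] at ht
  have hlt : 0 < ν ^ 2 - t ^ 2 := by nlinarith [ht.1, ht.2]
  refine div_pos ?_ ht.1
  rcases eq_or_ne (besselJ ν t) 0 with hJ | hJ
  · have hV := besselEulerDeriv_ne_zero_of_besselJ_eq_zero hν ht.1 hJ
    positivity
  · positivity

lemma tendsto_atTop_of_mul_deriv_le_neg {f f' : ℝ → ℝ} {a δ : ℝ} (ha : 0 < a) (hδ : 0 < δ)
    (hf : ∀ t ∈ Ioc 0 a, HasDerivAt f (f' t / t) t) (hf' : ∀ t ∈ Ioc 0 a, f' t ≤ -δ) :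
    Tendsto f (𝓝[>] 0) atTop := by
  have hlog : Tendsto (fun t => f a + δ * log a + δ * -log t) (𝓝[>] 0) atTop :=
    tendsto_atTop_add_const_left _ _
      ((tendsto_neg_atBot_atTop.comp tendsto_log_nhdsGT_zero).const_mul_atTop hδ)
  refine tendsto_atTop_mono' _ ?_ hlog
  filter_upwards [Ioo_mem_nhdsGT ha] with t ht
  have hmem (s : ℝ) (hs : s ∈ Icc t a) : s ∈ Ioc 0 a := ⟨ht.1.trans_le hs.1, hs.2⟩
  have h := le_of_hasDerivAt_nonpos (f := fun s => f s + δ * log s) ht.2.le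
    (fun s hs => (hf s (hmem s hs)).add
      ((hasDerivAt_log (hmem s hs).1.ne').const_mul δ)) fun s hs => by
        rw [← div_eq_mul_inv, ← add_div]
        exact div_nonpos_of_nonpos_of_nonneg (by linarith [hf' s (hmem s hs)]) (hmem s hs).1.le
  linarith

-- A zero `x ≤ ν` would make `t (J_ν²)'` negative and bounded away from `0` near the origin, so
-- that `J_ν²` would blow up logarithmically there.
lemma besselJ_ne_zero_of_le_order (hx : 0 < x) (hxν : x ≤ ν) : besselJ ν x ≠ 0 := by
  intro hJ
  have hν : 0 ≤ ν := hx.le.trans hxν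
  have hx2 : 0 < x / 2 := half_pos hx
  have hmono := strictMonoOn_besselJ_mul_besselEulerDeriv hν
  have hneg : besselJ ν (x / 2) * besselEulerDeriv ν (x / 2) < 0 := by
    have h := hmono ⟨hx2, by linarith⟩ ⟨hx, hxν⟩ (half_lt_self hx)
    simpa only [hJ, zero_mul] using h
  have hblowup : Tendsto (fun t => besselJ ν t ^ 2) (𝓝[>] 0) atTop := by
    refine tendsto_atTop_of_mul_deriv_le_neg hx2 (neg_pos.mpr hneg)
      (f' := fun t => 2 * (besselJ ν t * besselEulerDeriv ν t)) (fun t ht => ?_) fun t ht => ?_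
    · refine ((hasDerivAt_besselJ ν ht.1).pow 2).congr_deriv ?_
      norm_num
      ring
    · have h := hmono.monotoneOn ⟨ht.1, by linarith [ht.2]⟩ ⟨hx2, by linarith⟩ ht.2
      linarith
  obtain ⟨C, hC⟩ := exists_abs_besselJ_le hν
  obtain ⟨t, hlt, ht⟩ :=
    ((hblowup.eventually_gt_atTop (C ^ 2)).and (eventually_mem_nhdsWithin (a := 0))).exists
  exact hlt.not_ge (sq_le_sq' (neg_le_of_abs_le (hC t ht)) (le_of_abs_le (hC t ht)))

lemma besselJ_zero_pos (h0 : 0 < x) (h1 : x ≤ 1) : 0 < besselJ 0 x := by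
  have hint : 0 < besselCosIntegral 0 x := by
    refine intervalIntegral.intervalIntegral_pos_of_pos_on
      (Continuous.intervalIntegrable (by fun_prop) _ _) (fun θ _ => ?_) pi_pos
    have habs : |x * sin θ| ≤ 1 := by
      rw [abs_mul, abs_of_pos h0]
      exact mul_le_one₀ h1 (abs_nonneg _) (abs_sin_le_one θ)
    rw [zero_mul, sub_zero]
    refine cos_pos_of_mem_Ioo ⟨?_, ?_⟩ <;> linarith [abs_le.mp habs, pi_gt_three]
  rw [besselJ_eq, zero_mul, sin_zero, zero_div, zero_mul, sub_zero]
  positivity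

lemma exists_forall_le_besselJ_ne_zero (hν : 0 ≤ ν) :
    ∃ δ > 0, ∀ x, 0 < x → x ≤ δ → besselJ ν x ≠ 0 := by
  rcases hν.eq_or_lt with rfl | hν
  · exact ⟨1, one_pos, fun x h0 h1 => (besselJ_zero_pos h0 h1).ne'⟩
  · exact ⟨ν, hν, fun x => besselJ_ne_zero_of_le_order⟩

end Zeros

/-- The zeros of `J_ν` in `(a, b]`. -/
def besselZerosIoc (ν a b : ℝ) : Set ℝ := {t | t ∈ Ioc a b ∧ besselJ ν t = 0}

section ZeroCount

variable {ν a b : ℝ}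

lemma zcount_eq_ncard (ν b : ℝ) : zcount ν b = (besselZerosIoc ν 0 b).ncard := by
  simp only [zcount, besselZerosIoc, mem_Ioc, and_assoc]

lemma finite_besselZerosIoc (hν : 0 ≤ ν) (ha : 0 ≤ a) (b : ℝ) : (besselZerosIoc ν a b).Finite := by
  obtain ⟨δ, hδ, hne⟩ := exists_forall_le_besselJ_ne_zero hν
  by_contra hinf
  have hsub : besselZerosIoc ν a b ⊆ Icc δ b := fun t ht =>
    ⟨le_of_not_ge fun hle => hne t (ha.trans_lt ht.1.1) hle ht.2, ht.1.2⟩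
  obtain ⟨c, hc, hacc⟩ := Set.Infinite.exists_accPt_of_subset_isCompact hinf isCompact_Icc hsub
  have hc0 : 0 < c := hδ.trans_le hc.1
  have hderiv := hasDerivAt_besselJ ν hc0
  have hisolated : ∀ᶠ t in 𝓝[≠] c, besselJ ν t ≠ 0 := by
    by_cases hJ : besselJ ν c = 0
    · exact hderiv.eventually_ne
        (div_ne_zero (besselEulerDeriv_ne_zero_of_besselJ_eq_zero hν hc0 hJ) hc0.ne')
    · exact (hderiv.continuousAt.eventually_ne hJ).filter_mono nhdsWithin_le_nhds
  rw [accPt_iff_frequently_nhdsNE] at hacc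
  obtain ⟨t, ht, hJ⟩ := (hacc.and_eventually hisolated).exists
  exact hJ ht.2

lemma zcount_eq_add (hν : 0 ≤ ν) (ha : 0 ≤ a) (hab : a ≤ b) :
    zcount ν b = zcount ν a + (besselZerosIoc ν a b).ncard := by
  have hunion : besselZerosIoc ν 0 b = besselZerosIoc ν 0 a ∪ besselZerosIoc ν a b := by
    rw [besselZerosIoc, ← Ioc_union_Ioc_eq_Ioc ha hab]
    ext t
    exact or_and_right
  rw [zcount_eq_ncard, zcount_eq_ncard, hunion,
    ncard_union_eq _ (finite_besselZerosIoc hν le_rfl a) (finite_besselZerosIoc hν ha b)]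
  exact Set.disjoint_left.mpr fun t hta htb => hta.1.2.not_gt htb.1.1

lemma zcount_mono (hν : 0 ≤ ν) (hab : a ≤ b) : zcount ν a ≤ zcount ν b := by
  rw [zcount_eq_ncard, zcount_eq_ncard]
  exact ncard_le_ncard (fun t ht => ⟨⟨ht.1.1, ht.1.2.trans hab⟩, ht.2⟩)
    (finite_besselZerosIoc hν le_rfl b)

lemma zcount_eq_zero_of_le (h : b ≤ ν) : zcount ν b = 0 := by
  have hempty : besselZerosIoc ν 0 b = ∅ :=
    Set.eq_empty_of_forall_notMem fun t ht =>
      besselJ_ne_zero_of_le_order ht.1.1 (ht.1.2.trans h) ht.2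
  rw [zcount_eq_ncard, hempty, ncard_empty]

end ZeroCount

/-! ### Zeros are counted by the phase, up to an additive constant -/

section ZeroIndex

variable {ν x x' : ℝ}

lemma hasDerivAt_zeroIndex (hν : 0 ≤ ν) (hx : ν < x) :
    HasDerivAt (zeroIndex ν) (besselMomentum ν x / (π * x)) x :=
  (hasDerivAt_besselPhase hν hx).add_const _

lemma strictMonoOn_zeroIndex (hν : 0 ≤ ν) : StrictMonoOn (zeroIndex ν) (Ioi ν) := by
  refine strictMonoOn_of_hasDerivWithinAt_pos (convex_Ioi ν)
    (fun t ht => (hasDerivAt_zeroIndex hν ht).continuousAt.continuousWithinAt)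
    (fun t ht => (hasDerivAt_zeroIndex hν (interior_subset ht)).hasDerivWithinAt) fun t ht => ?_
  have ht : ν < t := interior_subset ht
  have hP := besselMomentum_pos hν ht
  have ht0 : 0 < t := hν.trans_lt ht
  positivity

lemma zeroIndex_mono (hν : 0 ≤ ν) (hx : ν < x) (h : x ≤ x') : zeroIndex ν x ≤ zeroIndex ν x' :=
  (strictMonoOn_zeroIndex hν).monotoneOn hx (hx.trans_le h) h

lemma exists_zeroIndex_eq (hν : 0 ≤ ν) (hx : ν < x) {T : ℝ} (hT : zeroIndex ν x ≤ T) :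
    ∃ y, x ≤ y ∧ zeroIndex ν y = T := by
  obtain ⟨y, hxy, hy⟩ := exists_besselPhase_eq hν hx (le_sub_right_of_add_le hT)
  exact ⟨y, hxy, by rw [zeroIndex, hy, sub_add_cancel]⟩

lemma neg_one_zpow_mul_wkbValue (ν x : ℝ) (k : ℤ) :
    (-1) ^ k * wkbValue ν x =
      wkbProjection (π / 4) ν x * sin (π * (zeroIndex ν x - k)) -
        wkbProjection (3 * π / 4) ν x * cos (π * (zeroIndex ν x - k)) := by
  rw [mul_sub π, mul_comm π (k : ℝ), sin_sub_int_mul_pi, cos_sub_int_mul_pi,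
    wkbValue_eq_wkbProjection]
  ring

lemma neg_one_zpow_mul_wkbSlope (ν x : ℝ) (k : ℤ) :
    (-1) ^ k * wkbSlope ν x =
      wkbProjection (π / 4) ν x * cos (π * (zeroIndex ν x - k)) +
        wkbProjection (3 * π / 4) ν x * sin (π * (zeroIndex ν x - k)) := by
  rw [mul_sub π, mul_comm π (k : ℝ), sin_sub_int_mul_pi, cos_sub_int_mul_pi,
    wkbSlope_eq_wkbProjection]
  ring

lemma lt_sin_pi_mul_of_mem_Ioo {ε δ : ℝ} (hε : 0 ≤ ε) (hδ : δ ∈ Ioo ε (1 - ε)) :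
    2 * ε < sin (π * δ) := by
  obtain ⟨hlo, hhi⟩ := hδ
  have hjordan {s : ℝ} (hs0 : 0 ≤ s) (hs1 : s ≤ 1 / 2) : 2 * s ≤ sin (π * s) := by
    have h := mul_le_sin (mul_nonneg pi_pos.le hs0) (by nlinarith [pi_pos] : π * s ≤ π / 2)
    rwa [← mul_assoc, div_mul_cancel₀ _ pi_pos.ne'] at h
  rcases le_total δ (1 / 2) with h | h
  · linarith [hjordan (by linarith) h]
  · have hsin := hjordan (s := 1 - δ) (by linarith) (by linarith)
    rw [show π * (1 - δ) = π - π * δ by ring, sin_pi_sub] at hsin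
    linarith

lemma neg_one_zpow_mul_wkbValue_pos (hν : 0 ≤ ν) (hx : ν < x) (hE : wkbError ν x ≤ 1 / 32) {k : ℤ}
    (hlo : k + 4 * wkbError ν x < zeroIndex ν x)
    (hhi : zeroIndex ν x < k + 1 - 4 * wkbError ν x) : 0 < (-1) ^ k * wkbValue ν x := by
  obtain ⟨ha, hb⟩ := wkbProjection_pos_and_abs_le hν hx (by linarith)
  have hE0 := wkbError_pos hν hx
  rw [neg_one_zpow_mul_wkbValue]
  set a := wkbProjection (π / 4) ν x
  set b := wkbProjection (3 * π / 4) ν x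
  set δ := zeroIndex ν x - k
  have hsin := lt_sin_pi_mul_of_mem_Ioo (ε := 4 * wkbError ν x) (δ := δ) (by positivity)
    ⟨by linarith, by linarith⟩
  have hcos : b * cos (π * δ) ≤ |b| :=
    (le_abs_self _).trans (by
      rw [abs_mul]
      exact mul_le_of_le_one_right (abs_nonneg b) (abs_cos_le_one _))
  nlinarith [mul_lt_mul_of_pos_left hsin ha, mul_pos ha hE0]

lemma neg_one_zpow_mul_wkbSlope_pos (hν : 0 ≤ ν) (hx : ν < x) (hE : wkbError ν x ≤ 1 / 32) {k : ℤ}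
    (hnear : |zeroIndex ν x - k| ≤ 1 / 4) : 0 < (-1) ^ k * wkbSlope ν x := by
  obtain ⟨ha, hb⟩ := wkbProjection_pos_and_abs_le hν hx (by linarith)
  rw [neg_one_zpow_mul_wkbSlope]
  set a := wkbProjection (π / 4) ν x
  set b := wkbProjection (3 * π / 4) ν x
  set δ := zeroIndex ν x - k
  have hcos : 1 / 2 ≤ cos (π * δ) := by
    rw [← cos_abs, abs_mul, abs_of_pos pi_pos, ← cos_pi_div_three]
    exact cos_le_cos_of_nonneg_of_le_pi (by positivity) (by linarith [pi_pos])
      (by nlinarith [pi_pos])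
  have hsin : -|b| ≤ b * sin (π * δ) :=
    (neg_le_neg (by
      rw [abs_mul]
      exact mul_le_of_le_one_right (abs_nonneg b) (abs_sin_le_one _))).trans (neg_abs_le _)
  nlinarith

lemma wkbValue_eq_zero_iff (hν : 0 ≤ ν) (hx : ν < x) : wkbValue ν x = 0 ↔ besselJ ν x = 0 :=
  mul_eq_zero_iff_left (sqrt_pos.mpr (besselMomentum_pos hν hx)).ne'

lemma besselJ_ne_zero_of_zeroIndex_between (hν : 0 ≤ ν) (hx : ν < x) (hE : wkbError ν x ≤ 1 / 32)
    {k : ℤ} (hlo : k + 4 * wkbError ν x < zeroIndex ν x)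
    (hhi : zeroIndex ν x < k + 1 - 4 * wkbError ν x) : besselJ ν x ≠ 0 := fun hJ => by
  have hpos := neg_one_zpow_mul_wkbValue_pos hν hx hE hlo hhi
  rw [(wkbValue_eq_zero_iff hν hx).mpr hJ, mul_zero] at hpos
  exact hpos.false

lemma abs_zeroIndex_sub_le_of_besselJ_eq_zero (hν : 0 ≤ ν) (hx : ν < x)
    (hE : wkbError ν x ≤ 1 / 32) {k : ℤ} (hnear : |zeroIndex ν x - k| ≤ 1 / 2)
    (hJ : besselJ ν x = 0) : |zeroIndex ν x - k| ≤ 1 / 4 := by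
  by_contra! hfar
  have hE0 := wkbError_pos hν hx
  rw [abs_le] at hnear
  rcases lt_abs.mp hfar with h | h
  · exact besselJ_ne_zero_of_zeroIndex_between hν hx hE (k := k) (by linarith) (by linarith) hJ
  · exact besselJ_ne_zero_of_zeroIndex_between hν hx hE (k := k - 1) (by push_cast; linarith)
      (by push_cast; linarith) hJ

lemma strictMonoOn_neg_one_zpow_mul_wkbValue (hν : 0 ≤ ν) (hx : ν < x)
    (hE : wkbError ν x ≤ 1 / 32) {k : ℤ} (hlo : k - 1 / 4 ≤ zeroIndex ν x)
    (hhi : zeroIndex ν x' ≤ k + 1 / 4) :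
    StrictMonoOn (fun t => (-1) ^ k * wkbValue ν t) (Icc x x') := by
  refine strictMonoOn_of_hasDerivWithinAt_pos (convex_Icc x x')
    (f' := fun t => (-1) ^ k * (besselMomentum ν t / t * wkbSlope ν t))
    (fun t ht => ((hasDerivAt_wkbValue hν
      (hx.trans_le ht.1)).const_mul _).continuousAt.continuousWithinAt)
    (fun t ht => ((hasDerivAt_wkbValue hν
      (hx.trans_le (interior_subset ht).1)).const_mul _).hasDerivWithinAt) fun t ht => ?_
  obtain ⟨hxt, htx'⟩ := interior_subset ht
  have hνt : ν < t := hx.trans_le hxt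
  have hslope := neg_one_zpow_mul_wkbSlope_pos hν hνt ((wkbError_anti hν hx hxt).trans hE)
    (k := k) (by
      rw [abs_le]
      constructor <;> linarith [zeroIndex_mono hν hx hxt, zeroIndex_mono hν hνt htx'])
  rw [mul_left_comm]
  exact mul_pos (div_pos (besselMomentum_pos hν hνt) (hν.trans_lt hνt)) hslope

end ZeroIndex

section CountingByIndex

variable {ν x x' : ℝ} {k : ℤ}

lemma zcount_eq_of_zeroIndex_between (hν : 0 ≤ ν) (hx : ν < x) (hxx' : x ≤ x')
    (hE : wkbError ν x ≤ 1 / 32) (hlo : k + 4 * wkbError ν x < zeroIndex ν x)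
    (hhi : zeroIndex ν x' < k + 1 - 4 * wkbError ν x) : zcount ν x' = zcount ν x := by
  have hempty : besselZerosIoc ν x x' = ∅ := by
    refine Set.eq_empty_of_forall_notMem fun t ht => ?_
    have hνt : ν < t := hx.trans ht.1.1
    have hEt := wkbError_anti hν hx ht.1.1.le
    exact besselJ_ne_zero_of_zeroIndex_between hν hνt (hEt.trans hE) (k := k)
      (by linarith [zeroIndex_mono hν hx ht.1.1.le])
      (by linarith [zeroIndex_mono hν hνt ht.1.2]) ht.2
  rw [zcount_eq_add hν (hν.trans hx.le) hxx', hempty, ncard_empty, add_zero]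

lemma zcount_le_add_one (hν : 0 ≤ ν) (hx : ν < x) (hxx' : x ≤ x') (hE : wkbError ν x ≤ 1 / 32)
    (hlo : k - 1 / 2 ≤ zeroIndex ν x) (hhi : zeroIndex ν x' ≤ k + 1 / 2) :
    zcount ν x' ≤ zcount ν x + 1 := by
  have hx0 : 0 ≤ x := hν.trans hx.le
  have hnear (t : ℝ) (ht : t ∈ besselZerosIoc ν x x') : |zeroIndex ν t - k| ≤ 1 / 4 := by
    have hνt : ν < t := hx.trans ht.1.1
    refine abs_zeroIndex_sub_le_of_besselJ_eq_zero hν hνt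
      ((wkbError_anti hν hx ht.1.1.le).trans hE) ?_ ht.2
    rw [abs_le]
    constructor <;> linarith [zeroIndex_mono hν hx ht.1.1.le, zeroIndex_mono hν hνt ht.1.2]
  have hunique (s t : ℝ) (hs : s ∈ besselZerosIoc ν x x') (ht : t ∈ besselZerosIoc ν x x') :
      ¬ s < t := fun hst => by
    have hmono := strictMonoOn_neg_one_zpow_mul_wkbValue hν (hx.trans hs.1.1)
      ((wkbError_anti hν hx hs.1.1.le).trans hE) (k := k) (x' := t)
      (by linarith [abs_le.mp (hnear s hs)]) (by linarith [abs_le.mp (hnear t ht)])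
    have hlt := hmono (left_mem_Icc.mpr hst.le) (right_mem_Icc.mpr hst.le) hst
    simp only [(wkbValue_eq_zero_iff hν (hx.trans hs.1.1)).mpr hs.2,
      (wkbValue_eq_zero_iff hν (hx.trans ht.1.1)).mpr ht.2, lt_self_iff_false] at hlt
  rw [zcount_eq_add hν hx0 hxx']
  gcongr
  rw [ncard_le_one (finite_besselZerosIoc hν hx0 x')]
  exact fun s hs t ht => eq_of_le_of_not_lt (not_lt.mp (hunique t s ht hs)) (hunique s t hs ht)

lemma add_one_le_zcount (hν : 0 ≤ ν) (hx : ν < x) (hxx' : x ≤ x') (hE : wkbError ν x ≤ 1 / 32)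
    (hlo : k - 1 + 4 * wkbError ν x < zeroIndex ν x) (hhi : zeroIndex ν x < k - 4 * wkbError ν x)
    (hx' : zeroIndex ν x' = k + 1 / 2) : zcount ν x + 1 ≤ zcount ν x' := by
  have hx0 : 0 ≤ x := hν.trans hx.le
  have hE' := wkbError_anti hν hx hxx'
  have hE0 := wkbError_pos hν hx
  have hneg : (-1) ^ k * wkbValue ν x < 0 := by
    have h := neg_one_zpow_mul_wkbValue_pos hν hx hE (k := k - 1) (by push_cast; linarith)
      (by push_cast; linarith)
    rw [zpow_sub_one₀ (by norm_num)] at h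
    linarith
  have hpos : 0 < (-1) ^ k * wkbValue ν x' :=
    neg_one_zpow_mul_wkbValue_pos hν (hx.trans_le hxx') (hE'.trans hE) (by linarith) (by linarith)
  have hcont : ContinuousOn (fun t => (-1) ^ k * wkbValue ν t) (Icc x x') := fun t ht =>
    ((hasDerivAt_wkbValue hν (hx.trans_le ht.1)).const_mul _).continuousAt.continuousWithinAt
  obtain ⟨t, ht, hzero⟩ := intermediate_value_Ioo hxx' hcont ⟨hneg, hpos⟩
  rw [zcount_eq_add hν hx0 hxx']
  gcongr
  refine (ncard_pos (finite_besselZerosIoc hν hx0 x')).mpr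
    ⟨t, ⟨ht.1, ht.2.le⟩, (wkbValue_eq_zero_iff hν (hx.trans ht.1)).mp ?_⟩
  exact (mul_eq_zero.mp hzero).resolve_left (zpow_ne_zero _ (by norm_num))

lemma zcount_eq_add_one (hν : 0 ≤ ν) (hx : ν < x) (hxx' : x ≤ x') (hE : wkbError ν x ≤ 1 / 32)
    (hlo : k - 1 / 2 ≤ zeroIndex ν x) (hhi : zeroIndex ν x < k - 4 * wkbError ν x)
    (hx' : zeroIndex ν x' = k + 1 / 2) : zcount ν x' = zcount ν x + 1 :=
  le_antisymm (zcount_le_add_one hν hx hxx' hE hlo hx'.le)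
    (add_one_le_zcount hν hx hxx' hE (by linarith) hhi hx')

lemma zcount_eq_add_of_zeroIndex_eq_add (hν : 0 ≤ ν) (n : ℕ) (hx : ν < x) (hx' : ν < x')
    (hE : wkbError ν x ≤ 1 / 32) (hk : zeroIndex ν x = k + 1 / 2)
    (hk' : zeroIndex ν x' = k + n + 1 / 2) : zcount ν x' = zcount ν x + n := by
  induction n generalizing k x with
  | zero =>
    have hxx' : x = x' := (strictMonoOn_zeroIndex hν).injOn hx hx' (by
      rw [hk, hk', Nat.cast_zero, add_zero])
    rw [hxx', add_zero]
  | succ n ih =>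
    have hE0 := wkbError_pos hν hx
    obtain ⟨y, hxy, hy⟩ :=
      exists_zeroIndex_eq hν hx (T := (k + 1 : ℤ) + 1 / 2) (by push_cast; linarith)
    have hstep := zcount_eq_add_one hν hx hxy hE (by push_cast; linarith)
      (by push_cast; linarith) hy
    have hrest := ih (hx.trans_le hxy) ((wkbError_anti hν hx hxy).trans hE) hy
      (by rw [hk']; push_cast; ring)
    omega

lemma zcount_sub_eq_zcount_sub {l : ℤ} (hν : 0 ≤ ν) (hx : ν < x) (hx' : ν < x')
    (hE : wkbError ν x ≤ 1 / 32) (hE' : wkbError ν x' ≤ 1 / 32)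
    (hk : zeroIndex ν x = k + 1 / 2) (hl : zeroIndex ν x' = l + 1 / 2) :
    (zcount ν x : ℤ) - k = zcount ν x' - l := by
  wlog hkl : k ≤ l generalizing k l x x'
  · exact (this hx' hx hE' hE hl hk (le_of_not_ge hkl)).symm
  obtain ⟨n, rfl⟩ := Int.le.dest hkl
  have h := zcount_eq_add_of_zeroIndex_eq_add hν n hx hx' hE hk (by rw [hl]; push_cast; ring)
  omega

end CountingByIndex

/-- The zeros of `J_ν` are numbered by `zeroIndex ν` up to the additive constant `M`: the count is
`k + M` between `k` and `k + 1`, away from the integers, and off by at most one in general. -/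
structure ZeroCountLaw (ν : ℝ) (M : ℤ) : Prop where
  zcount_eq : ∀ (x : ℝ) (k : ℤ), ν < x → wkbError ν x ≤ 1 / 32 →
    k + 4 * wkbError ν x < zeroIndex ν x → zeroIndex ν x < k + 1 - 4 * wkbError ν x →
    (zcount ν x : ℤ) = k + M
  zcount_mem : ∀ (x : ℝ) (k : ℤ), ν < x → wkbError ν x ≤ 1 / 32 →
    k - 1 / 2 ≤ zeroIndex ν x → zeroIndex ν x ≤ k + 1 / 2 →
    (zcount ν x : ℤ) ∈ Icc (k - 1 + M) (k + M)

section Law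

variable {ν : ℝ}

lemma zeroCountLaw_of_zeroIndex_eq {M : ℤ} (hν : 0 ≤ ν)
    (hM : ∀ (x : ℝ) (k : ℤ), ν < x → wkbError ν x ≤ 1 / 32 → zeroIndex ν x = k + 1 / 2 →
      (zcount ν x : ℤ) = k + M) : ZeroCountLaw ν M where
  zcount_eq x k hx hE hlo hhi := by
    have hE0 := wkbError_pos hν hx
    rcases le_total (zeroIndex ν x) (k + 1 / 2) with h | h
    · obtain ⟨y, hxy, hy⟩ := exists_zeroIndex_eq hν hx h
      rw [← zcount_eq_of_zeroIndex_between hν hx hxy hE hlo (by linarith)]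
      exact hM y k (hx.trans_le hxy) ((wkbError_anti hν hx hxy).trans hE) hy
    · obtain ⟨y, hxy, hy⟩ :=
        exists_zeroIndex_eq hν hx (T := (k + 1 : ℤ) + 1 / 2) (by push_cast; linarith)
      have hstep := zcount_eq_add_one hν hx hxy hE (by push_cast; linarith)
        (by push_cast; linarith) hy
      have hcount := hM y (k + 1) (hx.trans_le hxy) ((wkbError_anti hν hx hxy).trans hE) hy
      omega
  zcount_mem x k hx hE hlo hhi := by
    obtain ⟨y, hxy, hy⟩ := exists_zeroIndex_eq hν hx hhi
    have hcount := hM y k (hx.trans_le hxy) ((wkbError_anti hν hx hxy).trans hE) hy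
    have hle := zcount_le_add_one hν hx hxy hE hlo hy.le
    have hmono := zcount_mono hν hxy
    rw [mem_Icc]
    omega

lemma exists_zeroCountLaw (hν : 0 ≤ ν) : ∃ M, ZeroCountLaw ν M := by
  obtain ⟨x, hE, hx⟩ := (((tendsto_wkbError ν).eventually_le_const
    (by norm_num : (0 : ℝ) < 1 / 32)).and (eventually_gt_atTop ν)).exists
  obtain ⟨y, hxy, hy⟩ := exists_zeroIndex_eq hν hx (T := ⌈zeroIndex ν x⌉ + 1 / 2)
    (by linarith [Int.le_ceil (zeroIndex ν x)])
  refine ⟨zcount ν y - ⌈zeroIndex ν x⌉, zeroCountLaw_of_zeroIndex_eq hν fun t k ht hEt hk => ?_⟩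
  rw [← zcount_sub_eq_zcount_sub hν ht (hx.trans_le hxy) hEt
    ((wkbError_anti hν hx hxy).trans hE) hk hy]
  ring

lemma eventually_zcount_eq {M : ℤ} (hM : ZeroCountLaw ν M) {c : ℝ} {j : ℤ}
    (hlo : j ≤ c - ν / 2) (hhi : c - ν / 2 ≤ j + 1 / 2) :
    ∀ᶠ K : ℕ in atTop, (zcount ν (π * (K + c)) : ℤ) = K + j + M := by
  have htop : Tendsto (fun K : ℕ => π * ((K : ℝ) + c)) atTop atTop :=
    (tendsto_atTop_add_const_right _ c tendsto_natCast_atTop_atTop).const_mul_atTop pi_pos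
  have hphase := Metric.tendsto_nhds.mp (tendsto_pi_mul_besselPhase_sub ν) (1 / 16) (by norm_num)
  have herror := (tendsto_wkbError ν).eventually_le_const (by norm_num : (0 : ℝ) < 1 / 64)
  filter_upwards [htop.eventually hphase, htop.eventually herror,
    htop.eventually (eventually_gt_atTop ν)] with K hphaseK hE hx
  set x := π * ((K : ℝ) + c) with hxdef
  rw [dist_eq, sub_zero] at hphaseK
  have hindex : |zeroIndex ν x - (K + (c - ν / 2 + 1 / 4))| ≤ 1 / 16 := by
    have heq : zeroIndex ν x - (K + (c - ν / 2 + 1 / 4)) =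
        (π * besselPhase ν x - (x - ν * π / 2)) / π := by
      rw [zeroIndex, eq_div_iff pi_pos.ne', hxdef]
      ring
    rw [heq, abs_div, abs_of_pos pi_pos, div_le_iff₀ pi_pos]
    linarith [pi_gt_three]
  rw [abs_le] at hindex
  exact hM.zcount_eq x (K + j) hx (by linarith) (by push_cast; linarith) (by push_cast; linarith)

end Law

/-! ### Interlacing of the zeros of consecutive orders -/

section Interlacing

variable {ν : ℝ}

lemma hasDerivAt_rpow_neg_mul_besselJ (ν : ℝ) {t : ℝ} (ht : 0 < t) :
    HasDerivAt (fun t => t ^ (-ν) * besselJ ν t) (-(t ^ (-ν) * besselJ (ν + 1) t)) t := by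
  refine ((hasDerivAt_rpow_const (p := -ν) (Or.inl ht.ne')).mul
    (hasDerivAt_besselJ_sub_succ ν ht)).congr_deriv ?_
  rw [rpow_sub_one ht.ne']
  field_simp
  ring

lemma hasDerivAt_rpow_mul_besselJ (ν : ℝ) {t : ℝ} (ht : 0 < t) :
    HasDerivAt (fun t => t ^ ν * besselJ ν t) (t ^ ν * besselJ (ν - 1) t) t := by
  refine ((hasDerivAt_rpow_const (p := ν) (Or.inl ht.ne')).mul
    (hasDerivAt_besselJ_pred_sub ν ht)).congr_deriv ?_
  rw [rpow_sub_one ht.ne']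
  field_simp
  ring

lemma continuousOn_rpow_mul_besselJ (hν : 0 < ν) :
    ContinuousOn (fun t => t ^ ν * besselJ ν t) (Ici 0) := by
  intro t ht
  rcases (show (0 : ℝ) ≤ t from ht).eq_or_lt with rfl | ht
  · obtain ⟨C, hC⟩ := exists_abs_besselJ_le hν.le
    rw [ContinuousWithinAt, zero_rpow hν.ne', zero_mul]
    have hlim : Tendsto (fun t : ℝ => t ^ ν * C) (𝓝[Ici 0] 0) (𝓝 0) := by
      have h := (continuousAt_rpow_const 0 ν (Or.inr hν.le)).tendsto.mul_const C
      rw [zero_rpow hν.ne', zero_mul] at h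
      exact h.mono_left nhdsWithin_le_nhds
    refine squeeze_zero_norm' ?_ hlim
    filter_upwards [self_mem_nhdsWithin] with t ht
    rcases (show (0 : ℝ) ≤ t from ht).eq_or_lt with rfl | ht
    · simp [zero_rpow hν.ne']
    · rw [norm_mul, norm_of_nonneg (rpow_nonneg ht.le ν)]
      exact mul_le_mul_of_nonneg_left (hC t ht) (rpow_nonneg ht.le ν)
  · exact (hasDerivAt_rpow_mul_besselJ ν ht).continuousAt.continuousWithinAt

lemma zcount_eq_card (hν : 0 ≤ ν) (x : ℝ) :
    zcount ν x = (finite_besselZerosIoc hν le_rfl x).toFinset.card := by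
  rw [zcount_eq_ncard, ncard_eq_toFinset_card _ (finite_besselZerosIoc hν le_rfl x)]

lemma zcount_le_zcount_add_one_order_add_one (hν : 0 ≤ ν) (x : ℝ) :
    zcount ν x ≤ zcount (ν + 1) x + 1 := by
  rw [zcount_eq_card hν, zcount_eq_card (by linarith : 0 ≤ ν + 1)]
  refine Finset.card_le_of_interleaved fun a ha b hb hab _ => ?_
  simp only [Finite.mem_toFinset] at ha hb ⊢
  obtain ⟨c, hc, hzero⟩ := exists_hasDerivAt_eq_zero hab
    (fun t ht => (hasDerivAt_rpow_neg_mul_besselJ ν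
      (ha.1.1.trans_le ht.1)).continuousAt.continuousWithinAt)
    (by rw [ha.2, hb.2, mul_zero, mul_zero])
    (fun t ht => hasDerivAt_rpow_neg_mul_besselJ ν (ha.1.1.trans ht.1))
  have hc0 : 0 < c := ha.1.1.trans hc.1
  refine ⟨c, ⟨⟨hc0, hc.2.le.trans hb.1.2⟩, ?_⟩, hc.1, hc.2⟩
  exact (mul_eq_zero.mp (neg_eq_zero.mp hzero)).resolve_left (rpow_pos_of_pos hc0 _).ne'

-- Rolle's theorem is applied to `t ^ (ν + 1) * J_{ν + 1} t`, whose zeros include the origin.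
lemma zcount_order_add_one_le (hν : 0 ≤ ν) (x : ℝ) : zcount (ν + 1) x ≤ zcount ν x := by
  have hν1 : 0 < ν + 1 := by linarith
  rw [zcount_eq_card hν, zcount_eq_card hν1.le]
  set Z := (finite_besselZerosIoc hν1.le le_rfl x).toFinset with hZ
  have hZ_pos (t : ℝ) (ht : t ∈ Z) : t ∈ besselZerosIoc (ν + 1) 0 x := by simpa [hZ] using ht
  have hzero_notMem : (0 : ℝ) ∉ Z := fun h => (hZ_pos 0 h).1.1.false
  have hzero (t : ℝ) (ht : t ∈ insert 0 Z) : 0 ≤ t ∧ t ^ (ν + 1) * besselJ (ν + 1) t = 0 := by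
    rcases Finset.mem_insert.mp ht with rfl | ht
    · simp [zero_rpow hν1.ne']
    · exact ⟨(hZ_pos t ht).1.1.le, by rw [(hZ_pos t ht).2, mul_zero]⟩
  rw [← Nat.add_le_add_iff_right (n := 1), ← Finset.card_insert_of_notMem hzero_notMem]
  refine Finset.card_le_of_interleaved fun a ha b hb hab _ => ?_
  have ha0 := (hzero a ha).1
  have hbx := (hZ_pos b ((Finset.mem_insert.mp hb).resolve_left (ha0.trans_lt hab).ne')).1.2
  obtain ⟨c, hc, hderiv⟩ := exists_hasDerivAt_eq_zero hab
    ((continuousOn_rpow_mul_besselJ hν1).mono fun t ht => ha0.trans ht.1)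
    ((hzero a ha).2.trans (hzero b hb).2.symm)
    (fun t ht => hasDerivAt_rpow_mul_besselJ (ν + 1) (ha0.trans_lt ht.1))
  have hc0 : 0 < c := ha0.trans_lt hc.1
  rw [add_sub_cancel_right] at hderiv
  refine ⟨c, ?_, hc.1, hc.2⟩
  exact (Finite.mem_toFinset _).mpr ⟨⟨hc0, hc.2.le.trans hbx⟩,
    (mul_eq_zero.mp hderiv).resolve_left (rpow_pos_of_pos hc0 _).ne'⟩

lemma zeroCountLaw_constant_succ (hν : 0 ≤ ν) {M M' : ℤ} (hM : ZeroCountLaw ν M)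
    (hM' : ZeroCountLaw (ν + 1) M') : M' = M := by
  obtain ⟨K, ⟨hlow, hlow'⟩, hhigh, hhigh'⟩ :=
    (((eventually_zcount_eq hM (c := ν / 2) (j := 0) (by simp) (by norm_num)).and
      (eventually_zcount_eq hM' (c := ν / 2) (j := -1) (by push_cast; linarith)
        (by push_cast; linarith))).and
    ((eventually_zcount_eq hM (c := ν / 2 + 1 / 2) (j := 0) (by simp) (by norm_num)).and
      (eventually_zcount_eq hM' (c := ν / 2 + 1 / 2) (j := 0) (by push_cast; linarith)
        (by push_cast; linarith)))).exists
  have hup := zcount_le_zcount_add_one_order_add_one hν (π * (K + ν / 2))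
  have hdown := zcount_order_add_one_le hν (π * (K + (ν / 2 + 1 / 2)))
  omega

lemma ZeroCountLaw.succ {M : ℤ} (hM : ZeroCountLaw ν M) (hν : 0 ≤ ν) :
    ZeroCountLaw (ν + 1) M := by
  obtain ⟨M', hM'⟩ := exists_zeroCountLaw (by linarith : 0 ≤ ν + 1)
  rwa [← zeroCountLaw_constant_succ hν hM hM']

end Interlacing

/-! ### Sturm comparison with the sine -/

section Sturm

variable {ν a b t : ℝ}

/-- The Wronskian `u' sin - u cos` of `u t = √t * J_ν t`, which solves
`u'' = ((ν ^ 2 - 1 / 4) / t ^ 2 - 1) u`, with the sine. The factor `1 / √t` makes it vanish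
at `t = 0`, where it is continuous. -/
noncomputable def sturmWronskian (ν t : ℝ) : ℝ :=
  ((besselJ ν t / 2 + besselEulerDeriv ν t) * sin t - t * besselJ ν t * cos t) / √t

lemma hasDerivAt_sturmWronskian (ν : ℝ) (ht : 0 < t) :
    HasDerivAt (sturmWronskian ν) (√t / t ^ 2 * ((ν ^ 2 - 1 / 4) * (besselJ ν t * sin t))) t := by
  have hsqrt : 0 < √t := sqrt_pos.mpr ht
  have hJ := hasDerivAt_besselJ ν ht
  have hV := hasDerivAt_besselEulerDeriv ν ht
  refine (((((hJ.div_const 2).add hV).mul (hasDerivAt_sin t)).sub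
    (((hasDerivAt_id t).mul hJ).mul (hasDerivAt_cos t))).div
      ((hasDerivAt_id t).sqrt ht.ne') hsqrt.ne').congr_deriv ?_
  simp only [id, Pi.add_apply, Pi.mul_apply, Pi.sub_apply]
  have hsq : √t ^ 2 = t := sq_sqrt ht.le
  have hpow : √t ^ 4 = t ^ 2 := by rw [show 4 = 2 * 2 from rfl, pow_mul, hsq]
  field_simp
  rw [hsq]
  ring_nf
  rw [hpow]
  ring

lemma exists_abs_sturmWronskian_le (hν : 0 ≤ ν) :
    ∃ C, ∀ t ∈ Ioo 0 1, |sturmWronskian ν t| ≤ C * √t := by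
  obtain ⟨C, hC⟩ := exists_abs_besselJ_le hν
  obtain ⟨D, hD⟩ := exists_abs_besselJ_le (by linarith : 0 ≤ ν + 1)
  refine ⟨C / 2 + (ν * C + D) + C, fun t ⟨ht0, ht1⟩ => ?_⟩
  have hJ := hC t ht0
  have hV : |besselEulerDeriv ν t| ≤ ν * C + D := by
    refine (abs_sub _ _).trans ?_
    rw [abs_mul, abs_mul, abs_of_nonneg hν, abs_of_pos ht0]
    gcongr
    exact (mul_le_of_le_one_left (abs_nonneg _) ht1.le).trans (hD t ht0)
  have hfactor : |besselJ ν t / 2 + besselEulerDeriv ν t| ≤ C / 2 + (ν * C + D) := by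
    refine (abs_add_le _ _).trans ?_
    rw [abs_div, abs_two]
    gcongr
  have hsin : |sin t| ≤ t := abs_sin_le_abs.trans_eq (abs_of_pos ht0)
  rw [sturmWronskian, abs_div, abs_of_pos (sqrt_pos.mpr ht0), div_le_iff₀ (sqrt_pos.mpr ht0),
    mul_assoc _ √t, mul_self_sqrt ht0.le]
  calc |(besselJ ν t / 2 + besselEulerDeriv ν t) * sin t - t * besselJ ν t * cos t|
      ≤ |besselJ ν t / 2 + besselEulerDeriv ν t| * |sin t| + t * |besselJ ν t| * |cos t| := by
        refine (abs_sub _ _).trans_eq ?_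
        rw [abs_mul, abs_mul, abs_mul, abs_of_pos ht0]
    _ ≤ (C / 2 + (ν * C + D)) * t + t * C * 1 := by
        gcongr
        · exact (abs_nonneg _).trans hfactor
        · exact mul_nonneg ht0.le ((abs_nonneg _).trans hJ)
        · exact abs_cos_le_one t
    _ = (C / 2 + (ν * C + D) + C) * t := by ring

lemma continuousOn_sturmWronskian (hν : 0 ≤ ν) : ContinuousOn (sturmWronskian ν) (Ici 0) := by
  intro t ht
  rcases (mem_Ici.mp ht).eq_or_lt with rfl | ht
  · obtain ⟨C, hC⟩ := exists_abs_sturmWronskian_le hν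
    have hzero : sturmWronskian ν 0 = 0 := by simp [sturmWronskian]
    have hbound : Tendsto (fun t => C * √t) (𝓝[>] 0) (𝓝 0) := by
      simpa using ((continuous_sqrt.const_mul C).tendsto 0).mono_left nhdsWithin_le_nhds
    rw [← continuousWithinAt_Ioi_iff_Ici, ContinuousWithinAt, hzero]
    refine squeeze_zero_norm' ?_ hbound
    filter_upwards [Ioo_mem_nhdsGT one_pos] with t ht using hC t ht
  · exact (hasDerivAt_sturmWronskian ν ht).continuousAt.continuousWithinAt

lemma mul_sturmWronskian_le_mul {c : ℝ} (hν : 0 ≤ ν) (ha : 0 ≤ a) (hab : a ≤ b)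
    (hsign : ∀ t ∈ Ioo a b, 0 ≤ c * ((ν ^ 2 - 1 / 4) * (besselJ ν t * sin t))) :
    c * sturmWronskian ν a ≤ c * sturmWronskian ν b := by
  refine monotoneOn_of_hasDerivWithinAt_nonneg
    (f' := fun t => c * (√t / t ^ 2 * ((ν ^ 2 - 1 / 4) * (besselJ ν t * sin t)))) (convex_Icc a b)
    (((continuousOn_sturmWronskian hν).mono fun t ht => ha.trans ht.1).const_mul c)
    (fun t ht => ?_) (fun t ht => ?_) (left_mem_Icc.mpr hab) (right_mem_Icc.mpr hab) hab
  · rw [interior_Icc] at ht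
    exact ((hasDerivAt_sturmWronskian ν (ha.trans_lt ht.1)).const_mul c).hasDerivWithinAt
  · rw [interior_Icc] at ht
    rw [mul_left_comm]
    exact mul_nonneg (by positivity) (hsign t ht)

lemma sturmWronskian_nat_mul_pi (ν : ℝ) (m : ℕ) :
    sturmWronskian ν (m * π) = -((-1) ^ m * (√(m * π) * besselJ ν (m * π))) := by
  rw [sturmWronskian, sin_nat_mul_pi, cos_nat_mul_pi]
  linear_combination -((-1) ^ m * besselJ ν (m * π)) * div_sqrt (x := m * π)

lemma sturmWronskian_of_besselJ_eq_zero (hzero : besselJ ν t = 0) :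
    sturmWronskian ν t = besselEulerDeriv ν t / t * sin t * √t := by
  rw [sturmWronskian, hzero]
  linear_combination -(besselEulerDeriv ν t * sin t) * sqrt_div_self (x := t)

lemma neg_one_pow_mul_sin (j : ℕ) (t : ℝ) : (-1) ^ j * sin t = sin (t - j * π) := by
  rw [sin_sub_nat_mul_pi]

lemma neg_one_pow_mul_sin_nonneg (j : ℕ) (ht : t ∈ Icc (j * π) ((j + 1) * π)) :
    0 ≤ (-1) ^ j * sin t := by
  rw [neg_one_pow_mul_sin]
  exact sin_nonneg_of_nonneg_of_le_pi (by linarith [ht.1]) (by linarith [ht.2])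

lemma neg_one_pow_mul_sin_pos (j : ℕ) (ht : t ∈ Ioo (j * π) ((j + 1) * π)) :
    0 < (-1) ^ j * sin t := by
  rw [neg_one_pow_mul_sin]
  exact sin_pos_of_pos_of_lt_pi (by linarith [ht.1]) (by linarith [ht.2])

lemma exists_mul_pos_of_ne_zero {S : Set ℝ} (hS : IsPreconnected S) {f : ℝ → ℝ}
    (hf : ContinuousOn f S) (hne : ∀ t ∈ S, f t ≠ 0) : ∃ s : ℝ, ∀ t ∈ S, 0 < s * f t := by
  by_cases hpos : ∀ t ∈ S, 0 < f t
  · exact ⟨1, fun t ht => by simpa using hpos t ht⟩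
  · push Not at hpos
    obtain ⟨a, ha, hfa⟩ := hpos
    refine ⟨-1, fun t ht => ?_⟩
    by_contra hn
    obtain ⟨c, hc, hzero⟩ := hS.intermediate_value ha ht hf ⟨hfa, by linarith⟩
    exact hne c hc hzero

lemma deriv_nonneg_of_pos_right {f : ℝ → ℝ} {f' : ℝ} (hab : a < b) (hf : HasDerivAt f f' a)
    (hzero : f a = 0) (hpos : ∀ t ∈ Ioo a b, 0 < f t) : 0 ≤ f' := by
  refine ge_of_tendsto ((hasDerivAt_iff_tendsto_slope.mp hf).mono_left
    (nhdsWithin_mono a fun t (ht : t ∈ Ioi a) => (mem_Ioi.mp ht).ne')) ?_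
  filter_upwards [Ioo_mem_nhdsGT hab] with t ht
  rw [slope_def_field, hzero, sub_zero]
  exact div_nonneg (hpos t ht).le (by linarith [ht.1])

lemma deriv_nonpos_of_pos_left {f : ℝ → ℝ} {f' : ℝ} (hab : a < b) (hf : HasDerivAt f f' b)
    (hzero : f b = 0) (hpos : ∀ t ∈ Ioo a b, 0 < f t) : f' ≤ 0 := by
  refine le_of_tendsto ((hasDerivAt_iff_tendsto_slope.mp hf).mono_left
    (nhdsWithin_mono b fun t (ht : t ∈ Iio b) => (mem_Iio.mp ht).ne)) ?_
  filter_upwards [Ioo_mem_nhdsLT hab] with t ht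
  rw [slope_def_field, hzero, sub_zero]
  exact div_nonpos_of_nonneg_of_nonpos (hpos t ht).le (by linarith [ht.2])

lemma exists_besselJ_eq_zero_of_order_le_half (hν : 0 ≤ ν) (hν2 : ν ≤ 1 / 2) (j : ℕ) :
    ∃ t ∈ Ioc (j * π) ((j + 1) * π), besselJ ν t = 0 := by
  by_contra! hne
  have hpi := pi_pos
  have hj0 : 0 ≤ j * π := by positivity
  have hlt : j * π < (j + 1) * π := by linarith
  have hcast : ((j + 1 : ℕ) : ℝ) = j + 1 := by push_cast; rfl
  obtain ⟨s, hs⟩ := exists_mul_pos_of_ne_zero isPreconnected_Ioc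
    (continuousOn_besselJ ν fun t ht => hj0.trans_lt ht.1) hne
  have hσ : (-1 : ℝ) ^ j * (-1) ^ j = 1 := by rw [← mul_pow]; norm_num
  have hmono := mul_sturmWronskian_le_mul (c := -(s * (-1) ^ j)) hν hj0 hlt.le fun t ht => by
    have hsin := neg_one_pow_mul_sin_nonneg j (Ioo_subset_Icc_self ht)
    have := mul_nonneg (by nlinarith : 0 ≤ 1 / 4 - ν ^ 2)
      (mul_nonneg (hs t (Ioo_subset_Ioc_self ht)).le hsin)
    linarith
  have hright : 0 < √((j + 1) * π) * (s * besselJ ν ((j + 1) * π)) :=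
    mul_pos (sqrt_pos.mpr (hj0.trans_lt hlt)) (hs _ ⟨hlt, le_rfl⟩)
  have hleft : 0 ≤ √(j * π) * (s * besselJ ν (j * π)) := by
    rcases hj0.eq_or_lt with h | h
    · simp [← h]
    · refine mul_nonneg (sqrt_nonneg _) (ge_of_tendsto (((hasDerivAt_besselJ ν h).const_mul
        s).continuousAt.tendsto.mono_left (nhdsWithin_le_nhds (s := Ioi (j * π)))) ?_)
      filter_upwards [Ioc_mem_nhdsGT hlt] with t ht using (hs t ht).le
  have hWright := sturmWronskian_nat_mul_pi ν (j + 1)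
  rw [hcast, pow_succ] at hWright
  rw [sturmWronskian_nat_mul_pi, hWright] at hmono
  have hsum_nonpos : √(j * π) * (s * besselJ ν (j * π)) +
      √((j + 1) * π) * (s * besselJ ν ((j + 1) * π)) ≤ 0 := by
    linear_combination hmono - (√(j * π) * (s * besselJ ν (j * π)) +
      √((j + 1) * π) * (s * besselJ ν ((j + 1) * π))) * hσ
  linarith

lemma exists_besselJ_ne_zero_on_Ioo (hν : 0 ≤ ν) (ha : 0 ≤ a) (hab : a < b)
    (hb : besselJ ν b = 0) :
    ∃ c ∈ Ioc a b, besselJ ν c = 0 ∧ ∀ t ∈ Ioo a c, besselJ ν t ≠ 0 := by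
  obtain ⟨c, hc, hmin⟩ := exists_min_image _ id (finite_besselZerosIoc hν ha b)
    ⟨b, ⟨hab, le_rfl⟩, hb⟩
  exact ⟨c, hc.1, hc.2, fun t ht hzero =>
    ht.2.not_ge (hmin t ⟨⟨ht.1, ht.2.le.trans hc.1.2⟩, hzero⟩)⟩

lemma not_consecutive_zeros_of_half_le_order (hν : 1 / 2 ≤ ν) {j : ℕ} (haj : j * π ≤ a)
    (hab : a < b) (hbj : b < (j + 1) * π) (ha : a = 0 ∨ besselJ ν a = 0) (hb : besselJ ν b = 0)
    (hne : ∀ t ∈ Ioo a b, besselJ ν t ≠ 0) : False := by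
  have hν0 : 0 ≤ ν := by linarith
  have ha0 : 0 ≤ a := (by positivity : 0 ≤ j * π).trans haj
  have hb0 : 0 < b := ha0.trans_lt hab
  obtain ⟨s, hs⟩ := exists_mul_pos_of_ne_zero isPreconnected_Ioo
    (continuousOn_besselJ ν fun t ht => ha0.trans_lt ht.1) hne
  have hs0 : s ≠ 0 := by
    obtain ⟨t, ht⟩ := exists_between hab
    exact left_ne_zero_of_mul (hs t ht).ne'
  have hmono := mul_sturmWronskian_le_mul (c := s * (-1) ^ j) hν0 ha0 hab.le fun t ht => by
    have hsin := neg_one_pow_mul_sin_nonneg j ⟨haj.trans ht.1.le, ht.2.le.trans hbj.le⟩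
    have := mul_nonneg (by nlinarith : 0 ≤ ν ^ 2 - 1 / 4) (mul_nonneg (hs t ht).le hsin)
    linarith
  have hleft : 0 ≤ s * (-1) ^ j * sturmWronskian ν a := by
    rcases ha0.eq_or_lt with rfl | ha0
    · simp [sturmWronskian]
    · have hzero := ha.resolve_left ha0.ne'
      have hslope : 0 ≤ s * (besselEulerDeriv ν a / a) :=
        deriv_nonneg_of_pos_right hab ((hasDerivAt_besselJ ν ha0).const_mul s) (by simp [hzero]) hs
      have hsin := neg_one_pow_mul_sin_nonneg j ⟨haj, (hab.trans hbj).le⟩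
      calc 0 ≤ s * (besselEulerDeriv ν a / a) * ((-1) ^ j * sin a * √a) := by positivity
        _ = s * (-1) ^ j * sturmWronskian ν a := by
          rw [sturmWronskian_of_besselJ_eq_zero hzero]
          ring
  have hright : s * (-1) ^ j * sturmWronskian ν b < 0 := by
    have hslope : s * (besselEulerDeriv ν b / b) ≤ 0 :=
      deriv_nonpos_of_pos_left hab ((hasDerivAt_besselJ ν hb0).const_mul s) (by simp [hb]) hs
    have hne_zero : s * (besselEulerDeriv ν b / b) ≠ 0 := mul_ne_zero hs0
      (div_ne_zero (besselEulerDeriv_ne_zero_of_besselJ_eq_zero hν0 hb0 hb) hb0.ne')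
    have hsin := neg_one_pow_mul_sin_pos j ⟨haj.trans_lt hab, hbj⟩
    calc s * (-1) ^ j * sturmWronskian ν b
        = s * (besselEulerDeriv ν b / b) * ((-1) ^ j * sin b * √b) := by
          rw [sturmWronskian_of_besselJ_eq_zero hb]
          ring
      _ < 0 := mul_neg_of_neg_of_pos (hslope.lt_of_ne hne_zero)
          (mul_pos hsin (sqrt_pos.mpr hb0))
  linarith

lemma not_two_zeros_of_half_le_order (hν : 1 / 2 ≤ ν) {j : ℕ} (haj : j * π ≤ a) (hab : a < b)
    (hbj : b < (j + 1) * π) (ha : a = 0 ∨ besselJ ν a = 0) (hb : besselJ ν b = 0) : False := by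
  obtain ⟨c, ⟨hac, hcb⟩, hc, hne⟩ := exists_besselJ_ne_zero_on_Ioo (by linarith)
    ((by positivity : 0 ≤ j * π).trans haj) hab hb
  exact not_consecutive_zeros_of_half_le_order hν haj hac (hcb.trans_lt hbj) ha hc hne

lemma le_zcount_of_order_le_half (hν : 0 ≤ ν) (hν2 : ν ≤ 1 / 2) (K : ℕ) :
    K ≤ zcount ν (π * (K + 1 / 2)) := by
  choose z hz hzero using exists_besselJ_eq_zero_of_order_le_half hν hν2
  have hmono : StrictMono z := strictMono_nat_of_lt_succ fun j =>
    (hz j).2.trans_lt (by simpa using (hz (j + 1)).1)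
  rw [zcount_eq_card hν]
  calc K = (Finset.range K).card := (Finset.card_range K).symm
    _ ≤ _ := Finset.card_le_card_of_injOn z (fun j hj => ?_) hmono.injective.injOn
  have hjK : (j : ℝ) + 1 ≤ K := by exact_mod_cast Finset.mem_range.mp hj
  rw [Finite.coe_toFinset]
  refine ⟨⟨(by positivity : 0 ≤ j * π).trans_lt (hz j).1, (hz j).2.trans ?_⟩, hzero j⟩
  nlinarith [pi_pos]

lemma zcount_le_of_half_le_order (hν : 1 / 2 ≤ ν) (K : ℕ) : zcount ν (π * (K + 1 / 2)) ≤ K := by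
  have hpi := pi_pos
  have hsep {a b : ℝ} (ha : 0 ≤ a) (haz : a = 0 ∨ besselJ ν a = 0) (hb : besselJ ν b = 0)
      (hfloor : ⌊a / π⌋₊ = ⌊b / π⌋₊) : b ≤ a := by
    by_contra! hlt
    refine not_two_zeros_of_half_le_order hν (j := ⌊a / π⌋₊) ?_ hlt ?_ haz hb
    · exact (le_div_iff₀ hpi).mp (Nat.floor_le (by positivity))
    · exact hfloor ▸ (div_lt_iff₀ hpi).mp (Nat.lt_floor_add_one _)
  rw [zcount_eq_card (by linarith)]
  calc _ ≤ (Finset.Icc 1 K).card :=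
        Finset.card_le_card_of_injOn (fun t => ⌊t / π⌋₊) (fun t ht => ?_) fun a ha b hb hab => ?_
    _ = K := by simp
  · rw [Finite.coe_toFinset] at ht
    obtain ⟨⟨ht0, htK⟩, hzero⟩ := ht
    refine Finset.mem_coe.mpr (Finset.mem_Icc.mpr ⟨?_, ?_⟩)
    · by_contra! hfloor
      exact ht0.not_ge (hsep le_rfl (Or.inl rfl) hzero
        (by simpa using (Nat.lt_one_iff.mp hfloor).symm))
    · rw [← Nat.lt_succ_iff, Nat.floor_lt (by positivity), div_lt_iff₀ hpi]
      push_cast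
      nlinarith
  · rw [Finite.coe_toFinset] at ha hb
    exact (hsep hb.1.1.le (Or.inr hb.2) ha.2 hab.symm).antisymm
      (hsep ha.1.1.le (Or.inr ha.2) hb.2 hab)

end Sturm

lemma zeroCountLaw_half : ZeroCountLaw (1 / 2) 0 := by
  obtain ⟨M, hM⟩ := exists_zeroCountLaw (ν := 1 / 2) (by norm_num)
  obtain ⟨K, hK⟩ := (eventually_zcount_eq hM (c := 1 / 2) (j := 0) (by norm_num)
    (by norm_num)).exists
  have hlower := le_zcount_of_order_le_half (ν := 1 / 2) (by norm_num) le_rfl K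
  have hupper := zcount_le_of_half_le_order (ν := 1 / 2) le_rfl K
  rwa [show M = 0 by omega] at hM

lemma zeroCountLaw_zero : ZeroCountLaw 0 0 := by
  obtain ⟨M, hM⟩ := exists_zeroCountLaw (ν := 0) le_rfl
  obtain ⟨K, hK⟩ := (eventually_zcount_eq hM (c := 1 / 2) (j := 0) (by norm_num)
    (by norm_num)).exists
  obtain ⟨L, hL⟩ := (eventually_zcount_eq (hM.succ le_rfl) (c := 1 / 2) (j := 0) (by norm_num)
    (by norm_num)).exists
  have hlower := le_zcount_of_order_le_half (ν := 0) le_rfl (by norm_num) K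
  have hupper := zcount_le_of_half_le_order (ν := 0 + 1) (by norm_num) L
  rwa [show M = 0 by omega] at hM

lemma ZeroCountLaw.add_nat {ν : ℝ} {M : ℤ} (hM : ZeroCountLaw ν M) (hν : 0 ≤ ν) (n : ℕ) :
    ZeroCountLaw (ν + n) M := by
  induction n with
  | zero => simpa using hM
  | succ n ih => simpa [add_assoc] using ih.succ (by positivity)

/-- The order `n + d / 2 - 1` of the Bessel functions attached to the spherical harmonics of
degree `n` on the sphere in `ℝ ^ d`. -/
noncomputable def besselOrder (d n : ℕ) : ℝ := n + d / 2 - 1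

lemma zeroCountLaw_besselOrder {d : ℕ} (hd : 2 ≤ d) (n : ℕ) :
    ZeroCountLaw (besselOrder d n) 0 := by
  obtain ⟨m, rfl | rfl⟩ := d.even_or_odd'
  · obtain ⟨m, rfl⟩ := Nat.exists_eq_add_of_le' (show 1 ≤ m by omega)
    convert zeroCountLaw_zero.add_nat le_rfl (n + m) using 1
    rw [besselOrder]
    push_cast
    ring
  · obtain ⟨m, rfl⟩ := Nat.exists_eq_add_of_le' (show 1 ≤ m by omega)
    convert zeroCountLaw_half.add_nat (by norm_num) (n + m) using 1
    rw [besselOrder]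
    push_cast
    ring

/-! ### Size of the phase -/

lemma mul_cube_le_sin_sub_mul_cos {θ : ℝ} (h0 : 0 ≤ θ) (h1 : θ ≤ π / 2) :
    2 / (3 * π) * θ ^ 3 ≤ sin θ - θ * cos θ := by
  have h := le_of_hasDerivAt_nonpos (f := fun t => 2 / (3 * π) * t ^ 3 - (sin t - t * cos t))
    (f' := fun t => 2 / π * t ^ 2 - t * sin t) h0 (fun t _ => ?_) fun t ht => ?_
  · simp only [sin_zero, cos_zero] at h
    linarith
  · refine (((hasDerivAt_pow 3 t).const_mul _).sub
      ((hasDerivAt_sin t).sub ((hasDerivAt_id t).mul (hasDerivAt_cos t)))).congr_deriv ?_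
    simp only [id]
    push_cast
    field_simp
    ring
  · have hjordan := mul_le_mul_of_nonneg_left (mul_le_sin ht.1 (ht.2.trans h1)) ht.1
    linarith

section PhaseSize

variable {ν ν' x x' : ℝ}

lemma arccos_div_pos (hν : 0 ≤ ν) (hx : ν < x) : 0 < arccos (ν / x) :=
  arccos_pos.mpr ((div_lt_one (hν.trans_lt hx)).mpr hx)

lemma cos_arccos_div (hν : 0 ≤ ν) (hx : ν < x) : cos (arccos (ν / x)) = ν / x := by
  have hx0 := hν.trans_lt hx
  exact cos_arccos (by linarith [div_nonneg hν hx0.le]) ((div_lt_one hx0).mpr hx).le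

lemma mul_arccos_cube_le_besselPhase (hν : 0 ≤ ν) (hx : ν < x) :
    x * (2 / (3 * π) * arccos (ν / x) ^ 3) ≤ π * besselPhase ν x := by
  have hx0 := hν.trans_lt hx
  calc x * (2 / (3 * π) * arccos (ν / x) ^ 3)
      ≤ x * (sin (arccos (ν / x)) - arccos (ν / x) * cos (arccos (ν / x))) := by
        gcongr
        exact mul_cube_le_sin_sub_mul_cos (arccos_nonneg _)
          (arccos_le_pi_div_two.mpr (by positivity))
    _ = π * besselPhase ν x := by
        rw [sin_arccos, cos_arccos_div hν hx, besselPhase, gfun]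
        field_simp

lemma besselPhase_pos (hν : 0 ≤ ν) (hx : ν < x) : 0 < besselPhase ν x := by
  have hx0 := hν.trans_lt hx
  have hθ := arccos_div_pos hν hx
  refine pos_of_mul_pos_right (lt_of_lt_of_le ?_ (mul_arccos_cube_le_besselPhase hν hx)) pi_pos.le
  positivity

lemma zeroIndex_pos (hν : 0 ≤ ν) (hx : ν < x) : 0 < zeroIndex ν x :=
  add_pos (besselPhase_pos hν hx) (by norm_num)

lemma besselPhase_self (hν : 0 < ν) : besselPhase ν ν = 0 := by
  simp [besselPhase, gfun, hν.ne']

lemma sq_sub_div_le_besselPhase_mul_arccos (hν : 0 ≤ ν) (hx : ν < x) :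
    1 / 4 * ((x - ν) ^ 2 / x) ≤ besselPhase ν x * arccos (ν / x) := by
  have hx0 := hν.trans_lt hx
  have hphase := mul_arccos_cube_le_besselPhase hν hx
  have hcos := one_sub_sq_div_two_le_cos (x := arccos (ν / x))
  rw [cos_arccos_div hν hx] at hcos
  have hθ := arccos_div_pos hν hx
  set θ := arccos (ν / x)
  have hgap : 0 ≤ 1 - ν / x := sub_nonneg.mpr ((div_lt_one hx0).mpr hx).le
  have hfour : 4 * (1 - ν / x) ^ 2 ≤ θ ^ 4 := by nlinarith
  have hpi : π * (1 / 4) ≤ 8 / (3 * π) := by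
    rw [le_div_iff₀ (by positivity)]
    nlinarith [pi_lt_d2, pi_pos]
  refine le_of_mul_le_mul_left ?_ pi_pos
  calc π * (1 / 4 * ((x - ν) ^ 2 / x))
      = π * (1 / 4) * ((x - ν) ^ 2 / x) := by ring
    _ ≤ 8 / (3 * π) * ((x - ν) ^ 2 / x) := by gcongr
    _ = x * (2 / (3 * π) * (4 * (1 - ν / x) ^ 2)) := by field_simp; ring
    _ ≤ x * (2 / (3 * π) * θ ^ 4) := by gcongr
    _ = x * (2 / (3 * π) * θ ^ 3) * θ := by ring
    _ ≤ π * besselPhase ν x * θ := by gcongr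
    _ = π * (besselPhase ν x * θ) := by ring

lemma pi_mul_besselPhase_le_besselMomentum (hν : 0 ≤ ν) (hx : 0 < x) :
    π * besselPhase ν x ≤ besselMomentum ν x := by
  rw [besselPhase_eq ν hx, ← mul_assoc, mul_one_div_cancel pi_pos.ne', one_mul]
  exact sub_le_self _ (mul_nonneg hν (arccos_nonneg _))

lemma continuous_besselMomentum (ν : ℝ) : Continuous (besselMomentum ν) := by
  unfold besselMomentum
  fun_prop

lemma continuousOn_besselPhase (ν : ℝ) : ContinuousOn (besselPhase ν) (Ioi 0) := by
  have hdiv : ContinuousOn (fun x => ν / x) (Ioi 0) :=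
    continuousOn_const.div continuousOn_id fun x hx => (mem_Ioi.mp hx).ne'
  have hgfun : Continuous gfun := by
    unfold gfun
    have := continuous_arccos
    fun_prop
  exact continuousOn_id.mul (hgfun.comp_continuousOn hdiv)

lemma pi_mul_besselPhase_mul_le_besselMomentum_cube (hν : 0 < ν) (hx : ν < x) :
    π * besselPhase ν x * (3 * ν ^ 2) ≤ besselMomentum ν x ^ 3 := by
  have hanti : AntitoneOn (fun t => π * besselPhase ν t * (3 * ν ^ 2) - besselMomentum ν t ^ 3)
      (Icc ν x) := by
    refine antitoneOn_of_hasDerivWithinAt_nonpos (convex_Icc ν x)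
      (f' := fun t => -(3 * besselMomentum ν t / t * (t ^ 2 - ν ^ 2))) ?_ (fun t ht => ?_)
      fun t ht => ?_
    · exact (((continuousOn_besselPhase ν).mono fun t ht => hν.trans_le ht.1).const_mul π
        |>.mul_const _).sub ((continuous_besselMomentum ν).pow 3).continuousOn
    · rw [interior_Icc] at ht
      have ht0 := hν.trans ht.1
      have hP := besselMomentum_pos hν.le ht.1
      refine HasDerivAt.hasDerivWithinAt (((((hasDerivAt_besselPhase hν.le ht.1).const_mul
        π).mul_const _).sub ((hasDerivAt_besselMomentum hν.le ht.1).pow 3)).congr_deriv ?_)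
      push_cast
      field_simp
      ring
    · rw [interior_Icc] at ht
      have ht0 := hν.trans ht.1
      have hP := besselMomentum_pos hν.le ht.1
      exact neg_nonpos.mpr (mul_nonneg (by positivity) (by nlinarith [ht.1]))
  have h := hanti (left_mem_Icc.mpr hx.le) (right_mem_Icc.mpr hx.le) hx.le
  have hturning : besselMomentum ν ν = 0 := by simp [besselMomentum]
  simp only [besselPhase_self hν, hturning] at h
  linarith

lemma wkbError_lt_inv_besselPhase (hν : 0 < ν) (hx : ν < x) :
    wkbError ν x < (besselPhase ν x)⁻¹ := by
  have hP := besselMomentum_pos hν.le hx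
  have hphase := besselPhase_pos hν.le hx
  have hpi := pi_gt_three
  have hfirst : 9 / 4 / besselMomentum ν x ≤ 9 / 4 / (π * besselPhase ν x) := by
    gcongr
    exact pi_mul_besselPhase_le_besselMomentum hν.le (hν.trans hx)
  have hsecond : 5 / 12 * ν ^ 2 / besselMomentum ν x ^ 3 ≤ 5 / 36 / (π * besselPhase ν x) := by
    rw [div_le_div_iff₀ (by positivity) (by positivity)]
    linarith [pi_mul_besselPhase_mul_le_besselMomentum_cube hν hx]
  calc wkbError ν x ≤ 9 / 4 / (π * besselPhase ν x) + 5 / 36 / (π * besselPhase ν x) :=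
        add_le_add hfirst hsecond
    _ = 43 / 18 / π * (besselPhase ν x)⁻¹ := by field_simp; norm_num
    _ < 1 * (besselPhase ν x)⁻¹ := by
        gcongr
        rw [div_lt_one pi_pos]
        linarith
    _ = (besselPhase ν x)⁻¹ := one_mul _

lemma sq_mul_besselPhase_le_besselMomentum_cube (hν : 0 < ν) (hx : ν < x) :
    x ^ 2 * besselPhase ν x ≤ besselMomentum ν x ^ 3 := by
  have hP := besselMomentum_pos hν.le hx
  have hphase := besselPhase_pos hν.le hx
  have hpi := pi_gt_three
  rcases le_total (x / 2) ν with hnear | hfar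
  · calc x ^ 2 * besselPhase ν x ≤ (2 * ν) ^ 2 * besselPhase ν x := by
          gcongr
          · linarith
          · linarith
      _ ≤ π * besselPhase ν x * (3 * ν ^ 2) := by nlinarith [mul_pos (pow_pos hν 2) hphase]
      _ ≤ besselMomentum ν x ^ 3 := pi_mul_besselPhase_mul_le_besselMomentum_cube hν hx
  · have hsq := besselMomentum_sq hν.le hx.le
    have hle := pi_mul_besselPhase_le_besselMomentum hν.le (hν.trans hx)
    have hlinear : 3 * besselPhase ν x ≤ besselMomentum ν x := by nlinarith
    calc x ^ 2 * besselPhase ν x ≤ x ^ 2 * (besselMomentum ν x / 3) := by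
          gcongr
          linarith
      _ = x ^ 2 / 3 * besselMomentum ν x := by ring
      _ ≤ besselMomentum ν x ^ 2 * besselMomentum ν x := by
          gcongr
          nlinarith
      _ = besselMomentum ν x ^ 3 := by ring

lemma mul_le_zeroIndex_sub (hν : 0 ≤ ν) (hx : ν < x) (h : x ≤ x') :
    (x' - x) * (besselMomentum ν x / (π * x')) ≤ zeroIndex ν x' - zeroIndex ν x := by
  have hx0 := hν.trans_lt hx
  have hmono := le_of_hasDerivAt_nonpos
    (f := fun t => t * (besselMomentum ν x / (π * x')) - zeroIndex ν t) h
    (fun t ht => ((hasDerivAt_id t).mul_const _).sub (hasDerivAt_zeroIndex hν (hx.trans_le ht.1)))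
    fun t ht => ?_
  · linarith
  · have hslope : besselMomentum ν x / (π * x') ≤ besselMomentum ν t / (π * t) := by
      have ht0 := hx0.trans_le ht.1
      gcongr
      · exact (besselMomentum_pos hν (hx.trans_le ht.1)).le
      · exact besselMomentum_mono hx0.le ht.1
      · exact ht.2
    linarith

lemma mul_arccos_le_besselPhase_sub (hν : 0 ≤ ν) (h : ν ≤ ν') (hx : ν' < x) :
    (ν' - ν) * (arccos (ν' / x) / π) ≤ besselPhase ν x - besselPhase ν' x := by
  have hx0 := (hν.trans h).trans_lt hx
  have hmono := le_of_hasDerivAt_nonpos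
    (f := fun t => t * (arccos (ν' / x) / π) + besselPhase t x) h
    (fun t ht => ((hasDerivAt_id t).mul_const _).add
      (hasDerivAt_besselPhase_order (hν.trans ht.1) (ht.2.trans_lt hx)))
    fun t ht => ?_
  · linarith
  · have hslope : arccos (ν' / x) / π ≤ arccos (t / x) / π := by
      gcongr
      exact ht.2
    rw [neg_div]
    linarith

end PhaseSize

/-! ### Zeros and lattice points of a single order -/

/-- The number of lattice points `(ν, k)` counted by `latticeW` in the column of abscissa `ν`. -/
noncomputable def latticeColumn (ν μ : ℝ) : ℕ := if ν < μ then ⌊zeroIndex ν μ⌋₊ else 0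

section SingleOrder

variable {ν μ μ' η : ℝ}

lemma ZeroCountLaw.zcount_le (hlaw : ZeroCountLaw ν 0) (hν : 0 < ν) (hμ : ν < μ)
    (hphase : 32 ≤ besselPhase ν μ) : (zcount ν μ : ℝ) ≤ zeroIndex ν μ + 4 / besselPhase ν μ := by
  have hE := wkbError_lt_inv_besselPhase hν hμ
  have hinv0 : 0 < (besselPhase ν μ)⁻¹ := inv_pos.mpr (by linarith)
  have hinv : (besselPhase ν μ)⁻¹ ≤ 1 / 32 := by rw [one_div]; gcongr
  obtain ⟨hlo, hhi⟩ := abs_le.mp (abs_sub_round (zeroIndex ν μ))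
  set k := round (zeroIndex ν μ)
  have hround : (zcount ν μ : ℝ) ≤ k := by
    have h := (hlaw.zcount_mem μ k hμ (by linarith) (by linarith) (by linarith)).2
    rw [add_zero] at h
    exact_mod_cast h
  rw [div_eq_mul_inv]
  by_cases hbelow : zeroIndex ν μ < k - 4 * (besselPhase ν μ)⁻¹
  · have hcount := hlaw.zcount_eq μ (k - 1) hμ (by linarith) (by push_cast; linarith)
      (by push_cast; linarith)
    have hcast : (zcount ν μ : ℝ) = k - 1 := by exact_mod_cast hcount.trans (add_zero _)
    linarith
  · linarith

lemma ZeroCountLaw.lt_zcount_add_one (hlaw : ZeroCountLaw ν 0) (hν : 0 < ν) (hμ : ν < μ)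
    (hphase : 32 ≤ besselPhase ν μ) :
    zeroIndex ν μ - 4 / besselPhase ν μ < zcount ν μ + 1 := by
  have hE := wkbError_lt_inv_besselPhase hν hμ
  have hinv0 : 0 < (besselPhase ν μ)⁻¹ := inv_pos.mpr (by linarith)
  have hinv : (besselPhase ν μ)⁻¹ ≤ 1 / 32 := by rw [one_div]; gcongr
  obtain ⟨hlo, hhi⟩ := abs_le.mp (abs_sub_round (zeroIndex ν μ))
  set k := round (zeroIndex ν μ)
  have hround : (k : ℝ) - 1 ≤ zcount ν μ := by
    have h := (hlaw.zcount_mem μ k hμ (by linarith) (by linarith) (by linarith)).1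
    rw [add_zero] at h
    exact_mod_cast h
  rw [div_eq_mul_inv]
  by_cases habove : zeroIndex ν μ < k + 4 * (besselPhase ν μ)⁻¹
  · linarith
  · have hcount := hlaw.zcount_eq μ k hμ (by linarith) (by linarith) (by linarith)
    have hcast : (zcount ν μ : ℝ) = k := by exact_mod_cast hcount.trans (add_zero _)
    linarith

lemma latticeColumn_mono (hν : 0 ≤ ν) (h : μ ≤ μ') : latticeColumn ν μ ≤ latticeColumn ν μ' := by
  unfold latticeColumn
  split_ifs with hμ hμ'
  · exact Nat.floor_le_floor (zeroIndex_mono hν hμ h)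
  · exact absurd (hμ.trans_le h) hμ'
  · exact Nat.zero_le _
  · exact le_rfl

lemma latticeColumn_of_lt (hμ : ν < μ) : latticeColumn ν μ = ⌊zeroIndex ν μ⌋₊ := if_pos hμ

lemma latticeColumn_le_zeroIndex (hν : 0 ≤ ν) (hμ : ν < μ) :
    (latticeColumn ν μ : ℝ) ≤ zeroIndex ν μ := by
  rw [latticeColumn_of_lt hμ]
  exact Nat.floor_le (zeroIndex_pos hν hμ).le

lemma zeroIndex_lt_latticeColumn_add_one (hμ : ν < μ) :
    zeroIndex ν μ < latticeColumn ν μ + 1 := by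
  rw [latticeColumn_of_lt hμ]
  exact Nat.lt_floor_add_one _

lemma le_latticeColumn (hμ : ν < μ) {k : ℕ} (h : (k : ℝ) ≤ zeroIndex ν μ) :
    k ≤ latticeColumn ν μ := by
  rw [latticeColumn_of_lt hμ]
  exact Nat.le_floor h

lemma ZeroCountLaw.abs_zcount_sub_latticeColumn_le_of_shift (hlaw : ZeroCountLaw ν 0) (hν : 0 < ν)
    (hη : 0 ≤ η) (hμ : ν < μ - η) (hphase : 32 ≤ besselPhase ν μ)
    (hup : 4 / besselPhase ν μ ≤ zeroIndex ν (μ + η) - zeroIndex ν μ)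
    (hdown : 4 / besselPhase ν μ ≤ zeroIndex ν μ - zeroIndex ν (μ - η)) :
    |(zcount ν μ : ℝ) - latticeColumn ν μ| ≤
      latticeColumn ν (μ + η) - latticeColumn ν (μ - η) := by
  have hμ' : ν < μ := by linarith
  have hzcount_le : zcount ν μ ≤ latticeColumn ν (μ + η) :=
    le_latticeColumn (by linarith) (by linarith [hlaw.zcount_le hν hμ' hphase])
  have hle_zcount : latticeColumn ν (μ - η) ≤ zcount ν μ := by
    have h : (latticeColumn ν (μ - η) : ℝ) < zcount ν μ + 1 := by
      linarith [latticeColumn_le_zeroIndex hν.le hμ, hlaw.lt_zcount_add_one hν hμ' hphase]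
    exact Nat.lt_succ_iff.mp (by exact_mod_cast h)
  have hcolumn_le : latticeColumn ν μ ≤ latticeColumn ν (μ + η) :=
    latticeColumn_mono hν.le (by linarith)
  have hle_column : latticeColumn ν (μ - η) ≤ latticeColumn ν μ :=
    latticeColumn_mono hν.le (by linarith)
  rify at hzcount_le hle_zcount hcolumn_le hle_column
  rw [abs_le]
  constructor <;> linarith

lemma half_besselMomentum_le_of_shift (hν : 0 ≤ ν) (hμ : ν < μ)
    (hη : 4 * (μ * η) ≤ besselMomentum ν μ ^ 2) :
    ν < μ - η ∧ besselMomentum ν μ / 2 ≤ besselMomentum ν (μ - η) := by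
  have hμ0 := hν.trans_lt hμ
  have hsq := besselMomentum_sq hν hμ.le
  have hημ : η ≤ μ / 4 := by
    refine le_of_mul_le_mul_left ?_ hμ0
    nlinarith [sq_nonneg ν]
  have hshift : ν ^ 2 + besselMomentum ν μ ^ 2 / 4 ≤ (μ - η) ^ 2 := by nlinarith [sq_nonneg η]
  have hlt : ν < μ - η := lt_of_pow_lt_pow_left₀ 2 (by linarith) (by nlinarith)
  refine ⟨hlt, le_sqrt_of_sq_le ?_⟩
  linarith

lemma shift_le_zeroIndex_sub (hν : 0 ≤ ν) (hμ : ν < μ) (hη0 : 0 ≤ η)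
    (hη : 4 * (μ * η) ≤ besselMomentum ν μ ^ 2) :
    η * (besselMomentum ν μ / (2 * π * μ)) ≤ zeroIndex ν (μ + η) - zeroIndex ν μ ∧
      η * (besselMomentum ν μ / (2 * π * μ)) ≤ zeroIndex ν μ - zeroIndex ν (μ - η) := by
  obtain ⟨hlt, hP'⟩ := half_besselMomentum_le_of_shift hν hμ hη
  have hμ0 := hν.trans_lt hμ
  have hP := besselMomentum_pos hν hμ
  have hup := mul_le_zeroIndex_sub hν hμ (show μ ≤ μ + η by linarith)
  have hdown := mul_le_zeroIndex_sub hν hlt (show μ - η ≤ μ by linarith)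
  rw [add_sub_cancel_left] at hup
  rw [sub_sub_cancel] at hdown
  constructor
  · refine le_trans ?_ hup
    gcongr η * (_ / ?_)
    nlinarith [pi_pos]
  · refine le_trans ?_ hdown
    rw [mul_assoc, ← div_div]
    gcongr

lemma pow_six_le_besselMomentum {p : ℝ} (hν : 0 < ν) (hp : 0 < p) (hμ : ν < p ^ 7)
    (hphase : p ^ 4 ≤ besselPhase ν (p ^ 7)) : p ^ 6 ≤ besselMomentum ν (p ^ 7) := by
  refine le_of_pow_le_pow_left₀ three_ne_zero (besselMomentum_pos hν.le hμ).le ?_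
  calc (p ^ 6) ^ 3 = (p ^ 7) ^ 2 * p ^ 4 := by ring
    _ ≤ (p ^ 7) ^ 2 * besselPhase ν (p ^ 7) := by gcongr
    _ ≤ besselMomentum ν (p ^ 7) ^ 3 := sq_mul_besselPhase_le_besselMomentum_cube hν hμ

-- The exponents `3/7` and `4/7` balance here: `μ = p ^ 7`, and a phase of at least `p ^ 4` makes a
-- shift of `μ` by `26 / p ^ 3` move the phase by more than the error `4 / phase`.
lemma ZeroCountLaw.abs_zcount_sub_latticeColumn_le_of_large_phase {p : ℝ} (hlaw : ZeroCountLaw ν 0)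
    (hν : 0 < ν) (hp : 3 ≤ p) (hμ : ν < p ^ 7) (hphase : p ^ 4 ≤ besselPhase ν (p ^ 7)) :
    |(zcount ν (p ^ 7) : ℝ) - latticeColumn ν (p ^ 7)| ≤
      latticeColumn ν (p ^ 7 + 26 / p ^ 3) - latticeColumn ν (p ^ 7 - 26 / p ^ 3) := by
  have hp0 : 0 < p := by linarith
  have hp4 : 3 ^ 4 ≤ p ^ 4 := by gcongr
  have hmomentum := pow_six_le_besselMomentum hν hp0 hμ hphase
  have hshift : 4 * (p ^ 7 * (26 / p ^ 3)) ≤ besselMomentum ν (p ^ 7) ^ 2 :=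
    calc 4 * (p ^ 7 * (26 / p ^ 3)) = 104 * p ^ 4 := by field_simp; norm_num
      _ ≤ p ^ 4 * p ^ 4 * p ^ 4 := by
          gcongr
          nlinarith
      _ = (p ^ 6) ^ 2 := by ring
      _ ≤ besselMomentum ν (p ^ 7) ^ 2 := by gcongr
  have hgain : 4 / besselPhase ν (p ^ 7) ≤
      26 / p ^ 3 * (besselMomentum ν (p ^ 7) / (2 * π * p ^ 7)) :=
    calc 4 / besselPhase ν (p ^ 7) ≤ 4 / p ^ 4 := by gcongr
      _ ≤ 13 / π / p ^ 4 := by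
          gcongr
          rw [le_div_iff₀ pi_pos]
          linarith [pi_lt_d2]
      _ = 26 / p ^ 3 * (p ^ 6 / (2 * π * p ^ 7)) := by field_simp; norm_num
      _ ≤ _ := by gcongr
  obtain ⟨hup, hdown⟩ := shift_le_zeroIndex_sub hν.le hμ (by positivity) hshift
  exact hlaw.abs_zcount_sub_latticeColumn_le_of_shift hν (by positivity)
    (half_besselMomentum_le_of_shift hν.le hμ hshift).1 (by linarith) (hgain.trans hup)
    (hgain.trans hdown)

lemma ZeroCountLaw.abs_zcount_sub_latticeColumn_le (hlaw : ZeroCountLaw ν 0) (hν : 0 < ν)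
    (hμ : ν < μ) : |(zcount ν μ : ℝ) - latticeColumn ν μ| ≤ 40 := by
  have hcolumn := latticeColumn_le_zeroIndex hν.le hμ
  have hcolumn' := zeroIndex_lt_latticeColumn_add_one hμ
  rw [abs_le]
  rcases le_or_gt 32 (besselPhase ν μ) with hphase | hphase
  · have hsmall : 4 / besselPhase ν μ ≤ 1 := by rw [div_le_one] <;> linarith
    have hle := hlaw.zcount_le hν hμ hphase
    have hlt := hlaw.lt_zcount_add_one hν hμ hphase
    constructor <;> linarith
  · have hindex : zeroIndex ν μ ≤ 32 + 1 / 4 := by unfold zeroIndex; linarith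
    obtain ⟨y, hμy, hy⟩ := exists_zeroIndex_eq hν.le hμ hindex
    have hphase_y : besselPhase ν y = 32 := by unfold zeroIndex at hy; linarith
    have hzcount_y := hlaw.zcount_le hν (hμ.trans_le hμy) hphase_y.ge
    rw [hphase_y, hy] at hzcount_y
    have hmono : (zcount ν μ : ℝ) ≤ zcount ν y := by exact_mod_cast zcount_mono hν.le hμy
    constructor <;> linarith [(zcount ν μ).cast_nonneg (α := ℝ),
      (latticeColumn ν μ).cast_nonneg (α := ℝ)]

lemma ZeroCountLaw.zeroIndex_near_integer (hlaw : ZeroCountLaw ν 0) (hν : 0 < ν) (hμ : ν < μ)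
    (hphase : 32 ≤ besselPhase ν μ) (hne : zcount ν μ ≠ latticeColumn ν μ) :
    zeroIndex ν μ - 4 / besselPhase ν μ < (⌊zeroIndex ν μ + 4 / besselPhase ν μ⌋₊ : ℝ) := by
  by_contra! hfar
  have herror : 0 < 4 / besselPhase ν μ := div_pos four_pos (by linarith)
  set k := ⌊zeroIndex ν μ + 4 / besselPhase ν μ⌋₊
  have hzcount_le : zcount ν μ ≤ k := Nat.le_floor (hlaw.zcount_le hν hμ hphase)
  have hle_zcount : k ≤ zcount ν μ := by
    have h : (k : ℝ) < zcount ν μ + 1 := hfar.trans_lt (hlaw.lt_zcount_add_one hν hμ hphase)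
    exact Nat.lt_succ_iff.mp (by exact_mod_cast h)
  have hle_column : k ≤ latticeColumn ν μ := le_latticeColumn hμ (by linarith)
  have hcolumn_le : latticeColumn ν μ ≤ k :=
    Nat.le_floor (by linarith [latticeColumn_le_zeroIndex hν.le hμ])
  omega

end SingleOrder

/-! ### Counting the exceptional orders -/

section ExceptionalOrders

lemma card_le_add_one_of_forall_le_add {s : Finset ℕ} {D : ℕ}
    (h : ∀ a ∈ s, ∀ b ∈ s, a ≤ b → b ≤ a + D) : s.card ≤ D + 1 := by
  rcases s.eq_empty_or_nonempty with rfl | hs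
  · simp
  · have hsub : s ⊆ Finset.Icc (s.min' hs) (s.min' hs + D) := fun b hb =>
      Finset.mem_Icc.mpr ⟨s.min'_le b hb, h _ (s.min'_mem hs) b hb (s.min'_le b hb)⟩
    refine (Finset.card_le_card hsub).trans ?_
    rw [Nat.card_Icc]
    omega

lemma add_half_le_besselOrder {d : ℕ} (hd : 3 ≤ d) (n : ℕ) : (n : ℝ) + 1 / 2 ≤ besselOrder d n := by
  have hd' : (3 : ℝ) ≤ d := by exact_mod_cast hd
  unfold besselOrder
  linarith

lemma besselOrder_pos {d : ℕ} (hd : 3 ≤ d) (n : ℕ) : 0 < besselOrder d n :=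
  lt_of_lt_of_le (by positivity) (add_half_le_besselOrder hd n)

lemma besselOrder_sub (d a b : ℕ) : besselOrder d b - besselOrder d a = (b : ℝ) - a := by
  unfold besselOrder
  ring

lemma besselPhase_bounds_of_le_sub {ν p : ℝ} (hν : 0 ≤ ν) (hp : 210 ≤ p) (h : ν ≤ p ^ 7 - p ^ 4) :
    32 ≤ besselPhase ν (p ^ 7) ∧ 4 / besselPhase ν (p ^ 7) ≤ 16 * arccos (ν / p ^ 7) := by
  have hp0 : 0 < p := by linarith
  have hμ : ν < p ^ 7 := by linarith [pow_pos hp0 4]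
  have hphase := besselPhase_pos hν hμ
  have hp_le : p ≤ (p ^ 7 - ν) ^ 2 / p ^ 7 := by
    rw [le_div_iff₀ (by positivity)]
    calc p * p ^ 7 = (p ^ 4) ^ 2 := by ring
      _ ≤ (p ^ 7 - ν) ^ 2 := by
          gcongr
          linarith
  have hprod : 1 / 4 * p ≤ besselPhase ν (p ^ 7) * arccos (ν / p ^ 7) := by
    linarith [sq_sub_div_le_besselPhase_mul_arccos hν hμ]
  constructor
  · have harccos : arccos (ν / p ^ 7) ≤ π / 2 := arccos_le_pi_div_two.mpr (by positivity)
    have hle : 1 / 4 * p ≤ besselPhase ν (p ^ 7) * (π / 2) := hprod.trans (by gcongr)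
    nlinarith [pi_lt_d2]
  · rw [div_le_iff₀ hphase]
    linarith

variable {d : ℕ} {μ p Y : ℝ} {s : Finset ℕ}

lemma card_besselOrder_mem_Ioo_le (hs : ∀ n ∈ s, besselOrder d n ∈ Ioo (μ - Y) μ) :
    s.card ≤ ⌊Y⌋₊ + 1 := by
  refine card_le_add_one_of_forall_le_add fun a ha b hb hab => ?_
  have hgap : ((b - a : ℕ) : ℝ) ≤ Y := by
    rw [Nat.cast_sub hab]
    linarith [besselOrder_sub d a b, (hs a ha).1, (hs b hb).2]
  have hfloor := Nat.le_floor hgap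
  omega

-- Both phases lie within `4 / phase = O(θ)` of the same shifted integer, where
-- `θ = arccos (ν' / p ^ 7)`, while the phase decreases in the order at rate at least `θ / π`.
lemma ZeroCountLaw.sub_le_of_floor_eq {ν ν' : ℝ} (hlaw : ZeroCountLaw ν 0) (hν : 0 < ν)
    (hνν' : ν ≤ ν') (hp : 210 ≤ p) (hν' : ν' ≤ p ^ 7 - p ^ 4)
    (hne : zcount ν (p ^ 7) ≠ latticeColumn ν (p ^ 7))
    (hfloor : ⌊zeroIndex ν (p ^ 7) + 4 / besselPhase ν (p ^ 7)⌋₊ =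
      ⌊zeroIndex ν' (p ^ 7) + 4 / besselPhase ν' (p ^ 7)⌋₊) : ν' - ν ≤ 32 * π := by
  have hν'0 : 0 ≤ ν' := hν.le.trans hνν'
  have hμ : ν' < p ^ 7 := by linarith [pow_pos (show 0 < p by linarith) 4]
  obtain ⟨hphase, -⟩ := besselPhase_bounds_of_le_sub hν.le hp (hνν'.trans hν')
  obtain ⟨hphase', herror⟩ := besselPhase_bounds_of_le_sub hν'0 hp hν'
  have hθ := arccos_div_pos hν'0 hμ
  have hnear := hlaw.zeroIndex_near_integer hν (hνν'.trans_lt hμ) hphase hne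
  have hindex := zeroIndex_pos hν'0 hμ
  have hfloor_le : (⌊zeroIndex ν' (p ^ 7) + 4 / besselPhase ν' (p ^ 7)⌋₊ : ℝ) ≤
      zeroIndex ν' (p ^ 7) + 4 / besselPhase ν' (p ^ 7) := Nat.floor_le (by positivity)
  have hdecr := mul_arccos_le_besselPhase_sub hν.le hνν' hμ
  set θ := arccos (ν' / p ^ 7)
  have hphase_le : besselPhase ν' (p ^ 7) ≤ besselPhase ν (p ^ 7) := by
    have : 0 ≤ (ν' - ν) * (θ / π) := mul_nonneg (sub_nonneg.mpr hνν') (by positivity)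
    linarith
  have herror_le : 4 / besselPhase ν (p ^ 7) ≤ 4 / besselPhase ν' (p ^ 7) := by gcongr
  have hgap : (ν' - ν) / π * θ ≤ 32 * θ := by
    rw [hfloor] at hnear
    unfold zeroIndex at hnear hfloor_le
    rw [div_mul_eq_mul_div, mul_div_assoc]
    linarith
  exact (div_le_iff₀ pi_pos).mp (le_of_mul_le_mul_right hgap hθ)

lemma le_add_of_zcount_ne_latticeColumn (hd : 3 ≤ d) (hp : 210 ≤ p) {a b : ℕ} (hab : a ≤ b)
    (hb : besselOrder d b ≤ p ^ 7 - p ^ 4)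
    (hne : zcount (besselOrder d a) (p ^ 7) ≠ latticeColumn (besselOrder d a) (p ^ 7))
    (hfloor : ⌊zeroIndex (besselOrder d a) (p ^ 7) + 4 / besselPhase (besselOrder d a) (p ^ 7)⌋₊ =
      ⌊zeroIndex (besselOrder d b) (p ^ 7) + 4 / besselPhase (besselOrder d b) (p ^ 7)⌋₊) :
    b ≤ a + 101 := by
  have hsub := besselOrder_sub d a b
  have hab' : (a : ℝ) ≤ b := by exact_mod_cast hab
  have hgap := (zeroCountLaw_besselOrder (show 2 ≤ d by omega) a).sub_le_of_floor_eq
    (besselOrder_pos hd a) (by linarith) hp hb hne hfloor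
  have hlt : (b : ℝ) < a + 101 + 1 := by linarith [pi_lt_d2]
  exact Nat.lt_succ_iff.mp (by exact_mod_cast hlt)

lemma floor_zeroIndex_add_lt {ν : ℝ} (hν : 0 ≤ ν) (hp : 210 ≤ p) (h : ν ≤ p ^ 7 - p ^ 4)
    (hphase : besselPhase ν (p ^ 7) < p ^ 4) :
    ⌊zeroIndex ν (p ^ 7) + 4 / besselPhase ν (p ^ 7)⌋₊ < ⌊p ^ 4⌋₊ + 2 := by
  obtain ⟨hphase32, -⟩ := besselPhase_bounds_of_le_sub hν hp h
  have herror : 4 / besselPhase ν (p ^ 7) ≤ 1 / 8 := by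
    rw [div_le_iff₀ (by linarith)]
    linarith
  have hle : zeroIndex ν (p ^ 7) + 4 / besselPhase ν (p ^ 7) ≤ p ^ 4 + 1 := by
    unfold zeroIndex
    linarith
  have hfloor := Nat.floor_le_floor hle
  rw [Nat.floor_add_one (by positivity)] at hfloor
  omega

/-- The index `n` is exceptional at `μ = p ^ 7` when its order lies below `μ`, its phase is too
small for a shift of `μ` by `26 / p ^ 3` to absorb the error of the zero count, and the zero count
does differ from the number of lattice points in the column of `n`. -/
structure IsExceptional (d : ℕ) (p : ℝ) (n : ℕ) : Prop where
  order_lt : besselOrder d n < p ^ 7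
  phase_lt : besselPhase (besselOrder d n) (p ^ 7) < p ^ 4
  zcount_ne : zcount (besselOrder d n) (p ^ 7) ≠ latticeColumn (besselOrder d n) (p ^ 7)

lemma card_exceptional_le_of_le_sub (hd : 3 ≤ d) (hp : 210 ≤ p) (hs : ∀ n ∈ s, IsExceptional d p n)
    (hle : ∀ n ∈ s, besselOrder d n ≤ p ^ 7 - p ^ 4) :
    s.card ≤ 102 * (⌊p ^ 4⌋₊ + 2) := by
  let k (n : ℕ) : ℕ :=
    ⌊zeroIndex (besselOrder d n) (p ^ 7) + 4 / besselPhase (besselOrder d n) (p ^ 7)⌋₊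
  have hmaps : ∀ n ∈ s, k n ∈ Finset.range (⌊p ^ 4⌋₊ + 2) := fun n hn =>
    Finset.mem_range.mpr
      (floor_zeroIndex_add_lt (besselOrder_pos hd n).le hp (hle n hn) (hs n hn).phase_lt)
  have hfibre : ∀ j ∈ Finset.range (⌊p ^ 4⌋₊ + 2), (s.filter (k · = j)).card ≤ 102 := by
    refine fun j _ => card_le_add_one_of_forall_le_add fun a ha b hb hab => ?_
    rw [Finset.mem_filter] at ha hb
    exact le_add_of_zcount_ne_latticeColumn hd hp hab (hle b hb.1) (hs a ha.1).zcount_ne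
      (ha.2.trans hb.2.symm)
  simpa only [Finset.card_range] using
    Finset.card_le_mul_card_image_of_maps_to hmaps 102 hfibre

lemma card_exceptional_le (hd : 3 ≤ d) (hp : 210 ≤ p) (hs : ∀ n ∈ s, IsExceptional d p n) :
    (s.card : ℝ) ≤ 500 * p ^ 4 := by
  have hsmall : (s.filter (besselOrder d · ≤ p ^ 7 - p ^ 4)).card ≤ 102 * (⌊p ^ 4⌋₊ + 2) :=
    card_exceptional_le_of_le_sub hd hp (fun n hn => hs n (Finset.mem_filter.mp hn).1)
      fun n hn => (Finset.mem_filter.mp hn).2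
  have hlarge : (s.filter (¬ besselOrder d · ≤ p ^ 7 - p ^ 4)).card ≤ ⌊p ^ 4⌋₊ + 1 := by
    refine card_besselOrder_mem_Ioo_le (d := d) (μ := p ^ 7) fun n hn => ?_
    rw [Finset.mem_filter] at hn
    exact ⟨not_le.mp hn.2, (hs n hn.1).order_lt⟩
  have hsplit := s.card_filter_add_card_filter_not (besselOrder d · ≤ p ^ 7 - p ^ 4)
  have hcard : s.card ≤ 103 * ⌊p ^ 4⌋₊ + 205 := by omega
  have hone : 1 ≤ p ^ 4 := one_le_pow₀ (by linarith)
  calc (s.card : ℝ) ≤ 103 * ⌊p ^ 4⌋₊ + 205 := by exact_mod_cast hcard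
    _ ≤ 103 * p ^ 4 + 205 := by gcongr; exact Nat.floor_le (by positivity)
    _ ≤ 500 * p ^ 4 := by linarith

end ExceptionalOrders

/-! ### The counting functions as finite sums over columns -/

/-- The eigenvalue counting function `𝒩_B(μ)` of the ball in dimension `d`. -/
noncomputable def eigenvalueCount (d : ℕ) (μ : ℝ) : ℝ :=
  ∑' n : ℕ, (multB d n : ℝ) * zcount (besselOrder d n) μ

section ColumnSums

variable {d L : ℕ} {x x' : ℝ}

lemma latticeColumn_of_le {ν : ℝ} (h : x ≤ ν) : latticeColumn ν x = 0 := if_neg h.not_gt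

lemma le_latticeColumn_iff {ν : ℝ} (hν : 0 < ν) {k : ℕ} (hk : 1 ≤ k) :
    k ≤ latticeColumn ν x ↔ ν ≤ x ∧ (k : ℝ) - 1 / 4 ≤ besselPhase ν x := by
  have hk' : (1 : ℝ) ≤ k := by exact_mod_cast hk
  rcases lt_trichotomy ν x with hx | rfl | hx
  · have hindex : zeroIndex ν x = besselPhase ν x + 1 / 4 := rfl
    rw [latticeColumn_of_lt hx, Nat.le_floor_iff (zeroIndex_pos hν.le hx).le, hindex,
      sub_le_iff_le_add]
    exact (and_iff_right hx.le).symm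
  · rw [latticeColumn_of_le le_rfl, besselPhase_self hν]
    constructor
    · omega
    · rintro ⟨-, h⟩
      linarith
  · rw [latticeColumn_of_le hx.le]
    constructor
    · omega
    · rintro ⟨h, -⟩
      linarith

lemma latticeSet_eq_image (hd : 3 ≤ d) (l : ℕ) (hx : x ≤ L) :
    {p : ℤ × ℤ | (l : ℤ) ≤ p.1 ∧ 1 ≤ p.2 ∧ (p.1 : ℝ) + (d : ℝ) / 2 - 1 ≤ x ∧
      (p.2 : ℝ) - 1 / 4 ≤ x * gfun (((p.1 : ℝ) + (d : ℝ) / 2 - 1) / x)} =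
      (fun q : Σ _ : ℕ, ℕ => ((q.1 : ℤ), (q.2 : ℤ))) ''
        (Finset.Ico l L).sigma fun n => Finset.Icc 1 (latticeColumn (besselOrder d n) x) := by
  ext ⟨a, b⟩
  simp only [mem_ofPred_eq, Set.mem_image, SetLike.mem_coe, Finset.mem_sigma, Finset.mem_Ico,
    Finset.mem_Icc, Prod.mk.injEq]
  constructor
  · rintro ⟨hla, hb, horder, hphase⟩
    lift a to ℕ using by omega
    lift b to ℕ using by omega
    rw [Int.cast_natCast] at horder hphase
    rw [Int.cast_natCast] at hphase
    have hb' : 1 ≤ b := by exact_mod_cast hb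
    have haL : (a : ℝ) < L := by
      have horder' : besselOrder d a ≤ x := horder
      linarith [add_half_le_besselOrder hd a]
    exact ⟨⟨a, b⟩, ⟨⟨by exact_mod_cast hla, by exact_mod_cast haL⟩, hb',
      (le_latticeColumn_iff (besselOrder_pos hd a) hb').mpr ⟨horder, hphase⟩⟩, rfl, rfl⟩
  · rintro ⟨⟨n, k⟩, ⟨⟨hln, -⟩, hk, hcolumn⟩, rfl, rfl⟩
    rw [Int.cast_natCast, Int.cast_natCast]
    exact ⟨by exact_mod_cast hln, by exact_mod_cast hk,
      (le_latticeColumn_iff (besselOrder_pos hd n) hk).mp hcolumn⟩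

lemma latticeW_eq_sum (hd : 3 ≤ d) (l : ℕ) (hx : x ≤ L) :
    latticeW d l x = ∑ n ∈ Finset.Ico l L, latticeColumn (besselOrder d n) x := by
  have hinj : Function.Injective fun q : Σ _ : ℕ, ℕ => ((q.1 : ℤ), (q.2 : ℤ)) := by
    rintro ⟨a, b⟩ ⟨a', b'⟩ h
    simp only [Prod.mk.injEq, Nat.cast_inj] at h
    obtain ⟨rfl, rfl⟩ := h
    rfl
  unfold latticeW
  rw [latticeSet_eq_image hd l hx, Set.ncard_image_of_injective _ hinj, Set.ncard_coe_finset,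
    Finset.card_sigma]
  simp only [Nat.card_Icc, Nat.add_sub_cancel]

lemma sum_multBdiff (d n : ℕ) : ∑ l ∈ Finset.range (n + 1), multBdiff d l = (multB d n : ℤ) := by
  induction n with
  | zero => simp [multBdiff]
  | succ n ih => rw [Finset.sum_range_succ, ih]; simp [multBdiff]

lemma latticeWtot_eq_sum (hd : 3 ≤ d) (hx : x ≤ L) :
    latticeWtot d x =
      ∑ n ∈ Finset.range L, (multB d n : ℝ) * latticeColumn (besselOrder d n) x := by
  unfold latticeWtot
  rw [tsum_eq_sum (s := Finset.range L)]
  · simp_rw [latticeW_eq_sum hd _ hx, Nat.cast_sum, Finset.mul_sum]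
    rw [Finset.range_eq_Ico, Finset.sum_Ico_Ico_comm]
    refine Finset.sum_congr rfl fun n _ => ?_
    rw [← Finset.sum_mul, ← Finset.range_eq_Ico]
    congr 1
    exact_mod_cast sum_multBdiff d n
  · intro l hl
    rw [latticeW_eq_sum hd l hx, Finset.Ico_eq_empty (by simpa using hl), Finset.sum_empty,
      Nat.cast_zero, mul_zero]

lemma eigenvalueCount_eq_sum (hd : 3 ≤ d) (hx : x ≤ L) :
    eigenvalueCount d x = ∑ n ∈ Finset.range L, (multB d n : ℝ) * zcount (besselOrder d n) x := by
  refine tsum_eq_sum fun n hn => ?_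
  have hLn : (L : ℝ) ≤ n := by exact_mod_cast not_lt.mp (mt Finset.mem_range.mpr hn)
  rw [zcount_eq_zero_of_le (by linarith [add_half_le_besselOrder hd n]), Nat.cast_zero, mul_zero]

lemma latticeWtot_mono (hd : 3 ≤ d) (h : x ≤ x') : latticeWtot d x ≤ latticeWtot d x' := by
  obtain ⟨L, hL⟩ := exists_nat_ge x'
  rw [latticeWtot_eq_sum hd (h.trans hL), latticeWtot_eq_sum hd hL]
  gcongr with n
  exact latticeColumn_mono (besselOrder_pos hd n).le h

lemma multB_le (hd : 3 ≤ d) (n : ℕ) : multB d n ≤ 2 * (n + d) ^ (d - 2) := by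
  obtain ⟨e, rfl⟩ := Nat.exists_eq_add_of_le' hd
  have hpascal : multB (e + 3) n = (n + e + 1).choose (e + 1) + (n + e).choose (e + 1) := by
    unfold multB
    rw [show n + (e + 3) - 1 = n + e + 1 + 1 by omega, show e + 3 - 1 = e + 1 + 1 by omega,
      show n + (e + 3) - 3 = n + e by omega, Nat.choose_succ_succ' (n + e + 1) (e + 1),
      Nat.choose_succ_succ' (n + e) (e + 1)]
    omega
  have hchoose {m : ℕ} (hm : m ≤ n + (e + 3)) : m.choose (e + 1) ≤ (n + (e + 3)) ^ (e + 1) :=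
    (Nat.choose_le_pow _ _).trans (Nat.pow_le_pow_left hm _)
  rw [hpascal, two_mul]
  exact add_le_add (hchoose (by omega)) (hchoose (by omega))

end ColumnSums

/-! ### Summation over the orders -/

section Summation

variable {d : ℕ} {p μ : ℝ}

lemma abs_zcount_sub_latticeColumn_le_of_not_isExceptional (hd : 3 ≤ d) (hp : 3 ≤ p) {n : ℕ}
    (hn : ¬ IsExceptional d p n) :
    |(zcount (besselOrder d n) (p ^ 7) : ℝ) - latticeColumn (besselOrder d n) (p ^ 7)| ≤
      (latticeColumn (besselOrder d n) (p ^ 7 + 26 / p ^ 3) : ℝ) -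
        latticeColumn (besselOrder d n) (p ^ 7 - 26 / p ^ 3) := by
  have hν := besselOrder_pos hd n
  by_cases hlarge : besselOrder d n < p ^ 7 ∧ p ^ 4 ≤ besselPhase (besselOrder d n) (p ^ 7)
  · exact (zeroCountLaw_besselOrder (show 2 ≤ d by omega) n
      ).abs_zcount_sub_latticeColumn_le_of_large_phase hν hp hlarge.1 hlarge.2
  · have heq : zcount (besselOrder d n) (p ^ 7) = latticeColumn (besselOrder d n) (p ^ 7) := by
      rcases lt_or_ge (besselOrder d n) (p ^ 7) with hμ | hμ
      · by_contra hne
        exact hn ⟨hμ, not_le.mp fun h => hlarge ⟨hμ, h⟩, hne⟩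
      · rw [zcount_eq_zero_of_le hμ, latticeColumn_of_le hμ]
    have hη : 0 ≤ 26 / p ^ 3 := by positivity
    rw [heq, sub_self, abs_zero, sub_nonneg]
    exact_mod_cast latticeColumn_mono hν.le (by linarith)

lemma multB_le_of_besselOrder_lt (hd : 3 ≤ d) (hμ : 1 ≤ μ) {n : ℕ} (hn : besselOrder d n < μ) :
    (multB d n : ℝ) ≤ 2 * ((1 + d) * μ) ^ (d - 2) := by
  have hbase : (n : ℝ) + d ≤ (1 + d) * μ := by
    nlinarith [add_half_le_besselOrder hd n, d.cast_nonneg (α := ℝ)]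
  calc (multB d n : ℝ) ≤ 2 * ((n : ℝ) + d) ^ (d - 2) := by exact_mod_cast multB_le hd n
    _ ≤ 2 * ((1 + d) * μ) ^ (d - 2) := by gcongr

lemma IsExceptional.multB_mul_abs_sub_le {n : ℕ} (hn : IsExceptional d p n) (hd : 3 ≤ d)
    (hp : 1 ≤ p) :
    multB d n * |(zcount (besselOrder d n) (p ^ 7) : ℝ) - latticeColumn (besselOrder d n) (p ^ 7)| ≤
      80 * ((1 + d) * p ^ 7) ^ (d - 2) :=
  calc _ ≤ 2 * ((1 + d) * p ^ 7) ^ (d - 2) * 40 :=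
        mul_le_mul (multB_le_of_besselOrder_lt hd (one_le_pow₀ hp) hn.order_lt)
          ((zeroCountLaw_besselOrder (show 2 ≤ d by omega) n).abs_zcount_sub_latticeColumn_le
            (besselOrder_pos hd n) hn.order_lt) (abs_nonneg _) (by positivity)
    _ = 80 * ((1 + d) * p ^ 7) ^ (d - 2) := by ring

lemma multB_mul_abs_sub_le [DecidablePred (IsExceptional d p)] (hd : 3 ≤ d) (hp : 3 ≤ p) (n : ℕ) :
    multB d n * |(zcount (besselOrder d n) (p ^ 7) : ℝ) - latticeColumn (besselOrder d n) (p ^ 7)| ≤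
      (multB d n * latticeColumn (besselOrder d n) (p ^ 7 + 26 / p ^ 3) -
        multB d n * latticeColumn (besselOrder d n) (p ^ 7 - 26 / p ^ 3)) +
        if IsExceptional d p n then 80 * ((1 + d) * p ^ 7) ^ (d - 2) else 0 := by
  rw [← mul_sub]
  split_ifs with hn
  · have hη : 0 ≤ 26 / p ^ 3 := by positivity
    have hmono : (latticeColumn (besselOrder d n) (p ^ 7 - 26 / p ^ 3) : ℝ) ≤
        latticeColumn (besselOrder d n) (p ^ 7 + 26 / p ^ 3) := by
      exact_mod_cast latticeColumn_mono (besselOrder_pos hd n).le (by linarith)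
    exact le_add_of_nonneg_of_le (mul_nonneg (Nat.cast_nonneg _) (sub_nonneg.mpr hmono))
      (hn.multB_mul_abs_sub_le hd (by linarith))
  · rw [add_zero]
    gcongr
    exact abs_zcount_sub_latticeColumn_le_of_not_isExceptional hd hp hn

lemma abs_eigenvalueCount_sub_latticeWtot_le_sum (hd : 3 ≤ d) {L : ℕ} (hμ : μ ≤ L) :
    |eigenvalueCount d μ - latticeWtot d μ| ≤
      ∑ n ∈ Finset.range L,
        multB d n * |(zcount (besselOrder d n) μ : ℝ) - latticeColumn (besselOrder d n) μ| := by
  rw [eigenvalueCount_eq_sum hd hμ, latticeWtot_eq_sum hd hμ, ← Finset.sum_sub_distrib]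
  refine (Finset.abs_sum_le_sum_abs _ _).trans_eq (Finset.sum_congr rfl fun n _ => ?_)
  rw [← mul_sub, abs_mul, Nat.abs_cast]

lemma abs_eigenvalueCount_sub_latticeWtot_le_of_large (hd : 3 ≤ d) (hp : 210 ≤ p) :
    |eigenvalueCount d (p ^ 7) - latticeWtot d (p ^ 7)| ≤
      latticeWtot d (p ^ 7 + 26 / p ^ 3) - latticeWtot d (p ^ 7 - 26 / p ^ 3) +
        40000 * (1 + (d : ℝ)) ^ (d - 2) * ((p ^ 7) ^ (d - 2) * p ^ 4) := by
  classical
  have hη : 0 ≤ 26 / p ^ 3 := by positivity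
  obtain ⟨L, hL⟩ := exists_nat_ge (p ^ 7 + 26 / p ^ 3)
  have hcard : ((Finset.range L).filter (IsExceptional d p)).card ≤ 500 * p ^ 4 :=
    card_exceptional_le hd hp fun n hn => (Finset.mem_filter.mp hn).2
  rw [latticeWtot_eq_sum hd hL, latticeWtot_eq_sum hd (x := p ^ 7 - 26 / p ^ 3) (L := L)
    (by linarith), ← Finset.sum_sub_distrib]
  calc _ ≤ _ := abs_eigenvalueCount_sub_latticeWtot_le_sum hd (L := L) (by linarith)
    _ ≤ _ := Finset.sum_le_sum fun n _ => multB_mul_abs_sub_le hd (show 3 ≤ p by linarith) n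
    _ ≤ _ := ?_
  rw [Finset.sum_add_distrib, ← Finset.sum_filter, Finset.sum_const, nsmul_eq_mul]
  gcongr _ + ?_
  calc _ ≤ 500 * p ^ 4 * (80 * ((1 + d) * p ^ 7) ^ (d - 2)) := by gcongr
    _ = _ := by rw [mul_pow]; ring

lemma exists_abs_eigenvalueCount_sub_latticeWtot_le_of_le (hd : 3 ≤ d) (R : ℝ) :
    ∃ B, 0 ≤ B ∧ ∀ μ ≤ R, |eigenvalueCount d μ - latticeWtot d μ| ≤ B := by
  obtain ⟨L, hL⟩ := exists_nat_ge R
  refine ⟨∑ n ∈ Finset.range L, (multB d n : ℝ) * 40, by positivity, fun μ hμ => ?_⟩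
  refine (abs_eigenvalueCount_sub_latticeWtot_le_sum hd (hμ.trans hL)).trans ?_
  gcongr with n
  rcases lt_or_ge (besselOrder d n) μ with h | h
  · exact (zeroCountLaw_besselOrder (show 2 ≤ d by omega) n).abs_zcount_sub_latticeColumn_le
      (besselOrder_pos hd n) h
  · rw [zcount_eq_zero_of_le h, latticeColumn_of_le h]
    norm_num

lemma exists_abs_eigenvalueCount_sub_latticeWtot_le_of_one_le (hd : 3 ≤ d) :
    ∃ C', 0 < C' ∧ ∀ p : ℝ, 1 ≤ p → |eigenvalueCount d (p ^ 7) - latticeWtot d (p ^ 7)| ≤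
      latticeWtot d (p ^ 7 + 26 / p ^ 3) - latticeWtot d (p ^ 7 - 26 / p ^ 3) +
        C' * ((p ^ 7) ^ (d - 2) * p ^ 4) := by
  obtain ⟨B, hB0, hB⟩ := exists_abs_eigenvalueCount_sub_latticeWtot_le_of_le hd (210 ^ 7)
  refine ⟨B + 40000 * (1 + (d : ℝ)) ^ (d - 2), by positivity, fun p hp => ?_⟩
  rw [add_mul]
  rcases le_or_gt 210 p with hlarge | hsmall
  · have hB' : 0 ≤ B * ((p ^ 7) ^ (d - 2) * p ^ 4) := by positivity
    linarith [abs_eigenvalueCount_sub_latticeWtot_le_of_large hd hlarge]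
  · have hone : 1 ≤ (p ^ 7) ^ (d - 2) * p ^ 4 :=
      one_le_mul_of_one_le_of_one_le (one_le_pow₀ (one_le_pow₀ hp)) (one_le_pow₀ hp)
    have hB' : B ≤ B * ((p ^ 7) ^ (d - 2) * p ^ 4) := le_mul_of_one_le_right hB0 hone
    have hK : 0 ≤ 40000 * (1 + (d : ℝ)) ^ (d - 2) * ((p ^ 7) ^ (d - 2) * p ^ 4) := by positivity
    have hmono : latticeWtot d (p ^ 7 - 26 / p ^ 3) ≤ latticeWtot d (p ^ 7 + 26 / p ^ 3) :=
      latticeWtot_mono hd (by linarith [show 0 < 26 / p ^ 3 by positivity])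
    linarith [hB (p ^ 7) (by gcongr)]

end Summation

lemma pow_seven_rpow_div_seven {p : ℝ} (hp : 0 ≤ p) (a : ℝ) : (p ^ 7) ^ (a / 7) = p ^ a := by
  rw [← rpow_natCast, ← rpow_mul hp]
  congr 1
  norm_num
  ring

/-- comparison of the eigenvalue counting function `𝒩_B(μ)` with the weighted
lattice count `𝒲(μ)`. -/
theorem eigenvalue_count_vs_weighted_lattice_count (d : ℕ) (hd : 3 ≤ d) :
    ∃ C C' : ℝ, 0 < C ∧ 0 < C' ∧ ∀ μ : ℝ, 2 ≤ μ →
      |(∑' n : ℕ, (multB d n : ℝ) * (zcount ((n : ℝ) + (d : ℝ) / 2 - 1) μ : ℝ)) -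
          latticeWtot d μ| ≤
        latticeWtot d (μ + C * μ ^ (-(3 : ℝ) / 7)) -
          latticeWtot d (μ - C * μ ^ (-(3 : ℝ) / 7)) + C' * μ ^ ((d : ℝ) - 2 + 4 / 7) := by
  obtain ⟨C', hC', hbound⟩ := exists_abs_eigenvalueCount_sub_latticeWtot_le_of_one_le hd
  refine ⟨26, C', by norm_num, hC', fun μ hμ => ?_⟩
  obtain ⟨p, hp, rfl⟩ : ∃ p : ℝ, 1 ≤ p ∧ p ^ 7 = μ :=
    ⟨μ ^ (7⁻¹ : ℝ), one_le_rpow (by linarith) (by norm_num),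
      rpow_inv_natCast_pow (by linarith) (by norm_num)⟩
  have hp0 : 0 < p := by linarith
  have hshift : 26 * (p ^ 7) ^ (-(3 : ℝ) / 7) = 26 / p ^ 3 := by
    rw [pow_seven_rpow_div_seven hp0.le, rpow_neg hp0.le, rpow_ofNat, div_eq_mul_inv]
  have hremainder : (p ^ 7) ^ ((d : ℝ) - 2 + 4 / 7) = (p ^ 7) ^ (d - 2) * p ^ 4 := by
    rw [rpow_add (by positivity), pow_seven_rpow_div_seven hp0.le, rpow_ofNat,
      ← rpow_natCast (p ^ 7) (d - 2), Nat.cast_sub (by omega), Nat.cast_ofNat]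
  rw [hshift, hremainder]
  exact hbound p hp
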